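/- arXiv:2012.03102 — 2 statements merged into one kernel-verified Lean document; each statement's English description precedes it below -/
import Mathlib

section
/- Let g ∈ ℤ[x] be irreducible with degree d ≥ 2 and leading coefficient c, let α ∈ ℂ be a root of g, and let K = ℚ(α). Set 𝐃_g = |c|^{(d−1)(d−2)}·|D_g|. Then the Dedekind zeta residue κ_K satisfies 0.36232/√𝐃_g ≤ κ_K ≤ ( e·log 𝐃_g / (2(d−1)) )^{d−1}. -/
open Polynomial

/-- Sylvester matrix of `f` and `g` (columns of `f`-coefficients first). -/
noncomputable def sylvesterMat (f g : Polynomial ℤ) :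
    Matrix (Fin (g.natDegree + f.natDegree)) (Fin (g.natDegree + f.natDegree)) ℤ :=
  fun i j =>
    if (j : ℕ) < g.natDegree then
      (if (j : ℕ) ≤ (i : ℕ) ∧ (i : ℕ) ≤ (j : ℕ) + f.natDegree
        then f.coeff (f.natDegree + j - i) else 0)
    else
      (if (j : ℕ) - g.natDegree ≤ (i : ℕ) ∧ (i : ℕ) ≤ (j : ℕ)
        then g.coeff ((j : ℕ) - (i : ℕ)) else 0)

/-- The resultant `R(f,g)` of two integer polynomials: the determinant of the
Sylvester matrix. -/
noncomputable def resultantZ (f g : Polynomial ℤ) : ℤ := (sylvesterMat f g).det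

/-- The discriminant `D_f = ((-1)^(n(n-1)/2)/a_n) · R(f, f')` of an integer polynomial
(the division is exact). -/
noncomputable def polyDisc (f : Polynomial ℤ) : ℤ :=
  ((-1 : ℤ) ^ (f.natDegree * (f.natDegree - 1) / 2) * resultantZ f (derivative f))
    / f.leadingCoeff

/-- The residue at `s = 1` of the Dedekind zeta function of a number field `K`, given by the
analytic class number formula: `κ_K = 2^{r₁} (2π)^{r₂} h_K R_K / (w_K √|Δ_K|)`. -/
noncomputable def kappa (K : Type*) [Field K] [NumberField K] : ℝ :=
  2 ^ NumberField.InfinitePlace.nrRealPlaces K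
    * (2 * Real.pi) ^ NumberField.InfinitePlace.nrComplexPlaces K
    * NumberField.classNumber K * NumberField.Units.regulator K
    / (NumberField.Units.torsionOrder K * Real.sqrt |(NumberField.discr K : ℝ)|)


namespace KB

theorem resultantZ_eq (f g : Polynomial ℤ) :
    resultantZ f g = resultant f g f.natDegree g.natDegree := by
  unfold resultantZ resultant
  have key : sylvesterMat f g = (sylvester f g f.natDegree g.natDegree).submatrix
      ((finCongr (add_comm g.natDegree f.natDegree)).trans Fin.revPerm)
      ((finCongr (add_comm g.natDegree f.natDegree)).trans Fin.revPerm) := by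
    ext i j
    simp only [Matrix.submatrix_apply, sylvester, Matrix.of_apply, sylvesterMat]
    obtain ⟨i, hi⟩ := i
    obtain ⟨j, hj⟩ := j
    simp only [Equiv.trans_apply, finCongr_apply, Fin.revPerm_apply]
    by_cases h : j < g.natDegree
    · have : Fin.rev (Fin.cast (add_comm g.natDegree f.natDegree) ⟨j, hj⟩)
          = Fin.natAdd f.natDegree (⟨g.natDegree - 1 - j, by omega⟩ : Fin g.natDegree) := by
        ext; simp [Fin.val_rev]; omega
      rw [this, Fin.addCases_right]
      simp only [h, if_true, Fin.val_rev, Fin.val_cast, Set.mem_Icc]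
      by_cases h2 : j ≤ i ∧ i ≤ j + f.natDegree
      · rw [if_pos h2, if_pos (by omega)]
        congr 1; omega
      · rw [if_neg h2, if_neg (by omega)]
    · have : Fin.rev (Fin.cast (add_comm g.natDegree f.natDegree) ⟨j, hj⟩)
          = Fin.castAdd g.natDegree (⟨g.natDegree + f.natDegree - 1 - j, by omega⟩ : Fin f.natDegree) := by
        ext; simp [Fin.val_rev]; omega
      rw [this, Fin.addCases_left]
      simp only [h, if_false, Fin.val_rev, Fin.val_cast, Set.mem_Icc]
      by_cases h2 : j - g.natDegree ≤ i ∧ i ≤ j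
      · rw [if_pos h2, if_pos (by omega)]
        congr 1; omega
      · rw [if_neg h2, if_neg (by omega)]
  rw [key, Matrix.det_submatrix_equiv_self]

theorem polyDisc_eq (g : Polynomial ℤ) (hd : 2 ≤ g.natDegree) : polyDisc g = g.discr := by
  have h0 : g.leadingCoeff ≠ 0 := by
    rw [Ne, leadingCoeff_eq_zero]; rintro rfl; simp at hd
  unfold polyDisc
  have h := resultant_deriv (f := g) (natDegree_pos_iff_degree_pos.1 (by omega))
  rw [resultantZ_eq, natDegree_derivative, h]
  rw [show ((-1 : ℤ) ^ (g.natDegree * (g.natDegree - 1) / 2) *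
      ((-1) ^ (g.natDegree * (g.natDegree - 1) / 2) * g.leadingCoeff * g.discr)) =
      g.leadingCoeff * (g.discr * ((-1) ^ (g.natDegree * (g.natDegree - 1) / 2) *
       (-1) ^ (g.natDegree * (g.natDegree - 1) / 2))) by ring, Int.mul_ediv_cancel_left _ h0,
       ← mul_pow]
  simp

/-- `N(g'(α)) c^{d-1} = ± c disc g`. -/
theorem norm_deriv (g : Polynomial ℤ) (hirr : Irreducible g) (hd2 : 2 ≤ g.natDegree)
    (K : Type*) [Field K] [NumberField K] (α : K)
    (hroot : Polynomial.aeval α g = 0)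
    (hgen : IntermediateField.adjoin ℚ {α} = ⊤) :
    (g.leadingCoeff : ℚ) ^ (g.natDegree - 1) * Algebra.norm ℚ (aeval α (derivative g)) =
     (-1) ^ (g.natDegree * (g.natDegree - 1) / 2) * g.leadingCoeff * g.discr ∧
    (g.map (algebraMap ℤ ℚ)) = C (g.leadingCoeff : ℚ) * minpoly ℚ α := by
  have hprim : g.IsPrimitive := hirr.isPrimitive (by omega)
  have hirrQ : Irreducible (g.map (algebraMap ℤ ℚ)) :=
    (hprim.irreducible_iff_irreducible_map_fraction_map (K := ℚ)).1 hirr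
  have h0 : g.leadingCoeff ≠ 0 := by
    rw [Ne, leadingCoeff_eq_zero]; rintro rfl; simp at hd2
  have h0Q : (g.leadingCoeff : ℚ) ≠ 0 := by exact_mod_cast h0
  have hint : IsIntegral ℚ α := Algebra.IsIntegral.isIntegral α
  have hG : (g.map (algebraMap ℤ ℚ)) = C (g.leadingCoeff : ℚ) * minpoly ℚ α := by
    have := minpoly.eq_of_irreducible hirrQ (x := α) (by rw [aeval_map_algebraMap]; exact hroot)
    rw [← this]
    rw [leadingCoeff_map_of_injective (algebraMap ℤ ℚ).injective_int]
    simp only [algebraMap_int_eq, eq_intCast]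
    rw [mul_comm, mul_assoc, ← C_mul, inv_mul_cancel₀ h0Q]; simp
  refine ⟨?_, hG⟩
  have hres := resultant_deriv (f := g) (natDegree_pos_iff_degree_pos.1 (by omega))
  let E := AlgebraicClosure ℚ
  apply (algebraMap ℚ E).injective
  have h1 : resultant (g.map (algebraMap ℤ E)) ((derivative g).map (algebraMap ℤ E))
      (g.map (algebraMap ℤ E)).natDegree (g.natDegree - 1) =
      (g.leadingCoeff : E) ^ (g.natDegree - 1) *
      ((g.map (algebraMap ℤ E)).roots.map ((derivative g).map (algebraMap ℤ E)).eval).prod := by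
    rw [resultant_eq_prod_eval _ _ _ _ (IsAlgClosed.splits _)]
    · rw [leadingCoeff_map_of_injective (algebraMap ℤ E).injective_int]; simp
    · exact natDegree_map_le.trans (natDegree_derivative g).le
  rw [natDegree_map_eq_of_injective (algebraMap ℤ E).injective_int, resultant_map_map, hres] at h1
  have hroots : (g.map (algebraMap ℤ E)).roots = (minpoly ℚ α).aroots E := by
    rw [IsScalarTower.algebraMap_eq ℤ ℚ E, ← Polynomial.map_map, hG, Polynomial.map_mul, map_C,
      roots_C_mul]
    · simpa using h0
  let pb : PowerBasis ℚ K := PowerBasis.ofAdjoinEqTop hint (by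
    rw [← IntermediateField.adjoin_simple_toSubalgebra_of_isAlgebraic hint.isAlgebraic, hgen]; rfl)
  have hpb : pb.gen = α := PowerBasis.ofAdjoinEqTop_gen ..
  have hnorm : algebraMap ℚ E (Algebra.norm ℚ (aeval α (derivative g))) =
      (((minpoly ℚ α).aroots E).map ((derivative g).map (algebraMap ℤ E)).eval).prod := by
    rw [Algebra.norm_eq_prod_embeddings]
    classical
    have hnd : ((minpoly ℚ α).aroots E).Nodup :=
      nodup_roots (Polynomial.Separable.map (show (minpoly ℚ α).Separable from
        Algebra.IsSeparable.isSeparable ℚ α))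
    have hm : (((minpoly ℚ α).aroots E).map ((derivative g).map (algebraMap ℤ E)).eval).prod =
        ∏ y ∈ ((minpoly ℚ α).aroots E).toFinset, ((derivative g).map (algebraMap ℤ E)).eval y := by
      rw [Finset.prod_eq_multiset_prod, Multiset.toFinset_val, Multiset.dedup_eq_self.2 hnd]
    rw [hm]
    refine Finset.prod_bij (fun σ _ => σ α) ?_ ?_ ?_ ?_
    · intro σ _
      rw [Multiset.mem_toFinset, mem_aroots]
      refine ⟨minpoly.ne_zero hint, ?_⟩
      rw [aeval_algHom_apply, minpoly.aeval, map_zero]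
    · intro σ _ τ _ h
      exact pb.algHom_ext (by rw [hpb]; exact h)
    · intro y hy
      rw [Multiset.mem_toFinset, mem_aroots] at hy
      refine ⟨pb.lift y (by rw [hpb]; exact hy.2), Finset.mem_univ _, ?_⟩
      have hl := pb.lift_gen y (by rw [hpb]; exact hy.2)
      simpa only [hpb] using hl
    · intro σ _
      rw [eval_map_algebraMap]
      exact (aeval_algHom_apply (σ.restrictScalars ℤ) α _).symm
  rw [map_mul, hnorm, ← hroots]
  simpa using h1.symm

theorem discr_le (g : Polynomial ℤ) (hirr : Irreducible g) (hd2 : 2 ≤ g.natDegree)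
    (K : Type*) [Field K] [NumberField K] (α : K)
    (hroot : Polynomial.aeval α g = 0)
    (hgen : IntermediateField.adjoin ℚ {α} = ⊤) :
    (|NumberField.discr K| : ℝ) ≤ (|g.leadingCoeff| : ℝ) ^
      ((g.natDegree - 1) * (g.natDegree - 2)) * |polyDisc g| ∧
    Module.finrank ℚ K = g.natDegree := by
  obtain ⟨hN, hG⟩ := norm_deriv g hirr hd2 K α hroot hgen
  rw [polyDisc_eq g hd2]
  have h0 : g.leadingCoeff ≠ 0 := by
    rw [Ne, leadingCoeff_eq_zero]; rintro rfl; simp at hd2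
  have h0Q : (g.leadingCoeff : ℚ) ≠ 0 := by exact_mod_cast h0
  have hint : IsIntegral ℚ α := Algebra.IsIntegral.isIntegral α
  let pb : PowerBasis ℚ K := PowerBasis.ofAdjoinEqTop hint (by
    rw [← IntermediateField.adjoin_simple_toSubalgebra_of_isAlgebraic hint.isAlgebraic, hgen]; rfl)
  have hpb : pb.gen = α := PowerBasis.ofAdjoinEqTop_gen ..
  have hdeg : (minpoly ℚ α).natDegree = g.natDegree := by
    have := congrArg natDegree hG
    rw [natDegree_map_eq_of_injective (algebraMap ℤ ℚ).injective_int, natDegree_C_mul h0Q] at this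
    exact this.symm
  have hdim : pb.dim = g.natDegree := by rw [← pb.natDegree_minpoly, hpb, hdeg]
  have hfin : Module.finrank ℚ K = g.natDegree := by rw [pb.finrank, hdim]
  refine ⟨?_, hfin⟩
  have hdiscr := Algebra.discr_powerBasis_eq_norm ℚ pb
  rw [hpb, hfin] at hdiscr
  have hder : aeval α (derivative g) = (g.leadingCoeff : ℚ) • aeval α (derivative (minpoly ℚ α)) := by
    have := congrArg (fun p => aeval α (derivative p)) hG
    simp only [derivative_C_mul, derivative_map, aeval_map_algebraMap, map_mul, aeval_C] at this
    rw [this, Algebra.smul_def]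
  rw [hder, Algebra.smul_def, map_mul, Algebra.norm_algebraMap, hfin] at hN
  -- integral multiples
  set θ : K := (g.leadingCoeff : K) * α with hθ
  have hθint : IsIntegral ℤ θ := by
    have := isIntegral_leadingCoeff_smul g α hroot
    rwa [Algebra.smul_def] at this
  have hdiscθ : Algebra.discr ℚ (fun i : Fin pb.dim => θ ^ (i : ℕ)) =
      (g.leadingCoeff : ℚ) ^ (g.natDegree * (g.natDegree - 1)) * Algebra.discr ℚ pb.basis := by
    have := Algebra.discr_of_matrix_vecMul (A := ℚ) pb.basis
      (Matrix.diagonal (fun i : Fin pb.dim => (g.leadingCoeff : ℚ) ^ (i : ℕ)))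
    rw [Matrix.det_diagonal, Fin.prod_univ_eq_prod_range (fun i => (g.leadingCoeff : ℚ) ^ i),
      Finset.prod_pow_eq_pow_sum, ← pow_mul, Finset.sum_range_id_mul_two] at this
    rw [← hdim, ← this]
    congr 1
    ext i
    rw [Matrix.diagonal_map (map_zero _), Matrix.vecMul_diagonal, pb.basis_eq_pow, hpb, hθ, mul_pow]
    simp [mul_comm]
  have hle : |(NumberField.discr K : ℚ)| ≤ |Algebra.discr ℚ (fun i : Fin pb.dim => θ ^ (i : ℕ))| := by
    have hne : Algebra.discr ℚ (fun i : Fin pb.dim => θ ^ (i : ℕ)) ≠ 0 := by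
      rw [hdiscθ]
      exact mul_ne_zero (pow_ne_zero _ h0Q) (Algebra.discr_not_zero_of_basis ℚ pb.basis)
    let e : Module.Free.ChooseBasisIndex ℤ (NumberField.RingOfIntegers K) ≃ Fin pb.dim :=
      (NumberField.integralBasis K).indexEquiv pb.basis
    let b := (NumberField.integralBasis K).reindex e
    let t : Fin pb.dim → NumberField.RingOfIntegers K := fun i => ⟨θ ^ (i : ℕ), hθint.pow _⟩
    let P : Matrix (Fin pb.dim) (Fin pb.dim) ℤ := fun j i =>
      (NumberField.RingOfIntegers.basis K).repr (t i) (e.symm j)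
    have hP : P.map (algebraMap ℤ ℚ) = b.toMatrix (fun i : Fin pb.dim => θ ^ (i : ℕ)) := by
      ext j i
      rw [Matrix.map_apply, Module.Basis.toMatrix_apply]
      simp only [b, Module.Basis.repr_reindex_apply]
      exact (NumberField.integralBasis_repr_apply K (t i) (e.symm j)).symm
    have h1 := Algebra.discr_of_matrix_vecMul (A := ℚ) b (P.map (algebraMap ℤ ℚ))
    rw [hP, Module.Basis.toMatrix_map_vecMul, ← hP, ← RingHom.mapMatrix_apply, ← RingHom.map_det] at h1
    have h2 : Algebra.discr ℚ b = NumberField.discr K := by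
      rw [NumberField.coe_discr, ← Algebra.discr_reindex ℚ (NumberField.integralBasis K) e]
      congr 1
      ext i
      simp [b]
    rw [h2] at h1
    rw [h1] at hne ⊢
    have hdet : P.det ≠ 0 := by
      rintro h; rw [h] at hne; simp at hne
    rw [abs_mul]
    have h3 : (1 : ℚ) ≤ |(algebraMap ℤ ℚ P.det) ^ 2| := by
      rw [abs_pow, ← one_pow 2]
      apply pow_le_pow_left₀ zero_le_one
      simp only [algebraMap_int_eq, eq_intCast]
      exact_mod_cast Int.one_le_abs hdet
    exact le_mul_of_one_le_left (abs_nonneg _) h3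
  have hfinal : |Algebra.discr ℚ (fun i : Fin pb.dim => θ ^ (i : ℕ))| =
     |(g.leadingCoeff : ℚ)| ^ ((g.natDegree - 1) * (g.natDegree - 2)) * |(g.discr : ℚ)| := by
    rw [hdiscθ, hdiscr]
    have h2 := congrArg abs hN
    simp only [abs_mul, abs_pow, abs_neg, abs_one, one_pow, one_mul] at h2 ⊢
    have hc : |(g.leadingCoeff : ℚ)| ≠ 0 := abs_ne_zero.2 h0Q
    obtain ⟨e, he⟩ : ∃ e, g.natDegree = e + 2 := ⟨g.natDegree - 2, by omega⟩
    rw [he] at h2 ⊢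
    simp only [Nat.add_sub_cancel, show e + 2 - 1 = e + 1 by omega] at h2 ⊢
    have h3 : |(g.discr : ℚ)| = |(g.leadingCoeff : ℚ)| ^ (2 * e + 2) *
       |(Algebra.norm ℚ) ((aeval α) (derivative (minpoly ℚ α)))| := by
      apply mul_left_cancel₀ hc
      rw [← h2]; ring
    rw [h3]; ring
  rw [hfinal] at hle
  exact_mod_cast (Rat.cast_le (K := ℝ)).2 hle

end KB

namespace KB
open MeasureTheory NumberField NumberField.mixedEmbedding NumberField.mixedEmbedding.fundamentalCone
open NumberField.InfinitePlace NumberField.Units Module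
open scoped ENNReal Classical Pointwise

theorem lintegral_fin_prod (n : ℕ) {E : Fin n → Type*} [∀ i, MeasurableSpace (E i)]
    (μ : ∀ i, Measure (E i)) [∀ i, SigmaFinite (μ i)] (f : ∀ i, E i → ℝ≥0∞)
    (hf : ∀ i, Measurable (f i)) :
    ∫⁻ x, ∏ i, f i (x i) ∂(Measure.pi μ) = ∏ i, ∫⁻ x, f i x ∂(μ i) := by
  induction n with
  | zero =>
    simp
  | succ n ih =>
    have h := (measurePreserving_piFinSuccAbove μ 0).symm
    rw [← h.lintegral_comp_emb (MeasurableEquiv.measurableEmbedding _)]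
    simp_rw [Fin.prod_univ_succ]
    simp only [MeasurableEquiv.piFinSuccAbove_symm_apply, Fin.insertNthEquiv, Equiv.coe_fn_mk,
      Fin.insertNth_zero, Fin.cons_zero, Fin.cons_succ]
    have := lintegral_prod_mul (μ := μ 0) (ν := Measure.pi fun j => μ (Fin.succAbove 0 j))
      (f := f 0) (g := fun y => ∏ i : Fin n, f i.succ (y i)) (hf 0).aemeasurable
      (Finset.measurable_prod _ (fun i _ => (hf i.succ).comp (measurable_pi_apply i))).aemeasurable
    rw [ih (fun j => μ (Fin.succAbove 0 j)) (fun j => f j.succ) (fun j => hf _)] at this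
    exact this

theorem lintegral_fintype_prod {ι : Type*} [Fintype ι] {E : Type*} [MeasureSpace E]
    [SigmaFinite (volume : Measure E)] (f : ι → E → ℝ≥0∞)
    (hf : ∀ i, Measurable (f i)) :
    ∫⁻ x : ι → E, ∏ i, f i (x i) = ∏ i, ∫⁻ x, f i x := by
  let e := (Fintype.equivFin ι).symm
  have h := volume_measurePreserving_piCongrLeft (fun _ : ι => E) e
  rw [← h.lintegral_comp_emb (MeasurableEquiv.measurableEmbedding _)]
  simp_rw [← e.prod_comp]
  have := lintegral_fin_prod _ (fun _ => (volume : Measure E)) (fun i => f (e i)) (fun i => hf _)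
  rw [← this]
  refine lintegral_congr fun x => Finset.prod_congr rfl fun i _ => ?_
  congr 1
  exact Equiv.piCongrLeft_apply_apply (fun _ : ι => E) e x i

variable (K : Type*) [Field K] [NumberField K]

theorem lintegral_mixed_prod (f : {w : InfinitePlace K // IsReal w} → ℝ → ℝ≥0∞)
    (g : {w : InfinitePlace K // IsComplex w} → ℂ → ℝ≥0∞)
    (hf : ∀ i, Measurable (f i)) (hg : ∀ i, Measurable (g i)) :
    ∫⁻ x : mixedSpace K, (∏ i, f i (x.1 i)) * ∏ i, g i (x.2 i) =
      (∏ i, ∫⁻ x, f i x) * ∏ i, ∫⁻ x, g i x := by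
  rw [← lintegral_fintype_prod f hf, ← lintegral_fintype_prod g hg]
  exact lintegral_prod_mul
    (Finset.measurable_prod _ (fun i _ => (hf i).comp (measurable_pi_apply i))).aemeasurable
    (Finset.measurable_prod _ (fun i _ => (hg i).comp (measurable_pi_apply i))).aemeasurable

variable {K}

theorem norm_eq_prod (x : mixedSpace K) :
    mixedEmbedding.norm x = (∏ i, |x.1 i|) * ∏ i, ‖x.2 i‖ ^ 2 := by
  rw [mixedEmbedding.norm_apply, prod_eq_prod_mul_prod]
  congr 1
  · refine Finset.prod_congr rfl fun i _ => ?_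
    rw [normAtPlace_apply_of_isReal i.2, mult_isReal, pow_one, Real.norm_eq_abs]
  · refine Finset.prod_congr rfl fun i _ => ?_
    rw [normAtPlace_apply_of_isComplex i.2, mult_isComplex]

theorem abs_det_mulLeft (c : mixedSpace K) :
    |LinearMap.det (LinearMap.mulLeft ℝ c)| = mixedEmbedding.norm c := by
  have : LinearMap.mulLeft ℝ c =
      LinearMap.prodMap (LinearMap.pi (fun i ↦ (LinearMap.mulLeft ℝ (c.1 i)).comp (LinearMap.proj i)))
       (LinearMap.pi (fun i ↦ (LinearMap.mulLeft ℝ (c.2 i)).comp (LinearMap.proj i))) := by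
    ext <;> simp
  rw [this, LinearMap.det_prodMap, LinearMap.det_pi, LinearMap.det_pi, norm_eq_prod, abs_mul,
    Finset.abs_prod, Finset.abs_prod]
  congr 1
  · simp
  · refine Finset.prod_congr rfl fun i _ => ?_
    have : LinearMap.det (LinearMap.mulLeft ℝ (c.2 i)) = Complex.normSq (c.2 i) := by
      rw [← Algebra.norm_complex_apply, Algebra.norm_apply]; rfl
    rw [this, Complex.normSq_eq_norm_sq, abs_of_nonneg (by positivity)]

theorem lintegral_mul_left (c : mixedSpace K) (hc : mixedEmbedding.norm c ≠ 0)
    (f : mixedSpace K → ℝ≥0∞) (hf : Measurable f) :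
    ∫⁻ x, f (c * x) = ENNReal.ofReal (mixedEmbedding.norm c)⁻¹ * ∫⁻ x, f x := by
  have hdet : LinearMap.det (LinearMap.mulLeft ℝ c) ≠ 0 := by
    rw [← abs_ne_zero, abs_det_mulLeft]; exact hc
  have h := Measure.map_linearMap_addHaar_eq_smul_addHaar (μ := (volume : Measure (mixedSpace K))) hdet
  have hm : Measurable (LinearMap.mulLeft ℝ c) :=
    (LinearMap.continuous_of_finiteDimensional _).measurable
  have h2 := lintegral_map (μ := (volume : Measure (mixedSpace K))) hf hm
  rw [h, lintegral_smul_measure, abs_inv, abs_det_mulLeft] at h2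
  exact h2.symm

instance countable_units : Countable (𝓞 K)ˣ := by
  have h1 : Countable K := Countable.of_equiv _ (finBasis ℚ K).equivFun.toEquiv.symm
  have : Countable (𝓞 K) := (RingOfIntegers.coe_injective (K := K)).countable
  exact (Units.val_injective (α := 𝓞 K)).countable

theorem tsum_cone (x : mixedSpace K) (hx : mixedEmbedding.norm x ≠ 0) :
    ∑' u : (𝓞 K)ˣ, (fundamentalCone K).indicator (1 : mixedSpace K → ℝ≥0∞) (u • x) =
      torsionOrder K := by
  obtain ⟨v, hv⟩ := exists_unit_smul_mem hx
  rw [← (Equiv.mulRight v).tsum_eq]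
  simp only [Equiv.coe_mulRight, mul_smul]
  have : ∀ u : (𝓞 K)ˣ, (fundamentalCone K).indicator (1 : mixedSpace K → ℝ≥0∞) (u • v • x) =
      ((torsion K : Subgroup (𝓞 K)ˣ) : Set (𝓞 K)ˣ).indicator 1 u := by
    intro u
    simp only [Set.indicator_apply, unit_smul_mem_iff_mem_torsion hv u, SetLike.mem_coe, Pi.one_apply]
  simp_rw [this]
  rw [← tsum_subtype]
  simp only [Pi.one_apply]
  have : Fintype ((torsion K : Subgroup (𝓞 K)ˣ) : Set (𝓞 K)ˣ) :=
    @Fintype.ofFinite _ (inferInstanceAs (Finite (torsion K)))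
  rw [tsum_fintype]
  simp only [Finset.sum_const, Finset.card_univ, nsmul_eq_mul, mul_one, torsionOrder]
  norm_cast
  rw [Nat.card_eq_fintype_card]

theorem unfold_gen (μ : Measure (mixedSpace K))
    (hinv : ∀ u : (𝓞 K)ˣ, MeasurePreserving (fun x : mixedSpace K => u • x) μ μ)
    (hN : ∀ᵐ y ∂μ, mixedEmbedding.norm y ≠ 0)
    (G : mixedSpace K → ℝ≥0∞) (hG : Measurable G) :
    (torsionOrder K : ℝ≥0∞) * ∫⁻ y, G y ∂μ =
      ∫⁻ y in fundamentalCone K, ∑' u : (𝓞 K)ˣ, G (u • y) ∂μ := by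
  have hm : ∀ u : (𝓞 K)ˣ, Measurable (fun x : mixedSpace K => u • x) := fun u => (hinv u).measurable
  have hC := measurableSet_fundamentalCone K
  calc (torsionOrder K : ℝ≥0∞) * ∫⁻ y, G y ∂μ
      = ∫⁻ y, ∑' u : (𝓞 K)ˣ, (fundamentalCone K).indicator 1 (u • y) * G y ∂μ := by
        rw [← lintegral_const_mul _ hG]
        refine lintegral_congr_ae ?_
        filter_upwards [hN] with y hy
        rw [ENNReal.tsum_mul_right, tsum_cone y hy]
    _ = ∑' u : (𝓞 K)ˣ, ∫⁻ y, (fundamentalCone K).indicator 1 (u • y) * G y ∂μ := by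
        rw [lintegral_tsum]
        intro u
        exact (((measurable_one.indicator hC).comp (hm u)).mul hG).aemeasurable
    _ = ∑' u : (𝓞 K)ˣ, ∫⁻ y, (fundamentalCone K).indicator 1 y * G (u⁻¹ • y) ∂μ := by
        refine tsum_congr fun u => ?_
        have hmm : Measurable (fun y => (fundamentalCone K).indicator (1 : mixedSpace K → ℝ≥0∞) y * G (u⁻¹ • y)) :=
          (measurable_one.indicator hC).mul (hG.comp (hm u⁻¹))
        rw [← (hinv u).lintegral_comp hmm]
        simp only [inv_smul_smul]
    _ = ∑' u : (𝓞 K)ˣ, ∫⁻ y, (fundamentalCone K).indicator 1 y * G (u • y) ∂μ :=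
        (Equiv.inv (𝓞 K)ˣ).tsum_eq
          (fun u => ∫⁻ y, (fundamentalCone K).indicator (1 : mixedSpace K → ℝ≥0∞) y * G (u • y) ∂μ)
    _ = ∫⁻ y in fundamentalCone K, ∑' u : (𝓞 K)ˣ, G (u • y) ∂μ := by
        rw [← lintegral_tsum, ← lintegral_indicator hC]
        · refine lintegral_congr fun y => ?_
          rw [ENNReal.tsum_mul_left]
          by_cases h : y ∈ fundamentalCone K <;> simp [h]
        · intro u
          exact ((measurable_one.indicator hC).mul (hG.comp (hm u))).aemeasurable

theorem measurable_mnorm : Measurable (mixedEmbedding.norm : mixedSpace K → ℝ) := by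
  have : (mixedEmbedding.norm : mixedSpace K → ℝ) = fun x => (∏ i, |x.1 i|) * ∏ i, ‖x.2 i‖ ^ 2 :=
    funext norm_eq_prod
  rw [this]
  fun_prop

theorem ae_norm_ne_zero : ∀ᵐ y : mixedSpace K, mixedEmbedding.norm y ≠ 0 := by
  have h1 : ∀ᵐ y : mixedSpace K, ∀ w, y ∉ {x : mixedSpace K | normAtPlace w x = 0} := by
    rw [ae_all_iff]
    intro w
    rw [← measure_eq_zero_iff_ae_notMem]
    by_cases hw : w.IsReal
    · have : {x : mixedSpace K | normAtPlace w x = 0} = {x | x.1 ⟨w, hw⟩ = 0} := by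
        ext x; simp [normAtPlace_apply_of_isReal hw]
      rw [this]
      exact mixedEmbedding.volume_eq_zero ⟨w, hw⟩
    · have hw : w.IsComplex := not_isReal_iff_isComplex.1 hw
      let p : Submodule ℝ (mixedSpace K) := LinearMap.ker ((LinearMap.proj ⟨w, hw⟩ :
        ({w : InfinitePlace K // w.IsComplex} → ℂ) →ₗ[ℝ] ℂ).comp (LinearMap.snd ℝ _ _))
      have : {x : mixedSpace K | normAtPlace w x = 0} = p := by
        ext x; simp [normAtPlace_apply_of_isComplex hw, p]
      rw [this]
      refine Measure.addHaar_submodule volume p fun h => ?_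
      have : (1 : mixedSpace K) ∈ p := h ▸ Submodule.mem_top
      simp [p] at this
  filter_upwards [h1] with y hy
  rw [mixedEmbedding.norm_ne_zero_iff]
  exact hy

theorem mp_unit (u : (𝓞 K)ˣ) :
    MeasurePreserving (fun x : mixedSpace K => u • x) volume volume := by
  have hm : Measurable (fun x : mixedSpace K => u • x) :=
    (LinearMap.continuous_of_finiteDimensional
      (LinearMap.mulLeft ℝ (mixedEmbedding K (u : K)))).measurable
  refine ⟨hm, ?_⟩
  ext s hs
  rw [Measure.map_apply hm hs, ← lintegral_indicator_one hs, ← lintegral_indicator_one (hm hs)]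
  have := lintegral_mul_left (mixedEmbedding K (u : K)) (by rw [norm_unit]; simp)
    (s.indicator 1) (measurable_one.indicator hs)
  rw [norm_unit] at this
  simp only [inv_one, ENNReal.ofReal_one, one_mul] at this
  exact this

theorem unfold_vol (G : mixedSpace K → ℝ≥0∞) (hG : Measurable G) :
    (torsionOrder K : ℝ≥0∞) * ∫⁻ y, G y =
      ∫⁻ y in fundamentalCone K, ∑' u : (𝓞 K)ˣ, G (u • y) :=
  unfold_gen volume mp_unit ae_norm_ne_zero G hG

theorem vol_cone_le (t : ℝ) :
    volume (fundamentalCone K ∩ {x | mixedEmbedding.norm x ≤ t}) =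
      ENNReal.ofReal t * volume (normLeOne K) := by
  rcases le_or_gt t 0 with ht | ht
  · rw [ENNReal.ofReal_of_nonpos ht, zero_mul]
    have : fundamentalCone K ∩ {x | mixedEmbedding.norm x ≤ t} = ∅ := ?_
    · rw [this, measure_empty]
    rw [Set.eq_empty_iff_forall_notMem]
    rintro x ⟨hx, hx2⟩
    exact absurd (norm_pos_of_mem hx) (not_lt.2 (le_trans hx2 ht))
  · have hn : (finrank ℚ K : ℝ) ≠ 0 := by exact_mod_cast finrank_pos.ne'
    set r : ℝ := t ^ (1 / (finrank ℚ K : ℝ)) with hr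
    have hr0 : 0 < r := Real.rpow_pos_of_pos ht _
    have hrt : r ^ (finrank ℚ K) = t := by
      rw [← Real.rpow_natCast, hr, ← Real.rpow_mul ht.le, one_div, inv_mul_cancel₀ hn, Real.rpow_one]
    have : fundamentalCone K ∩ {x | mixedEmbedding.norm x ≤ t} = r • normLeOne K := by
      ext x
      rw [Set.mem_smul_set_iff_inv_smul_mem₀ hr0.ne', mem_normLeOne,
        smul_mem_iff_mem (inv_ne_zero hr0.ne'), mixedEmbedding.norm_smul, abs_of_pos (inv_pos.2 hr0),
        inv_pow, hrt, inv_mul_le_iff₀ ht, mul_one]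
      rfl
    rw [this, Measure.addHaar_smul, mixedEmbedding.finrank, hrt, abs_of_pos ht]

theorem map_norm_cone :
    Measure.map (mixedEmbedding.norm : mixedSpace K → ℝ) (volume.restrict (fundamentalCone K)) =
      volume (normLeOne K) • (volume.restrict (Set.Ioi 0) : Measure ℝ) := by
  have hV : volume (normLeOne K) ≠ ⊤ := by
    rw [volume_normLeOne]; finiteness
  have h1 : ∀ t, Measure.map (mixedEmbedding.norm : mixedSpace K → ℝ)
      (volume.restrict (fundamentalCone K)) (Set.Iic t) = ENNReal.ofReal t * volume (normLeOne K) := by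
    intro t
    rw [Measure.map_apply measurable_mnorm measurableSet_Iic,
      Measure.restrict_apply (measurable_mnorm measurableSet_Iic), ← vol_cone_le, Set.inter_comm]
    rfl
  have h2 : ∀ t, (volume (normLeOne K) • (volume.restrict (Set.Ioi 0) : Measure ℝ)) (Set.Iic t) =
      ENNReal.ofReal t * volume (normLeOne K) := by
    intro t
    rw [Measure.smul_apply, Measure.restrict_apply measurableSet_Iic, Set.inter_comm,
      Set.Ioi_inter_Iic, Real.volume_Ioc, sub_zero, smul_eq_mul, mul_comm]
  have hfin : ∀ t, ENNReal.ofReal t * volume (normLeOne K) ≠ ⊤ := fun t =>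
    ENNReal.mul_ne_top ENNReal.ofReal_ne_top hV
  have : IsLocallyFiniteMeasure (Measure.map (mixedEmbedding.norm : mixedSpace K → ℝ)
      (volume.restrict (fundamentalCone K))) := ⟨fun x => ⟨Set.Iic (x + 1), Iic_mem_nhds (by simp),
        by rw [h1]; exact (hfin _).lt_top⟩⟩
  refine Measure.ext_of_Ioc _ _ fun a b hab => ?_
  rw [← Set.Iic_sdiff_Iic, measure_sdiff (Set.Iic_subset_Iic.2 hab.le) nullMeasurableSet_Iic
    (by rw [h1]; exact hfin _), measure_sdiff (Set.Iic_subset_Iic.2 hab.le) nullMeasurableSet_Iic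
    (by rw [h2]; exact hfin _), h1, h1, h2, h2]

theorem lintegral_cone_norm (k : ℝ → ℝ≥0∞) (hk : Measurable k) :
    ∫⁻ y in fundamentalCone K, k (mixedEmbedding.norm y) =
      volume (normLeOne K) * ∫⁻ t in Set.Ioi (0 : ℝ), k t := by
  rw [← lintegral_map hk measurable_mnorm, map_norm_cone, lintegral_smul_measure, smul_eq_mul]

end KB


namespace KB
open MeasureTheory NumberField NumberField.mixedEmbedding NumberField.mixedEmbedding.fundamentalCone
open NumberField.InfinitePlace NumberField.Units Module
open scoped ENNReal Classical Pointwise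

variable {K : Type*} [Field K] [NumberField K]

theorem exp_13 : Real.cosh 1.3 < 2 ∧ Real.sinh 1.3 ≤ 1.9 := by
  have h1 : Real.exp 0.65 < 1.91556 := by
    have := Real.exp_bound' (x := 0.65) (by norm_num) (by norm_num) (n := 7) (by norm_num)
    refine this.trans_lt ?_
    simp only [Finset.sum_range_succ, Finset.sum_range_zero, Nat.factorial]
    norm_num
  have h2 : 1.9155 < Real.exp 0.65 := by
    have := Real.sum_le_exp_of_nonneg (x := 0.65) (by norm_num) 8
    refine lt_of_lt_of_le ?_ this
    simp only [Finset.sum_range_succ, Finset.sum_range_zero, Nat.factorial]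
    norm_num
  have h3 : Real.exp 1.3 = Real.exp 0.65 * Real.exp 0.65 := by
    rw [← Real.exp_add]; norm_num
  have h4 : Real.exp 1.3 < 3.67 := by rw [h3]; nlinarith
  have h5 : 3.669 < Real.exp 1.3 := by rw [h3]; nlinarith
  have h6 : Real.exp (-1.3) < 0.273 := by
    rw [Real.exp_neg, inv_lt_comm₀ (by positivity) (by norm_num)]
    refine lt_trans ?_ h5; norm_num
  have h7 := Real.exp_pos (-1.3)
  constructor
  · rw [Real.cosh_eq]; linarith
  · rw [Real.sinh_eq]; linarith

theorem exp_chord (s : ℝ) (hs : |s| ≤ 0.65) : Real.exp (2 * s) ≤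
    Real.cosh 1.3 + s / 0.65 * Real.sinh 1.3 := by
  obtain ⟨h1, h2⟩ := abs_le.1 hs
  have := convexOn_exp.2 (Set.mem_univ (1.3 : ℝ)) (Set.mem_univ (-1.3 : ℝ))
    (show (0 : ℝ) ≤ (1 + s / 0.65) / 2 by norm_num at h1 h2 ⊢; linarith)
    (show (0 : ℝ) ≤ (1 - s / 0.65) / 2 by norm_num at h1 h2 ⊢; linarith)
    (by ring)
  simp only [smul_eq_mul] at this
  rw [show (1 + s / 0.65) / 2 * 1.3 + (1 - s / 0.65) / 2 * -1.3 = 2 * s by ring] at this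
  rw [Real.cosh_eq, Real.sinh_eq]
  linarith

theorem sum_mult_real : ∑ w : InfinitePlace K, (w.mult : ℝ) = finrank ℚ K := by
  rw [← InfinitePlace.sum_mult_eq]; push_cast; rfl

theorem quad_ge (t : InfinitePlace K → ℝ) (ht : ∀ w, 0 < t w) (a : 𝓞 K) (ha : a ≠ 0) (L : ℝ)
    (hL : L = ∑ w, (mult w : ℝ) * Real.log (t w)) :
    finrank ℚ K * Real.exp (2 * L / finrank ℚ K) ≤
      ∑ w : InfinitePlace K, (mult w : ℝ) * (t w * w (a : K)) ^ 2 := by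
  set n : ℝ := (finrank ℚ K : ℝ) with hn
  have hn0 : 0 < n := by rw [hn]; exact_mod_cast finrank_pos
  set E := Real.exp (2 * L / n) with hE
  have hE0 : 0 < E := Real.exp_pos _
  have haK : (a : K) ≠ 0 := by simpa using ha
  have hw : ∀ w : InfinitePlace K, 0 < w (a : K) := fun w => pos_iff.2 haK
  have key : ∀ w : InfinitePlace K, (mult w : ℝ) * (1 + 2 * Real.log (t w) + 2 * Real.log (w (a : K)) - 2 * L / n)
      ≤ (mult w : ℝ) * ((t w * w (a : K)) ^ 2 / E) := by
    intro w
    apply mul_le_mul_of_nonneg_left _ (by positivity)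
    have h1 : 0 < (t w * w (a : K)) ^ 2 / E := by have := ht w; have := hw w; positivity
    have := Real.add_one_le_exp (Real.log ((t w * w (a : K)) ^ 2 / E))
    rw [Real.exp_log h1, Real.log_div (by have := ht w; have := hw w; positivity) hE0.ne', hE, Real.log_exp,
      Real.log_pow, Real.log_mul (ht w).ne' (hw w).ne'] at this
    push_cast at this
    rw [← hE] at this
    linarith
  have hsum := Finset.sum_le_sum fun w (_ : w ∈ Finset.univ) => key w
  have hNa : 0 ≤ ∑ w : InfinitePlace K, (mult w : ℝ) * Real.log (w (a : K)) := by
    have h1 := InfinitePlace.prod_eq_abs_norm (a : K)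
    have h2 : ∑ w : InfinitePlace K, (mult w : ℝ) * Real.log (w (a : K)) =
        Real.log (∏ w : InfinitePlace K, w (a : K) ^ mult w) := by
      rw [Real.log_prod (fun w _ => (pow_pos (hw w) _).ne')]
      simp_rw [Real.log_pow]
    rw [h2, h1]
    apply Real.log_nonneg
    have h3 : (Algebra.norm ℤ a) ≠ 0 := Algebra.norm_ne_zero_iff.2 ha
    have h4 : (Algebra.norm ℚ (a : K)) = Algebra.norm ℤ a := (Algebra.coe_norm_int a).symm
    rw [h4]
    exact_mod_cast Int.one_le_abs h3
  have hl : ∑ w : InfinitePlace K, (mult w : ℝ) * (1 + 2 * Real.log (t w) + 2 * Real.log (w (a : K)) - 2 * L / n) =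
      n + 2 * L + 2 * (∑ w : InfinitePlace K, (mult w : ℝ) * Real.log (w (a : K))) - n * (2 * L / n) := by
    rw [hL, hn, ← sum_mult_real, Finset.mul_sum, Finset.mul_sum, Finset.sum_mul, ← Finset.sum_add_distrib,
      ← Finset.sum_add_distrib, ← Finset.sum_sub_distrib]
    refine Finset.sum_congr rfl fun w _ => ?_
    ring
  rw [hl, mul_div_cancel₀ _ hn0.ne'] at hsum
  have hr : ∑ w : InfinitePlace K, (mult w : ℝ) * ((t w * w (a : K)) ^ 2 / E) =
     (∑ w : InfinitePlace K, (mult w : ℝ) * ((t w * w (a : K)) ^ 2)) / E := by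
    rw [Finset.sum_div]
    exact Finset.sum_congr rfl fun w _ => by ring
  rw [hr, le_div_iff₀ hE0] at hsum
  nlinarith

theorem quad_lt (t : InfinitePlace K → ℝ) (ht : ∀ w, 0 < t w) (u : (𝓞 K)ˣ) (L : ℝ)
    (hL : L = ∑ w, (mult w : ℝ) * Real.log (t w)) (hL0 : 0 ≤ L)
    (hu : ∀ w : InfinitePlace K, |Real.log (t w * w (u : K))| ≤ 0.65) :
    ∑ w : InfinitePlace K, (mult w : ℝ) * (t w * w (u : K)) ^ 2 <
    2 * (finrank ℚ K * Real.exp (2 * L / finrank ℚ K)) := by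
  set n : ℝ := (finrank ℚ K : ℝ) with hn
  have hn0 : 0 < n := by rw [hn]; exact_mod_cast finrank_pos
  have hw : ∀ w : InfinitePlace K, 0 < w (u : K) := fun w => pos_iff.2 (coe_ne_zero u)
  have key : ∀ w : InfinitePlace K, (mult w : ℝ) * (t w * w (u : K)) ^ 2 ≤
      (mult w : ℝ) * (Real.cosh 1.3 + Real.log (t w * w (u : K)) / 0.65 * Real.sinh 1.3) := by
    intro w
    apply mul_le_mul_of_nonneg_left _ (by positivity)
    refine le_trans (le_of_eq ?_) (exp_chord _ (hu w))
    rw [two_mul, Real.exp_add, Real.exp_log (mul_pos (ht w) (hw w)), sq]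
  refine (Finset.sum_le_sum fun w (_ : w ∈ Finset.univ) => key w).trans_lt ?_
  have h0 : ∑ w : InfinitePlace K, (mult w : ℝ) * Real.log (w (u : K)) = 0 :=
    Units.sum_mult_mul_log u
  have h1 : ∑ w : InfinitePlace K, (mult w : ℝ) * (Real.cosh 1.3 + Real.log (t w * w (u : K)) / 0.65 * Real.sinh 1.3)
      = n * Real.cosh 1.3 + L * (Real.sinh 1.3 / 0.65) +
        (∑ w : InfinitePlace K, (mult w : ℝ) * Real.log (w (u : K))) * (Real.sinh 1.3 / 0.65) := by
    rw [hL, hn, ← sum_mult_real, Finset.sum_mul, Finset.sum_mul, Finset.sum_mul, ← Finset.sum_add_distrib,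
      ← Finset.sum_add_distrib]
    refine Finset.sum_congr rfl fun w _ => ?_
    rw [Real.log_mul (ht w).ne' (hw w).ne']
    ring
  rw [h1, h0]
  obtain ⟨hc, hs⟩ := exp_13
  have h2 := Real.add_one_le_exp (2 * L / n)
  have h3 : n * (2 * L / n + 1) ≤ n * Real.exp (2 * L / n) := mul_le_mul_of_nonneg_left h2 hn0.le
  have h4 : n * (2 * L / n + 1) = 2 * L + n := by field_simp
  have h5 : L * (Real.sinh 1.3 / 0.65) ≤ L * 4 := by
    apply mul_le_mul_of_nonneg_left _ hL0
    rw [div_le_iff₀ (by norm_num)]; linarith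
  nlinarith

theorem eq_or_neg (t : InfinitePlace K → ℝ) (ht : ∀ w, 0 < t w) (u v : (𝓞 K)ˣ) (L : ℝ)
    (hL : L = ∑ w, (mult w : ℝ) * Real.log (t w)) (hL0 : 0 ≤ L)
    (hu : ∀ w : InfinitePlace K, |Real.log (t w * w (u : K))| ≤ 0.65)
    (hv : ∀ w : InfinitePlace K, |Real.log (t w * w (v : K))| ≤ 0.65)
    (huv : ((u : 𝓞 K) - v) ∈ Ideal.span {(2 : 𝓞 K)}) : v = u ∨ v = -u := by
  by_contra! h
  obtain ⟨a, ha⟩ := Ideal.mem_span_singleton'.1 huv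
  set b : 𝓞 K := a + v with hb
  have hb' : (u : 𝓞 K) + v = b * 2 := by rw [hb, add_mul, ha]; ring
  have ha0 : a ≠ 0 := by
    rintro rfl; rw [zero_mul] at ha
    exact h.1 (Units.ext (sub_eq_zero.1 ha.symm).symm)
  have hb0 : b ≠ 0 := by
    intro h0; rw [h0, zero_mul] at hb'
    apply h.2; ext1; rw [Units.val_neg]; rw [add_comm] at hb'; exact eq_neg_of_add_eq_zero_left hb'
  have q1 := quad_ge t ht a ha0 L hL
  have q2 := quad_ge t ht b hb0 L hL
  have q3 := quad_lt t ht u L hL hL0 hu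
  have q4 := quad_lt t ht v L hL hL0 hv
  have par : ∀ w : InfinitePlace K, w (a : K) ^ 2 + w (b : K) ^ 2 = (w (u : K) ^ 2 + w (v : K) ^ 2) / 2 := by
    intro w
    rw [← norm_embedding_eq, ← norm_embedding_eq, ← norm_embedding_eq, ← norm_embedding_eq]
    set A := w.embedding (a : K)
    set B := w.embedding (b : K)
    have e1 : w.embedding (u : K) = B + A := by
      have : (u : 𝓞 K) = b + a := by rw [hb]; linear_combination -ha
      rw [← map_add, ← map_add, ← this]
    have e2 : w.embedding (v : K) = B - A := by
      have : (v : 𝓞 K) = b - a := by rw [hb]; ring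
      rw [← map_sub, ← map_sub, ← this]
    rw [e1, e2]
    have := parallelogram_law_with_norm ℝ B A
    nlinarith
  have : ∑ w : InfinitePlace K, (mult w : ℝ) * (t w * w (a : K)) ^ 2 +
      ∑ w : InfinitePlace K, (mult w : ℝ) * (t w * w (b : K)) ^ 2 =
      (∑ w : InfinitePlace K, (mult w : ℝ) * (t w * w (u : K)) ^ 2 +
      ∑ w : InfinitePlace K, (mult w : ℝ) * (t w * w (v : K)) ^ 2) / 2 := by
    rw [← Finset.sum_add_distrib, ← Finset.sum_add_distrib, Finset.sum_div]
    refine Finset.sum_congr rfl fun w _ => ?_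
    rw [mul_pow, mul_pow, mul_pow, mul_pow]
    linear_combination (mult w : ℝ) * t w ^ 2 * par w
  linarith

theorem card_le_aux (t : InfinitePlace K → ℝ) (ht : ∀ w, 0 < t w) (L : ℝ)
    (hL : L = ∑ w, (mult w : ℝ) * Real.log (t w)) (hL0 : 0 ≤ L) (F : Finset (𝓞 K)ˣ)
    (hF : ∀ u ∈ F, ∀ w : InfinitePlace K, |Real.log (t w * w (u : K))| ≤ 0.65) :
    F.card ≤ 2 ^ (finrank ℚ K + 1) := by
  let I : Ideal (𝓞 K) := Ideal.span {(2 : 𝓞 K)}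
  have hcard : Nat.card (𝓞 K ⧸ I) = 2 ^ finrank ℚ K := by
    have : Nat.card (𝓞 K ⧸ I) = Ideal.absNorm I := rfl
    rw [this, Ideal.absNorm_span_singleton]
    have h2 : (2 : 𝓞 K) = algebraMap ℤ (𝓞 K) 2 := by simp
    rw [h2, Algebra.norm_algebraMap, RingOfIntegers.rank, Int.natAbs_pow]; rfl
  have : Finite (𝓞 K ⧸ I) := Nat.finite_of_card_ne_zero (by rw [hcard]; positivity)
  have : Fintype (𝓞 K ⧸ I) := Fintype.ofFinite _
  have h := Finset.card_le_mul_card_image_of_maps_to (s := F) (t := (Finset.univ : Finset (𝓞 K ⧸ I)))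
    (f := fun u : (𝓞 K)ˣ => Ideal.Quotient.mk I (u : 𝓞 K)) (fun _ _ => Finset.mem_univ _) 2 ?_
  · rw [Finset.card_univ, ← Nat.card_eq_fintype_card, hcard] at h
    rw [pow_succ']; exact h
  · intro b _
    rcases (Finset.filter (fun u : (𝓞 K)ˣ => Ideal.Quotient.mk I (u : 𝓞 K) = b) F).eq_empty_or_nonempty with h | ⟨u, hu⟩
    · rw [h]; simp
    · have : (Finset.filter (fun u : (𝓞 K)ˣ => Ideal.Quotient.mk I (u : 𝓞 K) = b) F) ⊆ {u, -u} := by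
        intro v hv
        rw [Finset.mem_filter] at hu hv
        rw [Finset.mem_insert, Finset.mem_singleton]
        exact eq_or_neg t ht u v L hL hL0 (hF u hu.1) (hF v hv.1)
          (Ideal.Quotient.eq.1 (hu.2.trans hv.2.symm))
      exact (Finset.card_le_card this).trans Finset.card_le_two

theorem card_le (t : InfinitePlace K → ℝ) (ht : ∀ w, 0 < t w) (F : Finset (𝓞 K)ˣ)
    (hF : ∀ u ∈ F, ∀ w : InfinitePlace K, |Real.log (t w * w (u : K))| ≤ 0.65) :
    F.card ≤ 2 ^ (finrank ℚ K + 1) := by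
  rcases le_total 0 (∑ w, (mult w : ℝ) * Real.log (t w)) with h | h
  · exact card_le_aux t ht _ rfl h F hF
  · have h1 := card_le_aux (fun w => (t w)⁻¹) (fun w => inv_pos.2 (ht w)) _ rfl
      (by simp_rw [Real.log_inv, mul_neg]; rw [Finset.sum_neg_distrib]; linarith) (F.image (·⁻¹)) ?_
    · rwa [Finset.card_image_of_injective _ inv_injective] at h1
    · intro u hu w
      obtain ⟨v, hv, rfl⟩ := Finset.mem_image.1 hu
      have := hF v hv w
      rw [← abs_neg, ← Real.log_inv, mul_inv] at this
      convert this using 4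
      rw [← map_inv₀]; simp

end KB


namespace KB
open MeasureTheory NumberField NumberField.mixedEmbedding NumberField.mixedEmbedding.fundamentalCone
open NumberField.InfinitePlace NumberField.Units Module
open scoped ENNReal Classical Pointwise


theorem lintegral_abs (f : ℝ → ℝ≥0∞) :
    ∫⁻ x : ℝ, f |x| = 2 * ∫⁻ x in Set.Ioi (0:ℝ), f x := by
  have h1 : ∫⁻ x in Set.Ioi (0:ℝ), f |x| = ∫⁻ x in Set.Ioi (0:ℝ), f x :=
    setLIntegral_congr_fun measurableSet_Ioi fun x hx => by
      simp only [abs_of_pos (Set.mem_Ioi.1 hx)]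
  have h2 : ∫⁻ x in Set.Iio (0:ℝ), f |x| = ∫⁻ x in Set.Ioi (0:ℝ), f |x| := by
    have := (Measure.measurePreserving_neg (volume : Measure ℝ)).setLIntegral_comp_preimage_emb
      (MeasurableEquiv.neg ℝ).measurableEmbedding (fun x => f |x|) (Set.Ioi 0)
    simp only [abs_neg] at this
    rw [← this]
    congr 2
    ext; simp
  rw [← lintegral_add_compl _ (measurableSet_Ioi (a := (0:ℝ))), Set.compl_Ioi,
    setLIntegral_congr Iio_ae_eq_Iic.symm, h2, h1, two_mul]

theorem lintegral_cnorm (f : ℝ → ℝ≥0∞) (hf : Measurable f) :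
    ∫⁻ z : ℂ, f ‖z‖ = ENNReal.ofReal (2 * Real.pi) * ∫⁻ r in Set.Ioi (0:ℝ), ENNReal.ofReal r * f r := by
  rw [← Complex.lintegral_comp_polarCoord_symm, _root_.polarCoord_target]
  have : ∀ p : ℝ × ℝ, p ∈ Set.Ioi (0:ℝ) ×ˢ Set.Ioo (-Real.pi) Real.pi →
      ENNReal.ofReal p.1 • f ‖Complex.polarCoord.symm p‖ = (ENNReal.ofReal p.1 * f p.1) * 1 := by
    intro p hp
    rw [Complex.norm_polarCoord_symm, abs_of_pos hp.1, smul_eq_mul, mul_one]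
  rw [setLIntegral_congr_fun (measurableSet_Ioi.prod measurableSet_Ioo) this,
    Measure.volume_eq_prod, ← Measure.prod_restrict,
    lintegral_prod_mul (f := fun r => ENNReal.ofReal r * f r) (g := fun _ => (1:ℝ≥0∞)) (by fun_prop) (by fun_prop), mul_comm]
  simp only [lintegral_const, MeasurableSet.univ, Measure.restrict_apply, Set.univ_inter, Real.volume_Ioo, one_mul]
  congr 2; ring

theorem sinh_le (x : ℝ) (hx : 0 ≤ x) : Real.sinh x ≤ x * Real.exp (x ^ 2 / 6) := by
  have h1 := Real.hasSum_sinh x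
  have h2 : HasSum (fun n : ℕ => x * ((x ^ 2 / 6) ^ n / n.factorial)) (x * Real.exp (x ^ 2 / 6)) := by
    apply HasSum.mul_left
    rw [Real.exp_eq_exp_ℝ]
    exact NormedSpace.expSeries_div_hasSum_exp (x ^ 2 / 6)
  refine hasSum_le (fun n => ?_) h1 h2
  have hf : 6 ^ n * n.factorial ≤ (2 * n + 1).factorial := by
    induction n with
    | zero => simp
    | succ k ih =>
      rw [show 2 * (k + 1) + 1 = (2 * k + 1) + 1 + 1 by ring, Nat.factorial_succ (2 * k + 1 + 1), Nat.factorial_succ (2 * k + 1),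
        Nat.factorial_succ k, pow_succ]
      calc 6 ^ k * 6 * ((k + 1) * k.factorial) = (6 * (k + 1)) * (6 ^ k * k.factorial) := by ring
        _ ≤ ((2 * k + 1 + 1 + 1) * (2 * k + 1 + 1)) * (2 * k + 1).factorial := by
          apply Nat.mul_le_mul _ ih
          nlinarith
        _ = _ := by ring
  have hf' : (6:ℝ) ^ n * n.factorial ≤ (2 * n + 1).factorial := by exact_mod_cast hf
  calc x ^ (2 * n + 1) / (2 * n + 1).factorial ≤ x ^ (2 * n + 1) / (6 ^ n * n.factorial) := by
        gcongr
    _ = _ := by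
      rw [div_pow, pow_succ, pow_mul]; field_simp

/-- the symmetric box indicator in one variable -/
noncomputable def bx (r : ℝ) : ℝ≥0∞ :=
  (Set.Icc (Real.exp (-0.65)) (Real.exp 0.65)).indicator 1 r

theorem measurable_bx : Measurable bx := measurable_one.indicator measurableSet_Icc

theorem lint_rpow_le (a : ℝ) :
    ∫⁻ r in Set.Ioi (0:ℝ), bx r * ENNReal.ofReal (r ^ (a - 1)) ≤
      ENNReal.ofReal (1.3 * Real.exp ((a * 0.65) ^ 2 / 6)) ∧
    (a = 0 → ∫⁻ r in Set.Ioi (0:ℝ), bx r * ENNReal.ofReal (r ^ (a - 1)) = ENNReal.ofReal 1.3) := by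
  have hlt : Real.exp (-0.65) ≤ Real.exp 0.65 := Real.exp_le_exp.2 (by norm_num)
  have e0 := Real.exp_pos (-0.65)
  have h1 : ∫⁻ r in Set.Ioi (0:ℝ), bx r * ENNReal.ofReal (r ^ (a - 1)) =
      ENNReal.ofReal (∫ r in Real.exp (-0.65)..Real.exp 0.65, r ^ (a - 1)) := by
    have hsub : Set.Icc (Real.exp (-0.65)) (Real.exp 0.65) ⊆ Set.Ioi 0 := fun x hx => e0.trans_le hx.1
    have : ∀ r : ℝ, bx r * ENNReal.ofReal (r ^ (a - 1)) =
        (Set.Icc (Real.exp (-0.65)) (Real.exp 0.65)).indicator (fun r => ENNReal.ofReal (r ^ (a - 1))) r := by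
      intro r; unfold bx
      by_cases hr : r ∈ Set.Icc (Real.exp (-0.65)) (Real.exp 0.65) <;> simp [hr]
    simp_rw [this]
    rw [lintegral_indicator measurableSet_Icc, Measure.restrict_restrict measurableSet_Icc,
      Set.inter_eq_left.2 hsub, intervalIntegral.integral_of_le hlt, ← integral_Icc_eq_integral_Ioc,
      ofReal_integral_eq_lintegral_ofReal]
    · apply ContinuousOn.integrableOn_Icc
      intro x hx
      exact (Real.continuousAt_rpow_const x _ (Or.inl (hsub hx).ne')).continuousWithinAt
    · filter_upwards [ae_restrict_mem measurableSet_Icc] with x hx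
      exact Real.rpow_nonneg (hsub hx).le _
  rw [h1]
  have h0 : (0:ℝ) ∉ Set.uIcc (Real.exp (-0.65)) (Real.exp 0.65) := by
    rw [Set.uIcc_of_le hlt]; exact fun h => absurd h.1 (not_le.2 e0)
  by_cases ha : a = 0
  · subst ha
    have : ∫ r in Real.exp (-0.65)..Real.exp 0.65, r ^ ((0:ℝ) - 1) = 1.3 := by
      simp_rw [zero_sub, Real.rpow_neg_one]
      rw [integral_inv h0, ← Real.exp_sub, Real.log_exp]; norm_num
    rw [this]
    simp
  · refine ⟨?_, fun h => absurd h ha⟩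
    apply ENNReal.ofReal_le_ofReal
    rw [integral_rpow (Or.inr ⟨by contrapose! ha; linarith, h0⟩), sub_add_cancel, ← Real.exp_mul, ← Real.exp_mul]
    have hs : ∀ b : ℝ, 0 < b → (Real.exp (0.65 * b) - Real.exp (-0.65 * b)) / b ≤ 1.3 * Real.exp ((b * 0.65) ^ 2 / 6) := by
      intro b hb
      have := sinh_le (0.65 * b) (by positivity)
      rw [div_le_iff₀ hb]
      rw [Real.sinh_eq, mul_comm 0.65 b] at this
      rw [mul_comm 0.65 b, show -0.65 * b = -(b * 0.65) by ring]
      linarith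
    rcases lt_or_gt_of_ne ha with h | h
    · have := hs (-a) (by linarith)
      convert this using 1
      · rw [div_neg, ← neg_div]; ring_nf
      · ring_nf
    · exact hs a h

end KB


namespace KB
open MeasureTheory NumberField NumberField.mixedEmbedding NumberField.mixedEmbedding.fundamentalCone
open NumberField.InfinitePlace NumberField.Units Module
open scoped ENNReal Classical Pointwise


variable {K : Type*} [Field K] [NumberField K]

theorem lint_cosh_le (τ : ℝ) (hτ : 0 < τ) :
    ∫⁻ t in Set.Ioi (0:ℝ), ENNReal.ofReal ((Real.cosh 1 - Real.cosh (τ * Real.log t)) / t) ≤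
      ENNReal.ofReal (2 / τ * Real.exp (-1)) := by
  have hlt : Real.exp (-(1/τ)) ≤ Real.exp (1/τ) := Real.exp_le_exp.2 (by
    have : 0 < 1 / τ := by positivity
    linarith)
  have e0 := Real.exp_pos (-(1/τ))
  set S := Set.Icc (Real.exp (-(1/τ))) (Real.exp (1/τ)) with hS
  have hsub : S ⊆ Set.Ioi 0 := fun x hx => e0.trans_le hx.1
  have hout : ∀ t ∈ Set.Ioi (0:ℝ), t ∉ S →
      ENNReal.ofReal ((Real.cosh 1 - Real.cosh (τ * Real.log t)) / t) = 0 := by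
    intro t ht hn
    rw [ENNReal.ofReal_eq_zero]
    apply div_nonpos_of_nonpos_of_nonneg _ (Set.mem_Ioi.1 ht).le
    rw [sub_nonpos, Real.cosh_le_cosh, abs_one]
    by_contra! h
    rw [abs_lt] at h
    apply hn
    have hlog := Real.exp_log ht
    constructor
    · rw [← hlog, Real.exp_le_exp, ← neg_div, div_le_iff₀ hτ]; linarith
    · rw [← hlog, Real.exp_le_exp, le_div_iff₀ hτ]; linarith
  have hin : ∀ t ∈ S, 0 ≤ (Real.cosh 1 - Real.cosh (τ * Real.log t)) / t := by
    intro t ht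
    have h0 : 0 < t := hsub ht
    apply div_nonneg _ h0.le
    rw [sub_nonneg, Real.cosh_le_cosh, abs_one, abs_le]
    have h1 := (Real.le_log_iff_exp_le h0).2 ht.1
    have h2 := (Real.log_le_iff_le_exp h0).2 ht.2
    rw [← neg_div, div_le_iff₀ hτ] at h1
    rw [le_div_iff₀ hτ] at h2
    constructor <;> linarith
  have hcont : ContinuousOn (fun t => (Real.cosh 1 - Real.cosh (τ * Real.log t)) / t) S := by
    apply ContinuousOn.div _ continuousOn_id (fun x hx => (hsub hx).ne')
    apply ContinuousOn.sub continuousOn_const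
    apply Real.continuous_cosh.comp_continuousOn
    apply ContinuousOn.mul continuousOn_const
    exact Real.continuousOn_log.mono fun x hx => (hsub hx).ne'
  calc _ = ∫⁻ t in S, ENNReal.ofReal ((Real.cosh 1 - Real.cosh (τ * Real.log t)) / t) := by
        symm
        rw [← lintegral_indicator measurableSet_Ioi, ← lintegral_indicator measurableSet_Icc]
        congr 1
        ext t
        by_cases h1 : t ∈ S
        · rw [Set.indicator_of_mem h1, Set.indicator_of_mem (hsub h1)]
        · rw [Set.indicator_of_notMem h1]
          by_cases h2 : t ∈ Set.Ioi (0:ℝ)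
          · rw [Set.indicator_of_mem h2, hout t h2 h1]
          · rw [Set.indicator_of_notMem h2]
    _ = ENNReal.ofReal (∫ t in Real.exp (-(1/τ))..Real.exp (1/τ), (Real.cosh 1 - Real.cosh (τ * Real.log t)) / t) := by
        rw [intervalIntegral.integral_of_le hlt, ← integral_Icc_eq_integral_Ioc,
          ofReal_integral_eq_lintegral_ofReal]
        · exact hcont.integrableOn_Icc
        · filter_upwards [ae_restrict_mem measurableSet_Icc] with x hx
          exact hin x hx
    _ ≤ _ := by
        apply le_of_eq
        congr 1
        rw [intervalIntegral.integral_eq_sub_of_hasDerivAt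
          (f := fun t => Real.cosh 1 * Real.log t - Real.sinh (τ * Real.log t) / τ)]
        · simp only [Real.log_exp]
          rw [mul_neg τ, mul_one_div_cancel hτ.ne', Real.sinh_neg, ← Real.cosh_sub_sinh]
          field_simp
          ring
        · intro t ht
          rw [Set.uIcc_of_le hlt] at ht
          have h0 : t ≠ 0 := (hsub ht).ne'
          have h1 := Real.hasDerivAt_log h0
          have h2 := (h1.const_mul (Real.cosh 1)).sub (((h1.const_mul τ).sinh).div_const τ)
          have h3 : (Real.cosh 1 - Real.cosh (τ * Real.log t)) / t =
              Real.cosh 1 * t⁻¹ - Real.cosh (τ * Real.log t) * (τ * t⁻¹) / τ := by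
            field_simp
          rw [h3]; exact h2
        · apply ContinuousOn.intervalIntegrable
          rw [Set.uIcc_of_le hlt]; exact hcont

/-- box indicator on the mixed space -/
noncomputable def Bx (x : mixedSpace K) : ℝ≥0∞ := (∏ i, bx |x.1 i|) * ∏ i, bx ‖x.2 i‖

theorem measurable_Bx : Measurable (Bx (K := K)) := by
  unfold Bx
  have := measurable_bx
  fun_prop

theorem lint_box_eq (a : ℝ) :
    ∫⁻ x : mixedSpace K, Bx x * ENNReal.ofReal (mixedEmbedding.norm x ^ (a - 1)) =
      (2 * ∫⁻ r in Set.Ioi (0:ℝ), bx r * ENNReal.ofReal (r ^ (a - 1))) ^ nrRealPlaces K *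
      (ENNReal.ofReal (2 * Real.pi) * ∫⁻ r in Set.Ioi (0:ℝ), bx r * ENNReal.ofReal (r ^ (2 * a - 1))) ^ nrComplexPlaces K := by
  have hm := measurable_bx
  have h1 : ∀ x : mixedSpace K, Bx x * ENNReal.ofReal (mixedEmbedding.norm x ^ (a - 1)) =
      (∏ i, (bx |x.1 i| * ENNReal.ofReal (|x.1 i| ^ (a - 1)))) *
        ∏ i, (bx ‖x.2 i‖ * ENNReal.ofReal ((‖x.2 i‖ ^ 2) ^ (a - 1))) := by
    intro x
    rw [norm_eq_prod, Real.mul_rpow (Finset.prod_nonneg fun i _ => abs_nonneg _)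
      (Finset.prod_nonneg fun i _ => by positivity),
      ← Real.finsetProd_rpow _ _ (fun i _ => abs_nonneg _),
      ← Real.finsetProd_rpow _ _ (fun i _ => by positivity),
      ENNReal.ofReal_mul (Finset.prod_nonneg fun i _ => by positivity),
      ENNReal.ofReal_prod_of_nonneg (fun i _ => by positivity),
      ENNReal.ofReal_prod_of_nonneg (fun i _ => by positivity),
      Finset.prod_mul_distrib, Finset.prod_mul_distrib]
    unfold Bx; ring
  simp_rw [h1]
  rw [lintegral_mixed_prod K (fun _ y => bx |y| * ENNReal.ofReal (|y| ^ (a - 1)))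
    (fun _ z => bx ‖z‖ * ENNReal.ofReal ((‖z‖ ^ 2) ^ (a - 1))) (fun _ => by fun_prop) (fun _ => by fun_prop)]
  rw [Finset.prod_const, Finset.prod_const, Finset.card_univ, Finset.card_univ,
    lintegral_abs (fun y => bx y * ENNReal.ofReal (y ^ (a - 1))),
    lintegral_cnorm (fun y => bx y * ENNReal.ofReal ((y ^ 2) ^ (a - 1))) (by fun_prop)]
  congr 3
  refine setLIntegral_congr_fun measurableSet_Ioi fun r hr => ?_
  have hr0 : 0 < r := hr
  rw [mul_left_comm, ← ENNReal.ofReal_mul hr0.le]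
  congr 2
  rw [← Real.rpow_natCast r 2, ← Real.rpow_mul hr0.le]
  nth_rw 1 [← Real.rpow_one r]
  rw [← Real.rpow_add hr0]; congr 1; push_cast; ring

theorem lint_box_le (a : ℝ) :
    ∫⁻ x : mixedSpace K, Bx x * ENNReal.ofReal (mixedEmbedding.norm x ^ (a - 1)) ≤
      ENNReal.ofReal (2.6 ^ nrRealPlaces K * (2.6 * Real.pi) ^ nrComplexPlaces K *
        Real.exp ((a * 0.65) ^ 2 * (nrRealPlaces K + 4 * nrComplexPlaces K) / 6)) := by
  rw [lint_box_eq]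
  refine (mul_le_mul' (pow_le_pow_left' (mul_le_mul_right (lint_rpow_le a).1 _) _)
    (pow_le_pow_left' (mul_le_mul_right (lint_rpow_le (2 * a)).1 _) _)).trans (le_of_eq ?_)
  rw [← ENNReal.ofReal_ofNat, ← ENNReal.ofReal_mul (by norm_num), ← ENNReal.ofReal_mul (by positivity),
    ← ENNReal.ofReal_pow (by positivity), ← ENNReal.ofReal_pow (by positivity), ← ENNReal.ofReal_mul (by positivity)]
  congr 1
  rw [show (a * 0.65) ^ 2 * (nrRealPlaces K + 4 * nrComplexPlaces K) / 6 =
    nrRealPlaces K * ((a * 0.65) ^ 2 / 6) + nrComplexPlaces K * ((2 * a * 0.65) ^ 2 / 6) by ring,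
    Real.exp_add, Real.exp_nat_mul, Real.exp_nat_mul, mul_mul_mul_comm (2.6 ^ _), ← mul_pow, ← mul_pow]
  congr 2
  · ring
  · ring

theorem lint_box_zero :
    ∫⁻ x : mixedSpace K, Bx x * ENNReal.ofReal (mixedEmbedding.norm x ^ ((0:ℝ) - 1)) =
      ENNReal.ofReal (2.6 ^ nrRealPlaces K * (2.6 * Real.pi) ^ nrComplexPlaces K) := by
  rw [lint_box_eq, (lint_rpow_le 0).2 rfl, (lint_rpow_le (2 * 0)).2 (by ring),
   ← ENNReal.ofReal_ofNat, ← ENNReal.ofReal_mul (by norm_num), ← ENNReal.ofReal_mul (by positivity),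
    ← ENNReal.ofReal_pow (by positivity), ← ENNReal.ofReal_pow (by positivity), ← ENNReal.ofReal_mul (by positivity)]
  congr 3
  · norm_num
  · ring

end KB


namespace KB
open MeasureTheory NumberField NumberField.mixedEmbedding NumberField.mixedEmbedding.fundamentalCone
open NumberField.InfinitePlace NumberField.Units Module
open scoped ENNReal Classical Pointwise


variable {K : Type*} [Field K] [NumberField K]

theorem bx_le_one (r : ℝ) : bx r ≤ 1 := Set.indicator_le' (fun _ _ => le_rfl) (fun _ _ => zero_le_one) r

theorem Bx_le_one (x : mixedSpace K) : Bx x ≤ 1 := by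
  unfold Bx
  exact mul_le_one' (Finset.prod_le_one' fun i _ => bx_le_one _) (Finset.prod_le_one' fun i _ => bx_le_one _)

theorem bx_ne_zero {r : ℝ} (h : bx r ≠ 0) : |Real.log r| ≤ 0.65 := by
  have h1 := Set.mem_of_indicator_ne_zero h
  have h0 : 0 < r := (Real.exp_pos _).trans_le h1.1
  rw [abs_le]
  exact ⟨(Real.le_log_iff_exp_le h0).2 h1.1, (Real.log_le_iff_le_exp h0).2 h1.2⟩

theorem Bx_ne_zero {x : mixedSpace K} (h : Bx x ≠ 0) (w : InfinitePlace K) :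
    |Real.log (normAtPlace w x)| ≤ 0.65 := by
  unfold Bx at h
  obtain ⟨h1, h2⟩ := mul_ne_zero_iff.1 h
  rw [Finset.prod_ne_zero_iff] at h1 h2
  by_cases hw : IsReal w
  · rw [normAtPlace_apply_of_isReal hw]
    exact bx_ne_zero (h1 ⟨w, hw⟩ (Finset.mem_univ _))
  · rw [not_isReal_iff_isComplex] at hw
    rw [normAtPlace_apply_of_isComplex hw]
    exact bx_ne_zero (h2 ⟨w, hw⟩ (Finset.mem_univ _))

theorem tsum_Bx_le (y : mixedSpace K) (hy : mixedEmbedding.norm y ≠ 0) :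
    ∑' u : (𝓞 K)ˣ, Bx (u • y) ≤ 2 ^ (finrank ℚ K + 1) := by
  rw [ENNReal.tsum_eq_iSup_sum]
  refine iSup_le fun s => ?_
  rw [← Finset.sum_filter_ne_zero]
  refine (Finset.sum_le_card_nsmul _ _ 1 fun u _ => Bx_le_one _).trans ?_
  rw [nsmul_eq_mul, mul_one]
  have ht : ∀ w : InfinitePlace K, 0 < normAtPlace w y := fun w =>
    lt_of_le_of_ne (normAtPlace_nonneg w y) (Ne.symm (mixedEmbedding.norm_ne_zero_iff.1 hy w))
  have := card_le (fun w => normAtPlace w y) ht (s.filter fun u : (𝓞 K)ˣ => Bx (u • y) ≠ 0) (by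
    intro u hu w
    have := Bx_ne_zero (Finset.mem_filter.1 hu).2 w
    rw [unitSMul_smul, map_mul, normAtPlace_apply, mul_comm] at this
    exact this)
  exact_mod_cast this

theorem regulator_aux (τ : ℝ) (hτ : 0 < τ)
    (hq : (τ * 0.65) ^ 2 * (nrRealPlaces K + 4 * nrComplexPlaces K) = 1) :
    (torsionOrder K : ℝ) * ((Real.cosh 1 - Real.exp (1 / 6)) *
      (2.6 ^ nrRealPlaces K * (2.6 * Real.pi) ^ nrComplexPlaces K)) ≤
    2 ^ (finrank ℚ K + 1) * ((2 ^ nrRealPlaces K * Real.pi ^ nrComplexPlaces K * regulator K) *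
      (2 / τ * Real.exp (-1))) := by
  set k : ℝ → ℝ≥0∞ := fun t => ENNReal.ofReal ((Real.cosh 1 - Real.cosh (τ * Real.log t)) / t) with hk
  have hkm : Measurable k := by
    have := Real.continuous_cosh.measurable
    fun_prop
  set I0 : ℝ := 2.6 ^ nrRealPlaces K * (2.6 * Real.pi) ^ nrComplexPlaces K with hI0
  have hI0' : 0 < I0 := by positivity
  have hB := measurable_Bx (K := K)
  have hN := measurable_mnorm (K := K)
  -- upper bound
  have hup : (torsionOrder K : ℝ≥0∞) * ∫⁻ y : mixedSpace K, Bx y * k (mixedEmbedding.norm y) ≤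
      2 ^ (finrank ℚ K + 1) * (volume (normLeOne K) * ENNReal.ofReal (2 / τ * Real.exp (-1))) := by
    rw [unfold_vol (fun y => Bx y * k (mixedEmbedding.norm y)) (hB.mul (hkm.comp hN))]
    calc _ ≤ ∫⁻ y in fundamentalCone K, 2 ^ (finrank ℚ K + 1) * k (mixedEmbedding.norm y) := by
          apply lintegral_mono_ae
          filter_upwards [ae_restrict_of_ae ae_norm_ne_zero] with y hy
          simp_rw [norm_unit_smul]
          rw [ENNReal.tsum_mul_right]
          gcongr
          exact tsum_Bx_le y hy
      _ = 2 ^ (finrank ℚ K + 1) * (volume (normLeOne K) * ∫⁻ t in Set.Ioi (0:ℝ), k t) := by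
          rw [lintegral_const_mul _ (by fun_prop), lintegral_cone_norm k hkm]
      _ ≤ _ := by gcongr; exact lint_cosh_le τ hτ
  -- lower bound
  have hlow : ENNReal.ofReal (Real.cosh 1 * I0) ≤
      (∫⁻ y : mixedSpace K, Bx y * k (mixedEmbedding.norm y)) + ENNReal.ofReal (I0 * Real.exp (1 / 6)) := by
    have e1 := lint_box_le (K := K) τ
    have e2 := lint_box_le (K := K) (-τ)
    rw [hq] at e1
    rw [show (-τ * 0.65) ^ 2 = (τ * 0.65) ^ 2 by ring, hq] at e2
    rw [ENNReal.ofReal_mul (Real.cosh_pos 1).le, hI0, ← lint_box_zero, ← hI0,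
      ← lintegral_const_mul _ (by fun_prop)]
    have hh : ENNReal.ofReal (I0 * Real.exp (1 / 6)) =
      ENNReal.ofReal (1/2) * ENNReal.ofReal (I0 * Real.exp (1 / 6)) +
      ENNReal.ofReal (1/2) * ENNReal.ofReal (I0 * Real.exp (1 / 6)) := by
      rw [← add_mul, ← ENNReal.ofReal_add (by norm_num) (by norm_num)]; norm_num
    rw [hh]
    refine le_trans ?_ (add_le_add_right (add_le_add (mul_le_mul_right e1 _) (mul_le_mul_right e2 _)) _)
    rw [← lintegral_const_mul _ (by fun_prop), ← lintegral_const_mul _ (by fun_prop),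
      ← lintegral_add_left (by fun_prop), ← lintegral_add_left (by fun_prop)]
    apply lintegral_mono_ae
    filter_upwards [ae_norm_ne_zero] with y hy
    have hN0 : 0 < mixedEmbedding.norm y := lt_of_le_of_ne (mixedEmbedding.norm_nonneg y) (Ne.symm hy)
    set N := mixedEmbedding.norm y
    have hr : Real.cosh 1 * N ^ ((0:ℝ) - 1) = (Real.cosh 1 - Real.cosh (τ * Real.log N)) / N +
      (1 / 2 * N ^ (τ - 1) + 1 / 2 * N ^ (-τ - 1)) := by
      rw [Real.rpow_sub hN0, Real.rpow_sub hN0, Real.rpow_sub hN0, Real.rpow_one, Real.rpow_zero,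
        Real.rpow_def_of_pos hN0, Real.rpow_def_of_pos hN0, Real.cosh_eq (τ * Real.log N)]
      rw [show Real.log N * τ = τ * Real.log N by ring, show Real.log N * -τ = -(τ * Real.log N) by ring]
      ring
    calc _ = Bx y * ENNReal.ofReal (Real.cosh 1 * N ^ ((0:ℝ) - 1)) := by
          rw [ENNReal.ofReal_mul (Real.cosh_pos 1).le]; ring
      _ ≤ Bx y * (k N + (ENNReal.ofReal (1/2) * ENNReal.ofReal (N ^ (τ - 1)) +
            ENNReal.ofReal (1/2) * ENNReal.ofReal (N ^ (-τ - 1)))) := by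
          gcongr
          rw [hr, ← ENNReal.ofReal_mul (by norm_num), ← ENNReal.ofReal_mul (by norm_num)]
          exact ENNReal.ofReal_add_le.trans (add_le_add_right ENNReal.ofReal_add_le _)
      _ = _ := by ring
  have hV : volume (normLeOne K) = ENNReal.ofReal (2 ^ nrRealPlaces K * Real.pi ^ nrComplexPlaces K * regulator K) := by
    rw [volume_normLeOne, ENNReal.ofReal_mul (by positivity), ENNReal.ofReal_mul (by positivity),
      ENNReal.ofReal_pow (by norm_num), ENNReal.ofReal_pow Real.pi_pos.le, ENNReal.ofReal_ofNat]
    congr 3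
    rw [← NNReal.coe_real_pi, ENNReal.ofReal_coe_nnreal]
  have hw : (torsionOrder K : ℝ≥0∞) = ENNReal.ofReal (torsionOrder K : ℝ) := by simp
  have hR := regulator_pos K
  have h2 : ENNReal.ofReal ((Real.cosh 1 - Real.exp (1 / 6)) * I0) ≤
      ∫⁻ y : mixedSpace K, Bx y * k (mixedEmbedding.norm y) := by
    rw [sub_mul, ENNReal.ofReal_sub _ (by positivity), mul_comm (Real.exp _)]
    exact tsub_le_iff_right.2 hlow
  have h3 := (mul_le_mul_right h2 (torsionOrder K : ℝ≥0∞)).trans hup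
  rw [hV, ← ENNReal.ofReal_mul (by positivity), hw, ← ENNReal.ofReal_mul (by positivity),
    ← ENNReal.ofReal_ofNat, ← ENNReal.ofReal_pow (by norm_num), ← ENNReal.ofReal_mul (by positivity)] at h3
  exact (ENNReal.ofReal_le_ofReal_iff (by positivity)).1 h3

theorem num_aux (r s : ℕ) : (r + 4 * s : ℝ) ≤ 1.69 ^ r * 16 ^ s := by
  have h1 : (r : ℝ) ≤ 1.69 ^ r ∧ (1:ℝ) ≤ 1.69 ^ r := by
    refine ⟨?_, one_le_pow₀ (by norm_num)⟩
    rcases r with _ | _ | k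
    · norm_num
    · norm_num
    · induction k with
      | zero => norm_num
      | succ k ih =>
        rw [pow_succ]; push_cast at ih ⊢
        nlinarith [(Nat.cast_nonneg k : (0:ℝ) ≤ k)]
  have h2 : (1 + 15 * s : ℝ) ≤ 16 ^ s := by
    have := one_add_mul_le_pow (a := (15:ℝ)) (by norm_num) s
    norm_num at this; linarith
  have h3 : (1.69 ^ r : ℝ) * (1 + 15 * s) ≤ 1.69 ^ r * 16 ^ s := by gcongr
  nlinarith [(Nat.cast_nonneg s : (0:ℝ) ≤ s)]

set_option maxHeartbeats 1000000 in
theorem lower_bound : 0.36232 ≤ 2 ^ nrRealPlaces K * (2 * Real.pi) ^ nrComplexPlaces K * classNumber K *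
    regulator K / torsionOrder K := by
  set r := nrRealPlaces K with hr
  set s := nrComplexPlaces K with hs
  have hn : r + 2 * s = finrank ℚ K := card_add_two_mul_card_eq_rank K
  have hn0 : 0 < finrank ℚ K := finrank_pos
  have hq : (0:ℝ) < r + 4 * s := by
    have : 0 < r + 4 * s := by omega
    exact_mod_cast this
  set Q := Real.sqrt (r + 4 * s) with hQ
  have hQ0 : 0 < Q := Real.sqrt_pos.2 hq
  have hQ2 : Q ^ 2 = r + 4 * s := Real.sq_sqrt hq.le
  have hmain := regulator_aux (K := K) (1 / (0.65 * Q)) (by positivity) (by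
    rw [← hr, ← hs, ← hQ2]; field_simp)
  rw [← hr, ← hs, ← hn] at hmain
  have hR := regulator_pos K
  have hw : (0:ℝ) < torsionOrder K := by
    have := torsionOrder_pos K
    exact_mod_cast this
  have hh : (1:ℝ) ≤ classNumber K := by
    have : 0 < classNumber K := Fintype.card_pos
    exact_mod_cast this
  have hc : 0.983 ≤ Real.exp 1 * (Real.cosh 1 - Real.exp (1 / 6)) := by
    have h1 := Real.exp_one_gt_d9
    have h2 := Real.exp_one_lt_d9
    have h3 : Real.exp (1 / 6) < 1.18137 := by
      have := Real.exp_bound' (x := 1 / 6) (by norm_num) (by norm_num) (n := 6) (by norm_num)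
      refine this.trans_lt ?_
      simp only [Finset.sum_range_succ, Finset.sum_range_zero, Nat.factorial]
      norm_num
    have h4 : Real.exp 1 * Real.exp (-1) = 1 := by rw [← Real.exp_add]; norm_num
    rw [Real.cosh_eq]
    nlinarith
  have hQle : Q ≤ 1.3 ^ r * (1.3 * Real.pi) ^ s := by
    apply Real.sqrt_le_iff.2 ⟨by positivity, ?_⟩
    have : (4:ℝ) ≤ 1.3 * Real.pi := by nlinarith [Real.pi_gt_d2]
    calc (r + 4 * s : ℝ) ≤ 1.69 ^ r * 16 ^ s := num_aux r s
      _ = (1.3 ^ r * 4 ^ s) ^ 2 := by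
        rw [mul_pow, ← pow_mul, ← pow_mul, mul_comm r, mul_comm s, pow_mul, pow_mul]; norm_num
      _ ≤ _ := by gcongr
  rw [le_div_iff₀ hw]
  have hexp : Real.exp 1 * Real.exp (-1) = 1 := by rw [← Real.exp_add]; norm_num
  have h5 := mul_le_mul_of_nonneg_left hmain (Real.exp_pos 1).le
  set A := (1.3:ℝ) ^ r * (1.3 * Real.pi) ^ s with hA
  set P := (2:ℝ) ^ r * (2 * Real.pi) ^ s with hP
  have hA0 : 0 < A := by positivity
  have hP0 : 0 < P := by positivity
  have e1 : (2.6:ℝ) ^ r * (2.6 * Real.pi) ^ s = 2 ^ (r + s) * A := by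
    rw [hA, show (2.6:ℝ) = 2 * 1.3 by norm_num, pow_add, mul_assoc (2:ℝ), mul_pow, mul_pow (2:ℝ) (1.3 * Real.pi)]; ring
  have e2 : (2:ℝ) ^ (r + 2 * s + 1) * (2 ^ r * Real.pi ^ s) = 2 * 2 ^ (r + s) * P := by
    rw [hP, mul_pow 2 Real.pi]; ring
  rw [e1] at h5
  have h6 : Real.exp 1 * (2 ^ (r + 2 * s + 1) * (2 ^ r * Real.pi ^ s * regulator K *
      (2 / (1 / (0.65 * Q)) * Real.exp (-1)))) = 2 ^ (r + s) * (2.6 * P * regulator K * Q) := by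
    calc _ = (2 ^ (r + 2 * s + 1) * (2 ^ r * Real.pi ^ s)) * (regulator K * (2 / (1 / (0.65 * Q))) * (Real.exp 1 * Real.exp (-1))) := by ring
      _ = _ := by
        rw [e2, hexp, div_div_eq_mul_div]; ring
  rw [h6] at h5
  have h7 : 2 ^ (r + s) * (torsionOrder K * (0.983 * A)) ≤ 2 ^ (r + s) * (2.6 * P * regulator K * Q) := by
    refine le_trans ?_ h5
    calc _ ≤ 2 ^ (r + s) * (torsionOrder K * ((Real.exp 1 * (Real.cosh 1 - Real.exp (1 / 6))) * A)) := by gcongr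
      _ = _ := by ring
  have h8 := le_of_mul_le_mul_left h7 (by positivity)
  have h9 : torsionOrder K * (0.983 * Q) ≤ 2.6 * P * regulator K * Q := by
    refine le_trans ?_ h8
    gcongr
  have h10 : torsionOrder K * 0.983 ≤ 2.6 * P * regulator K := by
    apply le_of_mul_le_mul_right _ hQ0
    linarith
  have h11 : P * regulator K ≤ P * classNumber K * regulator K := by
    nlinarith [mul_pos hP0 hR]
  nlinarith

end KB


namespace KB
open MeasureTheory NumberField NumberField.mixedEmbedding NumberField.mixedEmbedding.fundamentalCone
open NumberField.InfinitePlace NumberField.Units Module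
open scoped ENNReal Classical Pointwise


variable {K : Type*} [Field K] [NumberField K]

theorem cs_sq {X : Type*} [MeasurableSpace X] (μ : Measure X) (f : X → ℝ≥0∞) (hf : Measurable f) :
    (∫⁻ x, f x ∂μ) ^ 2 ≤ μ Set.univ * ∫⁻ x, f x ^ 2 ∂μ := by
  have h := ENNReal.lintegral_mul_le_Lp_mul_Lq μ (Real.HolderConjugate.two_two) hf.aemeasurable
    (measurable_one (α := ℝ≥0∞) (β := X)).aemeasurable
  simp only [Pi.mul_apply, Pi.one_apply, mul_one, ENNReal.one_rpow, lintegral_const, one_mul] at h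
  calc (∫⁻ x, f x ∂μ) ^ 2 ≤ ((∫⁻ x, f x ^ (2:ℝ) ∂μ) ^ (1 / (2:ℝ)) * (μ Set.univ) ^ (1 / (2:ℝ))) ^ 2 := by gcongr
    _ = _ := by
      rw [← ENNReal.rpow_natCast, ENNReal.mul_rpow_of_nonneg _ _ (by norm_num), ← ENNReal.rpow_mul, ← ENNReal.rpow_mul]
      norm_num [mul_comm]

theorem lattice_ineq (L : Submodule ℤ (mixedSpace K)) [Countable L] (D : Set (mixedSpace K))
    (hD : IsAddFundamentalDomain L D volume) (φ : mixedSpace K → ℝ≥0∞) (hφ : Measurable φ) :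
    (∫⁻ x, φ x) ^ 2 ≤ volume D * ∑' l : L, ∫⁻ x, φ x * φ (l + x) := by
  have : VAddInvariantMeasure L (mixedSpace K) volume :=
    ⟨fun c s _ => measure_preimage_add volume (c : mixedSpace K) s⟩
  set Φ : mixedSpace K → ℝ≥0∞ := fun x => ∑' l : L, φ (l + x) with hΦ
  have hΦm : Measurable Φ := Measurable.tsum fun l => by fun_prop
  have hinv : ∀ (l : L) x, Φ (l + x) = Φ x := by
    intro l x
    rw [hΦ]; simp only
    rw [← (Equiv.addRight l).tsum_eq (fun m : L => φ (m + x))]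
    refine tsum_congr fun m => ?_
    simp [add_assoc]
  have h1 : ∫⁻ x, φ x = ∫⁻ x in D, Φ x := by
    rw [hD.lintegral_eq_tsum'', hΦ, lintegral_tsum fun l => by fun_prop]
    rfl
  have h2 : ∫⁻ x in D, Φ x ^ 2 = ∫⁻ x, φ x * Φ x := by
    rw [hD.lintegral_eq_tsum'', ← lintegral_tsum fun l => ?_]
    · refine lintegral_congr fun x => ?_
      have : ∀ l : L, φ (l +ᵥ x) * Φ (l +ᵥ x) = φ (l + x) * Φ x := fun l => by
        have := hinv l x
        rw [← this]; rfl
      simp_rw [this]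
      rw [ENNReal.tsum_mul_right, sq]
    · have : Measurable fun x : mixedSpace K => φ ((l : mixedSpace K) + x) * Φ (l + x) := by fun_prop
      exact this.aemeasurable
  have h3 : ∫⁻ x, φ x * Φ x = ∑' l : L, ∫⁻ x, φ x * φ (l + x) := by
    rw [← lintegral_tsum fun l => by fun_prop]
    refine lintegral_congr fun x => ?_
    rw [hΦ, ENNReal.tsum_mul_left]
  rw [h1, ← h3, ← h2]
  refine (cs_sq _ Φ hΦm).trans ?_
  rw [Measure.restrict_apply_univ]

theorem lint_gamma (b s : ℝ) (hb : 0 < b) (hs : 0 < s) :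
    ∫⁻ r in Set.Ioi (0:ℝ), ENNReal.ofReal (r ^ (2 * s - 1) * Real.exp (-b * r ^ 2)) =
      ENNReal.ofReal (b ^ (-s) * Real.Gamma s / 2) := by
  have h1 := integral_rpow_mul_exp_neg_mul_rpow (p := 2) (q := 2 * s - 1) (b := b) (by norm_num) (by linarith) hb
  have h2 := integrableOn_rpow_mul_exp_neg_mul_rpow (p := 2) (s := 2 * s - 1) (b := b) (by linarith) (by norm_num) hb
  simp only [Real.rpow_two] at h1 h2
  rw [← ofReal_integral_eq_lintegral_ofReal h2, h1]
  · congr 1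
    rw [show (2 * s - 1 + 1) / 2 = s by ring, show -(2 * s - 1 + 1) / 2 = -s by ring]; ring
  · filter_upwards [ae_restrict_mem measurableSet_Ioi] with x hx
    have : 0 < x := hx
    positivity

theorem lint_gauss (b : ℝ) (hb : 0 < b) :
    ∫⁻ z : ℂ, ENNReal.ofReal (Real.exp (-b * ‖z‖ ^ 2)) = ENNReal.ofReal (Real.pi / b) := by
  rw [lintegral_cnorm (fun r => ENNReal.ofReal (Real.exp (-b * r ^ 2))) (by fun_prop)]
  have := lint_gamma b 1 hb one_pos
  have h : ∫⁻ r in Set.Ioi (0:ℝ), ENNReal.ofReal r * ENNReal.ofReal (Real.exp (-b * r ^ 2)) =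
      ∫⁻ r in Set.Ioi (0:ℝ), ENNReal.ofReal (r ^ (2 * (1:ℝ) - 1) * Real.exp (-b * r ^ 2)) := by
    refine setLIntegral_congr_fun measurableSet_Ioi fun r hr => ?_
    have hr0 : 0 < r := hr
    rw [← ENNReal.ofReal_mul hr0.le]; norm_num
  rw [h, this, ← ENNReal.ofReal_mul (by positivity), Real.Gamma_one, Real.rpow_neg_one]
  congr 1; field_simp

/-- test functions -/
noncomputable def ph1 (x : ℝ) : ℝ≥0∞ := (Set.Icc (-(1/2) : ℝ) (1/2)).indicator 1 x
noncomputable def ph2 (z : ℂ) : ℝ≥0∞ := ENNReal.ofReal (Real.exp (-(4 * Real.pi) * ‖z‖ ^ 2))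

theorem meas_ph1 : Measurable ph1 := measurable_one.indicator measurableSet_Icc
theorem meas_ph2 : Measurable ph2 := by unfold ph2; fun_prop

theorem int_ph1 : ∫⁻ x, ph1 x = 1 := by
  unfold ph1
  rw [lintegral_indicator_one measurableSet_Icc, Real.volume_Icc]; norm_num

theorem int_ph2 : ∫⁻ x, ph2 x = ENNReal.ofReal (1 / 4) := by
  unfold ph2
  rw [lint_gauss _ (by positivity)]
  congr 1
  have := Real.pi_pos
  field_simp

theorem auto_ph1 (v : ℝ) : ∫⁻ x, ph1 x * ph1 (v + x) ≤ ENNReal.ofReal (1 - |v|) := by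
  have : ∀ x, ph1 x * ph1 (v + x) =
      (Set.Icc (-(1/2) : ℝ) (1/2) ∩ Set.Icc (-(1/2) - v) (1/2 - v)).indicator 1 x := by
    intro x
    have h : v + x ∈ Set.Icc (-(1/2) : ℝ) (1/2) ↔ x ∈ Set.Icc (-(1/2) - v) (1/2 - v) := by
      simp only [Set.mem_Icc]; constructor <;> rintro ⟨h1, h2⟩ <;> constructor <;> linarith
    unfold ph1
    simp only [Set.indicator_apply, Set.mem_inter_iff, h, Pi.one_apply]
    by_cases h1 : x ∈ Set.Icc (-(1/2) : ℝ) (1/2) <;> by_cases h2 : x ∈ Set.Icc (-(1/2) - v) (1/2 - v) <;>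
      simp only [h1, h2, if_true, if_false, and_true, and_false, and_self, mul_one, mul_zero]
  simp_rw [this]
  rw [lintegral_indicator_one (measurableSet_Icc.inter measurableSet_Icc), Set.Icc_inter_Icc, Real.volume_Icc]
  apply ENNReal.ofReal_le_ofReal
  rcases le_total 0 v with h | h
  · rw [abs_of_nonneg h]
    have h1 := min_le_right (1/2 : ℝ) (1/2 - v)
    have h2 := le_max_left (-(1/2) : ℝ) (-(1/2) - v)
    linarith [h1, h2]
  · rw [abs_of_nonpos h]
    have h1 := min_le_left (1/2 : ℝ) (1/2 - v)
    have h2 := le_max_right (-(1/2) : ℝ) (-(1/2) - v)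
    linarith [h1, h2]

theorem auto_ph2 (v : ℂ) : ∫⁻ x, ph2 x * ph2 (v + x) =
    ENNReal.ofReal (1 / 8) * ENNReal.ofReal (Real.exp (-(2 * Real.pi) * ‖v‖ ^ 2)) := by
  have h1 : ∀ x, ph2 x * ph2 (v + x) = ENNReal.ofReal (Real.exp (-(2 * Real.pi) * ‖v‖ ^ 2)) *
      ENNReal.ofReal (Real.exp (-(8 * Real.pi) * ‖x + v / 2‖ ^ 2)) := by
    intro x
    unfold ph2
    rw [← ENNReal.ofReal_mul (Real.exp_pos _).le, ← ENNReal.ofReal_mul (Real.exp_pos _).le, ← Real.exp_add, ← Real.exp_add]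
    congr 2
    have := parallelogram_law_with_norm ℝ (x + v / 2) (v / 2)
    rw [show x + v / 2 + v / 2 = v + x by ring, show x + v / 2 - v / 2 = x by ring, norm_div] at this
    simp only [Complex.norm_ofNat] at this
    linear_combination (-(4 * Real.pi)) * this
  simp_rw [h1]
  rw [lintegral_const_mul _ (by fun_prop),
    lintegral_add_right_eq_self (fun x : ℂ => ENNReal.ofReal (Real.exp (-(8 * Real.pi) * ‖x‖ ^ 2))),
    lint_gauss _ (by positivity), mul_comm]
  congr 2
  have := Real.pi_pos
  field_simp

end KB


namespace KB
open MeasureTheory NumberField NumberField.mixedEmbedding NumberField.mixedEmbedding.fundamentalCone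
open NumberField.InfinitePlace NumberField.Units Module
open scoped ENNReal Classical Pointwise


variable {K : Type*} [Field K] [NumberField K]
open nonZeroDivisors

noncomputable def ph (x : mixedSpace K) : ℝ≥0∞ := (∏ i, ph1 (x.1 i)) * ∏ i, ph2 (x.2 i)

noncomputable def fp (v : mixedSpace K) : ℝ≥0∞ :=
  (∏ i, ENNReal.ofReal (1 - |v.1 i|)) * ∏ i, ENNReal.ofReal (Real.exp (-(2 * Real.pi) * ‖v.2 i‖ ^ 2))

theorem meas_ph : Measurable (ph (K := K)) := by
  have := meas_ph1
  have := meas_ph2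
  unfold ph; fun_prop

theorem meas_fp : Measurable (fp (K := K)) := by
  unfold fp; fun_prop

theorem fp_zero : fp (0 : mixedSpace K) = 1 := by simp [fp]

theorem int_ph : ∫⁻ x : mixedSpace K, ph x = ENNReal.ofReal (1 / 4) ^ nrComplexPlaces K := by
  unfold ph
  rw [lintegral_mixed_prod K (fun _ => ph1) (fun _ => ph2) (fun _ => meas_ph1) (fun _ => meas_ph2)]
  simp_rw [int_ph1, int_ph2]
  rw [Finset.prod_const_one, one_mul, Finset.prod_const, Finset.card_univ]

theorem auto_ph (v : mixedSpace K) : ∫⁻ x : mixedSpace K, ph x * ph (v + x) ≤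
    ENNReal.ofReal (1 / 8) ^ nrComplexPlaces K * fp v := by
  have h1 := meas_ph1
  have h2 := meas_ph2
  have : ∀ x : mixedSpace K, ph x * ph (v + x) = (∏ i, (ph1 (x.1 i) * ph1 (v.1 i + x.1 i))) *
      ∏ i, (ph2 (x.2 i) * ph2 (v.2 i + x.2 i)) := by
    intro x
    unfold ph
    rw [Finset.prod_mul_distrib, Finset.prod_mul_distrib]
    simp only [Prod.fst_add, Prod.snd_add, Pi.add_apply]
    ring
  simp_rw [this]
  rw [lintegral_mixed_prod K (fun i t => ph1 t * ph1 (v.1 i + t)) (fun i t => ph2 t * ph2 (v.2 i + t))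
    (fun i => by fun_prop) (fun i => by fun_prop)]
  simp_rw [auto_ph2]
  rw [Finset.prod_mul_distrib, Finset.prod_const, Finset.card_univ, fp, mul_left_comm]
  gcongr
  exact auto_ph1 _

theorem theta_ineq (J : (Ideal (𝓞 K))⁰) (y : mixedSpace K) (hy : mixedEmbedding.norm y ≠ 0) :
    ENNReal.ofReal (1 / (Ideal.absNorm (J : Ideal (𝓞 K)) * √|(discr K : ℝ)| * mixedEmbedding.norm y)) ≤
    ∑' l : idealLattice K (FractionalIdeal.mk0 K J), fp (y * (l : mixedSpace K)) := by
  have hN0 : 0 < mixedEmbedding.norm y := lt_of_le_of_ne (mixedEmbedding.norm_nonneg y) (Ne.symm hy)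
  set N := mixedEmbedding.norm y with hN
  set A : ℝ := (Ideal.absNorm (J : Ideal (𝓞 K)) : ℝ) with hA
  have hA0 : 0 < A := by
    rw [hA]; exact_mod_cast Nat.pos_of_ne_zero (Ideal.absNorm_ne_zero_of_nonZeroDivisors J)
  set Δ : ℝ := √|(discr K : ℝ)| with hΔ
  have hΔ0 : 0 < Δ := Real.sqrt_pos.2 (abs_pos.2 (by exact_mod_cast discr_ne_zero K))
  set D := ZSpan.fundamentalDomain (fractionalIdealLatticeBasis K (FractionalIdeal.mk0 K J)) with hD
  have hfd := fundamentalDomain_idealLattice K (FractionalIdeal.mk0 K J)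
  have hnorm : (FractionalIdeal.absNorm (FractionalIdeal.mk0 K J : FractionalIdeal (𝓞 K)⁰ K) : ℝ) = A := by
    rw [FractionalIdeal.coe_mk0, FractionalIdeal.coeIdeal_absNorm, Rat.cast_natCast]
  have hcov := covolume_idealLattice K (FractionalIdeal.mk0 K J)
  rw [ZLattice.covolume_eq_measure_fundamentalDomain _ _ hfd, measureReal_def, hnorm, ← hΔ] at hcov
  have hvol : volume D = ENNReal.ofReal (A * 2⁻¹ ^ nrComplexPlaces K * Δ) := by
    rw [← hcov, ENNReal.ofReal_toReal]
    intro h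
    rw [h] at hcov
    have : 0 < A * 2⁻¹ ^ nrComplexPlaces K * Δ := by positivity
    simp at hcov
    rcases hcov with h | h <;> linarith
  have hcount : Countable (idealLattice K (FractionalIdeal.mk0 K J)) := inferInstance
  have hph := meas_ph (K := K)
  have key := lattice_ineq (idealLattice K (FractionalIdeal.mk0 K J)) D hfd (fun x => ph (y * x)) (by fun_prop)
  rw [lintegral_mul_left y hy ph hph, int_ph, hvol] at key
  have h1 : ∀ l : mixedSpace K, ∫⁻ x : mixedSpace K, ph (y * x) * ph (y * (l + x)) ≤
      ENNReal.ofReal N⁻¹ * (ENNReal.ofReal (1 / 8) ^ nrComplexPlaces K * fp (y * l)) := by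
    intro l
    have := lintegral_mul_left y hy (fun x => ph x * ph (y * l + x)) (by fun_prop)
    simp_rw [mul_add]
    rw [this]
    gcongr
    exact auto_ph _
  have h2 := key.trans (mul_le_mul_right (ENNReal.tsum_le_tsum
    fun l : idealLattice K (FractionalIdeal.mk0 K J) => h1 (l : mixedSpace K)) _)
  rw [ENNReal.tsum_mul_left, ENNReal.tsum_mul_left, ← hN] at h2
  set S := ∑' l : idealLattice K (FractionalIdeal.mk0 K J), fp (y * (l : mixedSpace K)) with hS
  set s := nrComplexPlaces K
  rw [← ENNReal.ofReal_pow (by norm_num), ← ENNReal.ofReal_mul (by positivity), ← ENNReal.ofReal_pow (by positivity),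
    ← ENNReal.ofReal_pow (by norm_num), ← mul_assoc, ← mul_assoc, ← ENNReal.ofReal_mul (by positivity),
    ← ENNReal.ofReal_mul (by positivity)] at h2
  set C := A * 2⁻¹ ^ s * Δ * N⁻¹ * (1 / 8) ^ s with hC
  have hC0 : 0 < C := by positivity
  have e : (N⁻¹ * (1 / 4) ^ s) ^ 2 = C * (1 / (A * Δ * N)) := by
    have h16 : (((1:ℝ) / 4) ^ s) ^ 2 = 2⁻¹ ^ s * (1 / 8) ^ s := by
      rw [← mul_pow, ← pow_mul, mul_comm s, pow_mul]; norm_num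
    rw [hC, mul_pow, h16]; field_simp
  rw [e, ENNReal.ofReal_mul hC0.le] at h2
  rwa [ENNReal.mul_le_mul_iff_right (by simpa using hC0) ENNReal.ofReal_ne_top] at h2

theorem theta_ineq' (J : (Ideal (𝓞 K))⁰) (y : mixedSpace K) (hy : mixedEmbedding.norm y ≠ 0) :
    ENNReal.ofReal (1 / (Ideal.absNorm (J : Ideal (𝓞 K)) * √|(discr K : ℝ)| * mixedEmbedding.norm y) - 1) ≤
    ∑' l : idealLattice K (FractionalIdeal.mk0 K J), if (l : mixedSpace K) = 0 then 0 else fp (y * (l : mixedSpace K)) := by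
  rw [ENNReal.ofReal_sub _ zero_le_one, ENNReal.ofReal_one, tsub_le_iff_right]
  refine (theta_ineq J y hy).trans (le_of_eq ?_)
  rw [ENNReal.tsum_eq_add_tsum_ite (0 : idealLattice K (FractionalIdeal.mk0 K J)), add_comm]
  congr 1
  · refine tsum_congr fun l => ?_
    simp
  · simp [fp_zero]

end KB


namespace KB
open MeasureTheory NumberField NumberField.mixedEmbedding NumberField.mixedEmbedding.fundamentalCone
open NumberField.InfinitePlace NumberField.Units Module
open scoped ENNReal Classical Pointwise


variable {K : Type*} [Field K] [NumberField K]
open nonZeroDivisors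

theorem lint_tent (c s : ℝ) (hc : 0 < c) (hs : 1 < s) :
    ∫⁻ t in Set.Ioi (0:ℝ), ENNReal.ofReal (c / t - 1) * ENNReal.ofReal (t ^ (s - 1)) =
      ENNReal.ofReal (c ^ s / (s * (s - 1))) := by
  have h1 : ∫⁻ t in Set.Ioi (0:ℝ), ENNReal.ofReal (c / t - 1) * ENNReal.ofReal (t ^ (s - 1)) =
      ∫⁻ t in Set.Ioc (0:ℝ) c, ENNReal.ofReal (c * t ^ (s - 2) - t ^ (s - 1)) := by
    rw [← lintegral_indicator measurableSet_Ioi, ← lintegral_indicator measurableSet_Ioc]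
    congr 1
    ext t
    by_cases ht : 0 < t
    · have e : (c / t - 1) * t ^ (s - 1) = c * t ^ (s - 2) - t ^ (s - 1) := by
        rw [show s - 2 = (s - 1) - 1 by ring, Real.rpow_sub_one ht.ne' (s - 1)]; ring
      rw [Set.indicator_of_mem (Set.mem_Ioi.2 ht)]
      by_cases h2 : t ≤ c
      · rw [Set.indicator_of_mem (Set.mem_Ioc.2 ⟨ht, h2⟩), ← e, ENNReal.ofReal_mul]
        rw [sub_nonneg, le_div_iff₀ ht]; linarith
      · rw [Set.indicator_of_notMem (fun h => h2 h.2), ENNReal.ofReal_of_nonpos, zero_mul]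
        rw [sub_nonpos, div_le_iff₀ ht]; linarith
    · rw [Set.indicator_of_notMem (mt Set.mem_Ioi.1 ht), Set.indicator_of_notMem (fun h => ht h.1)]
  have i1 : IntervalIntegrable (fun t : ℝ => t ^ (s - 2)) volume 0 c :=
    intervalIntegral.intervalIntegrable_rpow' (by linarith)
  have i2 : IntervalIntegrable (fun t : ℝ => t ^ (s - 1)) volume 0 c :=
    intervalIntegral.intervalIntegrable_rpow' (by linarith)
  have i3 := (i1.const_mul c).sub i2
  rw [h1, ← ofReal_integral_eq_lintegral_ofReal]
  · rw [← intervalIntegral.integral_of_le hc.le, intervalIntegral.integral_sub (i1.const_mul c) i2,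
      intervalIntegral.integral_const_mul, integral_rpow (Or.inl (by linarith)), integral_rpow (Or.inl (by linarith))]
    congr 1
    rw [Real.zero_rpow (by linarith), Real.zero_rpow (by linarith), show s - 2 + 1 = s - 1 by ring, sub_add_cancel,
      Real.rpow_sub_one hc.ne']
    have : s - 1 ≠ 0 := by linarith
    have : s ≠ 0 := by linarith
    field_simp
    ring
  · exact (intervalIntegrable_iff_integrableOn_Ioc_of_le hc.le).1 i3
  · filter_upwards [ae_restrict_mem measurableSet_Ioc] with t ht
    have : t ^ (s - 1) = t * t ^ (s - 2) := by
      rw [show s - 2 = (s - 1) - 1 by ring, Real.rpow_sub_one ht.1.ne' (s - 1)]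
      have := ht.1.ne'
      field_simp
    rw [this, ← sub_mul]
    exact mul_nonneg (sub_nonneg.2 ht.2) (Real.rpow_nonneg ht.1.le _)

theorem int_fp (s : ℝ) (hs : 1 < s) :
    ∫⁻ y : mixedSpace K, ENNReal.ofReal (mixedEmbedding.norm y ^ (s - 1)) * fp y =
    ENNReal.ofReal ((2 / (s * (s + 1))) ^ nrRealPlaces K *
      (Real.pi * ((2 * Real.pi) ^ (-s) * Real.Gamma s)) ^ nrComplexPlaces K) := by
  have h1 : ∀ x : mixedSpace K, ENNReal.ofReal (mixedEmbedding.norm x ^ (s - 1)) * fp x =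
      (∏ i, (ENNReal.ofReal (|x.1 i| ^ (s - 1)) * ENNReal.ofReal (1 - |x.1 i|))) *
        ∏ i, (ENNReal.ofReal ((‖x.2 i‖ ^ 2) ^ (s - 1)) * ENNReal.ofReal (Real.exp (-(2 * Real.pi) * ‖x.2 i‖ ^ 2))) := by
    intro x
    rw [norm_eq_prod, Real.mul_rpow (Finset.prod_nonneg fun i _ => abs_nonneg _)
      (Finset.prod_nonneg fun i _ => by positivity),
      ← Real.finsetProd_rpow _ _ (fun i _ => abs_nonneg _),
      ← Real.finsetProd_rpow _ _ (fun i _ => by positivity),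
      ENNReal.ofReal_mul (Finset.prod_nonneg fun i _ => by positivity),
      ENNReal.ofReal_prod_of_nonneg (fun i _ => by positivity),
      ENNReal.ofReal_prod_of_nonneg (fun i _ => by positivity),
      Finset.prod_mul_distrib, Finset.prod_mul_distrib]
    unfold fp; ring
  simp_rw [h1]
  rw [lintegral_mixed_prod K (fun _ y => ENNReal.ofReal (|y| ^ (s - 1)) * ENNReal.ofReal (1 - |y|))
    (fun _ z => ENNReal.ofReal ((‖z‖ ^ 2) ^ (s - 1)) * ENNReal.ofReal (Real.exp (-(2 * Real.pi) * ‖z‖ ^ 2)))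
    (fun _ => by fun_prop) (fun _ => by fun_prop)]
  rw [Finset.prod_const, Finset.prod_const, Finset.card_univ, Finset.card_univ,
    lintegral_abs (fun y => ENNReal.ofReal (y ^ (s - 1)) * ENNReal.ofReal (1 - y)),
    lintegral_cnorm (fun y => ENNReal.ofReal ((y ^ 2) ^ (s - 1)) * ENNReal.ofReal (Real.exp (-(2 * Real.pi) * y ^ 2))) (by fun_prop)]
  have e1 : ∫⁻ y in Set.Ioi (0:ℝ), ENNReal.ofReal (y ^ (s - 1)) * ENNReal.ofReal (1 - y) =
      ENNReal.ofReal (1 / (s * (s + 1))) := by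
    have := lint_tent 1 (s + 1) one_pos (by linarith)
    rw [Real.one_rpow, add_sub_cancel_right, mul_comm (s + 1)] at this
    rw [← this]
    refine setLIntegral_congr_fun measurableSet_Ioi fun t ht => ?_
    have ht0 : 0 < t := ht
    rw [mul_comm, ← ENNReal.ofReal_mul' (by positivity), ← ENNReal.ofReal_mul' (by positivity),
      Real.rpow_sub_one ht0.ne']
    congr 1
    field_simp
  have e2 : ∫⁻ r in Set.Ioi (0:ℝ), ENNReal.ofReal r * (ENNReal.ofReal ((r ^ 2) ^ (s - 1)) *
      ENNReal.ofReal (Real.exp (-(2 * Real.pi) * r ^ 2))) = ENNReal.ofReal ((2 * Real.pi) ^ (-s) * Real.Gamma s / 2) := by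
    rw [← lint_gamma (2 * Real.pi) s (by positivity) (by linarith)]
    refine setLIntegral_congr_fun measurableSet_Ioi fun r hr => ?_
    have hr0 : 0 < r := hr
    rw [← mul_assoc, ← ENNReal.ofReal_mul hr0.le, ← ENNReal.ofReal_mul (by positivity)]
    congr 2
    rw [← Real.rpow_natCast r 2, ← Real.rpow_mul hr0.le]
    nth_rw 1 [← Real.rpow_one r]
    rw [← Real.rpow_add hr0]; congr 1; push_cast; ring
  have hG : 0 < Real.Gamma s := Real.Gamma_pos_of_pos (by linarith)
  have hs0 : 0 < s := by linarith
  rw [e1, e2, ← ENNReal.ofReal_ofNat, ← ENNReal.ofReal_mul (by norm_num), ← ENNReal.ofReal_mul (by positivity),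
    ← ENNReal.ofReal_pow (by positivity), ← ENNReal.ofReal_pow (by positivity), ← ENNReal.ofReal_mul (by positivity)]
  congr 3
  · ring
  · ring

theorem cone_lower (s : ℝ) (hs : 1 < s) (J : (Ideal (𝓞 K))⁰) :
    volume (normLeOne K) * ENNReal.ofReal ((1 / (Ideal.absNorm (J : Ideal (𝓞 K)) * √|(discr K : ℝ)|)) ^ s / (s * (s - 1))) ≤
    ∫⁻ y in fundamentalCone K, ENNReal.ofReal (mixedEmbedding.norm y ^ (s - 1)) *
      ∑' l : idealLattice K (FractionalIdeal.mk0 K J), if (l : mixedSpace K) = 0 then 0 else fp (y * (l : mixedSpace K)) := by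
  have hA0 : (0:ℝ) < Ideal.absNorm (J : Ideal (𝓞 K)) := by
    exact_mod_cast Nat.pos_of_ne_zero (Ideal.absNorm_ne_zero_of_nonZeroDivisors J)
  have hΔ0 : 0 < √|(discr K : ℝ)| := Real.sqrt_pos.2 (abs_pos.2 (by exact_mod_cast discr_ne_zero K))
  rw [← lint_tent _ s (by positivity) hs, ← lintegral_cone_norm (fun t => ENNReal.ofReal (1 / (Ideal.absNorm (J : Ideal (𝓞 K)) * √|(discr K : ℝ)|) / t - 1) * ENNReal.ofReal (t ^ (s - 1)))
    (by fun_prop)]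
  apply lintegral_mono_ae
  filter_upwards [ae_restrict_of_ae ae_norm_ne_zero] with y hy
  rw [mul_comm]
  gcongr
  rw [div_div]
  exact theta_ineq' J y hy

end KB


namespace KB
open MeasureTheory NumberField NumberField.mixedEmbedding NumberField.mixedEmbedding.fundamentalCone
open NumberField.InfinitePlace NumberField.Units Module
open scoped ENNReal Classical Pointwise


variable {K : Type*} [Field K] [NumberField K]
open nonZeroDivisors

/-- counting measure on nonzero lattice points -/
noncomputable def muJ (J : (Ideal (𝓞 K))⁰) : Measure (mixedSpace K) :=
  Measure.count.restrict ((idealLattice K (FractionalIdeal.mk0 K J) : Set (mixedSpace K)) \ {0})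

theorem latt_countable (J : (Ideal (𝓞 K))⁰) :
    ((idealLattice K (FractionalIdeal.mk0 K J) : Set (mixedSpace K))).Countable := by
  have : Countable (idealLattice K (FractionalIdeal.mk0 K J)) := inferInstance
  exact this

theorem mem_latt (J : (Ideal (𝓞 K))⁰) (x : mixedSpace K) :
    x ∈ idealLattice K (FractionalIdeal.mk0 K J) ↔ ∃ a ∈ (J : Ideal (𝓞 K)), mixedEmbedding K (a : K) = x := by
  rw [mem_idealLattice]
  constructor
  · rintro ⟨y, hy, rfl⟩
    have : y ∈ ((J : Ideal (𝓞 K)) : FractionalIdeal (𝓞 K)⁰ K) := by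
      rw [← FractionalIdeal.coe_mk0]; exact hy
    obtain ⟨a, ha, rfl⟩ := (FractionalIdeal.mem_coeIdeal _).1 this
    exact ⟨a, ha, rfl⟩
  · rintro ⟨a, ha, rfl⟩
    refine ⟨a, ?_, rfl⟩
    have : (a : K) ∈ ((J : Ideal (𝓞 K)) : FractionalIdeal (𝓞 K)⁰ K) :=
      (FractionalIdeal.mem_coeIdeal _).2 ⟨a, ha, rfl⟩
    rw [← FractionalIdeal.coe_mk0] at this
    exact this

theorem lint_muJ (J : (Ideal (𝓞 K))⁰) (h : mixedSpace K → ℝ≥0∞) :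
    ∫⁻ x, h x ∂(muJ J) =
      ∑' l : idealLattice K (FractionalIdeal.mk0 K J), if (l : mixedSpace K) = 0 then 0 else h l := by
  unfold muJ
  rw [lintegral_countable _ ((latt_countable J).mono Set.sdiff_subset)]
  simp only [Measure.count_singleton, mul_one]
  rw [tsum_subtype ((idealLattice K (FractionalIdeal.mk0 K J) : Set (mixedSpace K)) \ {0}) h]
  have := tsum_subtype (idealLattice K (FractionalIdeal.mk0 K J) : Set (mixedSpace K)) (fun l => if l = 0 then 0 else h l)
  refine Eq.trans ?_ this.symm
  refine tsum_congr fun x => ?_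
  simp only [Set.indicator_apply, Set.mem_sdiff, Set.mem_singleton_iff, SetLike.mem_coe]
  by_cases h1 : x ∈ idealLattice K (FractionalIdeal.mk0 K J) <;> by_cases h2 : x = 0 <;> simp [h1, h2]

theorem lint_muJ_cone (J : (Ideal (𝓞 K))⁰) (h : mixedSpace K → ℝ≥0∞) :
    ∫⁻ x in fundamentalCone K, h x ∂(muJ J) = ∑' b : idealSet K J, h b := by
  unfold muJ
  have hm : MeasurableSet (fundamentalCone K) := measurableSet_fundamentalCone K
  have he : fundamentalCone K ∩ ((idealLattice K (FractionalIdeal.mk0 K J) : Set (mixedSpace K)) \ {0}) =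
      idealSet K J := by
    ext x
    simp only [idealSet, Set.mem_inter_iff, Set.mem_sdiff, Set.mem_singleton_iff]
    constructor
    · rintro ⟨h1, h2, _⟩; exact ⟨h1, h2⟩
    · rintro ⟨h1, h2⟩
      refine ⟨h1, h2, ?_⟩
      rintro rfl
      exact h1.2 (by simp)
  rw [Measure.restrict_restrict hm, he, lintegral_countable]
  · simp only [Measure.count_singleton, mul_one]
  · exact (latt_countable J).mono Set.inter_subset_right

theorem unit_smul_latt (J : (Ideal (𝓞 K))⁰) (u : (𝓞 K)ˣ) (x : mixedSpace K)
    (hx : x ∈ idealLattice K (FractionalIdeal.mk0 K J)) :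
    u • x ∈ idealLattice K (FractionalIdeal.mk0 K J) := by
  rw [mem_latt] at hx ⊢
  obtain ⟨a, ha, rfl⟩ := hx
  refine ⟨u * a, Ideal.mul_mem_left _ _ ha, ?_⟩
  rw [unitSMul_smul, ← map_mul]; rfl

theorem mp_muJ (J : (Ideal (𝓞 K))⁰) (u : (𝓞 K)ˣ) :
    MeasurePreserving (fun x : mixedSpace K => u • x) (muJ J) (muJ J) := by
  have hm : Measurable (fun x : mixedSpace K => u • x) := (mp_unit u).measurable
  have hbij : Function.Bijective (fun x : mixedSpace K => u • x) := MulAction.bijective u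
  have hc : MeasurePreserving (fun x : mixedSpace K => u • x) Measure.count Measure.count := by
    refine ⟨hm, ?_⟩
    ext s hs
    rw [Measure.map_apply hm hs, Measure.count_apply (hm hs), Measure.count_apply hs]
    congr 1
    exact Set.encard_preimage_of_bijective hbij s
  set S : Set (mixedSpace K) := ((idealLattice K (FractionalIdeal.mk0 K J) : Set (mixedSpace K)) \ {0}) with hS
  have hSm : MeasurableSet S := ((latt_countable J).mono Set.sdiff_subset).measurableSet
  have hpre : (fun x : mixedSpace K => u • x) ⁻¹' S = S := by
    ext x
    simp only [hS, Set.mem_preimage, Set.mem_sdiff, SetLike.mem_coe, Set.mem_singleton_iff]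
    have h1 : u • x ∈ idealLattice K (FractionalIdeal.mk0 K J) ↔ x ∈ idealLattice K (FractionalIdeal.mk0 K J) :=
      ⟨fun h => by have := unit_smul_latt J u⁻¹ _ h; rwa [inv_smul_smul] at this, unit_smul_latt J u x⟩
    have h0 : u • (0 : mixedSpace K) = 0 := by rw [unitSMul_smul, mul_zero]
    have h2 : u • x = 0 ↔ x = 0 :=
      ⟨fun h => hbij.1 (by simp only [h, h0]), fun h => by rw [h, h0]⟩
    rw [h1, h2]
  have := hc.restrict_preimage hSm
  rw [hpre] at this
  exact this

theorem muJ_norm (J : (Ideal (𝓞 K))⁰) : ∀ᵐ y ∂(muJ J), mixedEmbedding.norm y ≠ 0 := by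
  have hSm : MeasurableSet ((idealLattice K (FractionalIdeal.mk0 K J) : Set (mixedSpace K)) \ {0}) :=
    ((latt_countable J).mono Set.sdiff_subset).measurableSet
  unfold muJ
  filter_upwards [ae_restrict_mem hSm] with y hy
  obtain ⟨a, _, rfl⟩ := (mem_latt J y).1 hy.1
  have ha : (a : K) ≠ 0 := by
    intro h; apply hy.2; rw [h]; simp
  rw [norm_eq_norm]
  simpa using ha

theorem cone_sum (s : ℝ) (J : (Ideal (𝓞 K))⁰) :
    ∫⁻ y in fundamentalCone K, ENNReal.ofReal (mixedEmbedding.norm y ^ (s - 1)) *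
      (∑' l : idealLattice K (FractionalIdeal.mk0 K J), if (l : mixedSpace K) = 0 then 0 else fp (y * (l : mixedSpace K))) =
    (∑' b : idealSet K J, ENNReal.ofReal (mixedEmbedding.norm (b : mixedSpace K) ^ (-s))) *
      ∫⁻ y : mixedSpace K, ENNReal.ofReal (mixedEmbedding.norm y ^ (s - 1)) * fp y := by
  have hfp := meas_fp (K := K)
  have hN := measurable_mnorm (K := K)
  have hw0 : (torsionOrder K : ℝ≥0∞) ≠ 0 := by
    have := torsionOrder_pos K
    exact_mod_cast this.ne'
  have hwt : (torsionOrder K : ℝ≥0∞) ≠ ⊤ := ENNReal.natCast_ne_top _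
  rw [← ENNReal.mul_right_inj hw0 hwt]
  have hcid : Countable (idealSet K J) := (latt_countable J).mono Set.inter_subset_right
  have hmul : ∀ (u : (𝓞 K)ˣ) (y b : mixedSpace K), y * (u • b) = (u • y) * b := by
    intro u y b; rw [unitSMul_smul, unitSMul_smul]; ring
  set F : mixedSpace K → mixedSpace K → ℝ≥0∞ := fun b y =>
    ENNReal.ofReal (mixedEmbedding.norm y ^ (s - 1)) * fp (y * b) with hF
  have hFm : ∀ b, Measurable (F b) := fun b => by fun_prop
  -- unfold in l
  have h1 : ∀ y : mixedSpace K, (torsionOrder K : ℝ≥0∞) * (ENNReal.ofReal (mixedEmbedding.norm y ^ (s - 1)) *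
      (∑' l : idealLattice K (FractionalIdeal.mk0 K J), if (l : mixedSpace K) = 0 then 0 else fp (y * (l : mixedSpace K)))) =
      ∑' b : idealSet K J, ∑' u : (𝓞 K)ˣ, F b (u • y) := by
    intro y
    rw [mul_left_comm, ← lint_muJ J (fun x => fp (y * x)),
      unfold_gen (muJ J) (mp_muJ J) (muJ_norm J) _ (by fun_prop), lint_muJ_cone, ← ENNReal.tsum_mul_left]
    refine tsum_congr fun b => ?_
    rw [← ENNReal.tsum_mul_left]
    refine tsum_congr fun u => ?_
    rw [hF]; simp only
    rw [hmul, norm_unit_smul]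
  have hum : ∀ u : (𝓞 K)ˣ, Measurable (fun x : mixedSpace K => u • x) := fun u => (mp_unit u).measurable
  rw [← lintegral_const_mul' _ _ hwt]
  simp_rw [h1]
  have hmm : ∀ b : idealSet K J, AEMeasurable (fun y : mixedSpace K => ∑' u : (𝓞 K)ˣ, F b (u • y))
      (volume.restrict (fundamentalCone K)) := fun b =>
    (Measurable.tsum fun u => (hFm (b : mixedSpace K)).comp (hum u)).aemeasurable
  rw [lintegral_tsum hmm]
  rw [mul_comm (∑' b : idealSet K J, _), ← ENNReal.tsum_mul_left, ← ENNReal.tsum_mul_left]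
  refine tsum_congr fun b => ?_
  rw [← unfold_vol (F b) (hFm b)]
  congr 1
  have hb : 0 < mixedEmbedding.norm (b : mixedSpace K) := by
    have := b.2.1.2
    exact lt_of_le_of_ne (mixedEmbedding.norm_nonneg _) (Ne.symm this)
  have h2 := lintegral_mul_left (b : mixedSpace K) hb.ne'
    (fun y => ENNReal.ofReal (mixedEmbedding.norm y ^ (s - 1)) * fp y) (by fun_prop)
  set Nb := mixedEmbedding.norm (b : mixedSpace K)
  have h3 : ∀ y : mixedSpace K, ENNReal.ofReal (mixedEmbedding.norm ((b : mixedSpace K) * y) ^ (s - 1)) * fp ((b : mixedSpace K) * y) =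
      ENNReal.ofReal (Nb ^ (s - 1)) * F b y := by
    intro y
    rw [map_mul, Real.mul_rpow hb.le (mixedEmbedding.norm_nonneg _), ENNReal.ofReal_mul (by positivity), mul_assoc,
      mul_comm (b : mixedSpace K) y]
  simp_rw [h3] at h2
  rw [lintegral_const_mul _ (hFm b)] at h2
  calc ∫⁻ y, F b y = ENNReal.ofReal (Nb ^ (1 - s)) * (ENNReal.ofReal (Nb ^ (s - 1)) * ∫⁻ y, F b y) := by
        rw [← mul_assoc, ← ENNReal.ofReal_mul (by positivity), ← Real.rpow_add hb]; simp
    _ = _ := by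
        rw [h2, ← mul_assoc, ← ENNReal.ofReal_mul (by positivity), mul_comm (∫⁻ y : mixedSpace K, _)]
        congr 2
        rw [← Real.rpow_neg_one, ← Real.rpow_add hb]; congr 1; ring

end KB


namespace KB
open MeasureTheory NumberField NumberField.mixedEmbedding NumberField.mixedEmbedding.fundamentalCone
open NumberField.InfinitePlace NumberField.Units Module
open scoped ENNReal Classical Pointwise


variable {K : Type*} [Field K] [NumberField K]
open nonZeroDivisors

theorem idealSet_tsum_le (s : ℝ) (J : (Ideal (𝓞 K))⁰) (C : ClassGroup (𝓞 K))
    (hJ : ClassGroup.mk0 J = C⁻¹) :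
    (∑' b : idealSet K J, ENNReal.ofReal (mixedEmbedding.norm (b : mixedSpace K) ^ (-s))) ≤
    torsionOrder K * (ENNReal.ofReal ((Ideal.absNorm (J : Ideal (𝓞 K)) : ℝ) ^ (-s)) *
      ∑' I : {I : (Ideal (𝓞 K))⁰ // ClassGroup.mk0 I = C},
        ENNReal.ofReal ((Ideal.absNorm (I.1 : Ideal (𝓞 K)) : ℝ) ^ (-s))) := by
  have hex : ∀ b : idealSet K J, ∃ I : {I : (Ideal (𝓞 K))⁰ // ClassGroup.mk0 I = C},
      (J : Ideal (𝓞 K)) * (I.1 : Ideal (𝓞 K)) =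
        ((integerSetEquiv K (idealSetMap K J b)).1.1 : Ideal (𝓞 K)) := by
    intro b
    have h1 : (J : Ideal (𝓞 K)) ∣ ((integerSetEquiv K (idealSetMap K J b)).1.1 : Ideal (𝓞 K)) := by
      rw [integerSetEquiv_apply_fst, Ideal.dvd_span_singleton]
      exact preimage_of_IdealSetMap K J b
    obtain ⟨I, hI⟩ := h1
    have h0 := nonZeroDivisors.ne_zero (integerSetEquiv K (idealSetMap K J b)).1.1.2
    have hI0 : I ≠ 0 := by
      rintro rfl
      exact h0 (by rw [hI, mul_zero])
    refine ⟨⟨⟨I, mem_nonZeroDivisors_of_ne_zero hI0⟩, ?_⟩, hI.symm⟩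
    have h2 := (ClassGroup.mk0_eq_one_iff (integerSetEquiv K (idealSetMap K J b)).1.1.2).2
      (integerSetEquiv K (idealSetMap K J b)).1.2
    have h3 : (integerSetEquiv K (idealSetMap K J b)).1.1 = J * ⟨I, mem_nonZeroDivisors_of_ne_zero hI0⟩ :=
      Subtype.ext hI
    have h4 : ClassGroup.mk0 (integerSetEquiv K (idealSetMap K J b)).1.1 = 1 := h2
    rw [h3, map_mul, hJ, inv_mul_eq_one] at h4
    exact h4.symm
  choose φ hφ using hex
  set ψ : idealSet K J → {I : (Ideal (𝓞 K))⁰ // ClassGroup.mk0 I = C} × torsion K :=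
    fun b => (φ b, (integerSetEquiv K (idealSetMap K J b)).2) with hψ
  have hinj : Function.Injective ψ := by
    intro b b' h
    simp only [hψ, Prod.mk.injEq] at h
    have h1 : (integerSetEquiv K (idealSetMap K J b)) = (integerSetEquiv K (idealSetMap K J b')) := by
      refine Prod.ext (Subtype.ext (Subtype.ext ?_)) h.2
      rw [← hφ, ← hφ, h.1]
    have h2 := (integerSetEquiv K).injective h1
    have h3 : ((idealSetMap K J b : integerSet K) : mixedSpace K) = (idealSetMap K J b' : integerSet K) := by rw [h2]
    exact Subtype.ext h3
  have hnorm : ∀ b : idealSet K J, mixedEmbedding.norm (b : mixedSpace K) =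
      (Ideal.absNorm (J : Ideal (𝓞 K)) : ℝ) * (Ideal.absNorm ((φ b).1 : Ideal (𝓞 K)) : ℝ) := by
    intro b
    have h1 := congrArg Ideal.absNorm (hφ b)
    rw [map_mul, integerSetEquiv_apply_fst, Ideal.absNorm_span_singleton] at h1
    rw [← idealSetMap_apply, ← intNorm_coe, intNorm]
    rw [← Nat.cast_mul, h1]
  have hT : Finite (torsion K) := inferInstance
  calc _ = ∑' b : idealSet K J, (fun p : {I : (Ideal (𝓞 K))⁰ // ClassGroup.mk0 I = C} × torsion K =>
        ENNReal.ofReal ((Ideal.absNorm (J : Ideal (𝓞 K)) : ℝ) ^ (-s)) *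
        ENNReal.ofReal ((Ideal.absNorm (p.1.1 : Ideal (𝓞 K)) : ℝ) ^ (-s))) (ψ b) := by
        refine tsum_congr fun b => ?_
        rw [hnorm, Real.mul_rpow (by positivity) (by positivity), ENNReal.ofReal_mul (by positivity)]
    _ ≤ ∑' p : {I : (Ideal (𝓞 K))⁰ // ClassGroup.mk0 I = C} × torsion K,
        ENNReal.ofReal ((Ideal.absNorm (J : Ideal (𝓞 K)) : ℝ) ^ (-s)) *
        ENNReal.ofReal ((Ideal.absNorm (p.1.1 : Ideal (𝓞 K)) : ℝ) ^ (-s)) :=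
        ENNReal.tsum_comp_le_tsum_of_injective hinj _
    _ = _ := by
        rw [ENNReal.tsum_mul_left, ENNReal.tsum_prod']
        simp only [ENNReal.tsum_const]
        rw [ENNReal.tsum_mul_left, torsionOrder]
        simp only [ENat.card_eq_coe_natCard, ENat.toENNReal_coe]
        ring

/-- Dedekind zeta as an extended nonnegative real. -/
noncomputable def zK (K : Type*) [Field K] [NumberField K] (s : ℝ) : ℝ≥0∞ :=
  ∑' I : (Ideal (𝓞 K))⁰, ENNReal.ofReal ((Ideal.absNorm (I : Ideal (𝓞 K)) : ℝ) ^ (-s))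

theorem sum_classes (s : ℝ) : ∑ C : ClassGroup (𝓞 K), ∑' I : {I : (Ideal (𝓞 K))⁰ // ClassGroup.mk0 I = C},
        ENNReal.ofReal ((Ideal.absNorm (I.1 : Ideal (𝓞 K)) : ℝ) ^ (-s)) = zK K s := by
  rw [← tsum_fintype (L := .unconditional _), zK]
  refine (ENNReal.tsum_sigma (fun (C : ClassGroup (𝓞 K)) (I : {I : (Ideal (𝓞 K))⁰ // ClassGroup.mk0 I = C}) =>
    ENNReal.ofReal ((Ideal.absNorm (I.1 : Ideal (𝓞 K)) : ℝ) ^ (-s)))).symm.trans ?_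
  exact (Equiv.sigmaFiberEquiv (ClassGroup.mk0 : (Ideal (𝓞 K))⁰ → ClassGroup (𝓞 K))).tsum_eq
    (fun I : (Ideal (𝓞 K))⁰ => ENNReal.ofReal ((Ideal.absNorm (I : Ideal (𝓞 K)) : ℝ) ^ (-s)))

theorem vol_nlo : volume (normLeOne K) =
    ENNReal.ofReal (2 ^ nrRealPlaces K * Real.pi ^ nrComplexPlaces K * regulator K) := by
  rw [volume_normLeOne, ENNReal.ofReal_mul (by positivity), ENNReal.ofReal_mul (by positivity), ENNReal.ofReal_pow (by norm_num), ENNReal.ofReal_pow Real.pi_pos.le, ENNReal.ofReal_ofNat]; congr 3; rw [← NNReal.coe_real_pi, ENNReal.ofReal_coe_nnreal]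

/-- master inequality -/
theorem master (s : ℝ) (hs : 1 < s) :
    ENNReal.ofReal (classNumber K * (2 ^ nrRealPlaces K * Real.pi ^ nrComplexPlaces K * regulator K) *
      ((1 / √|(discr K : ℝ)|) ^ s / (s * (s - 1)))) ≤
    ENNReal.ofReal (torsionOrder K * ((2 / (s * (s + 1))) ^ nrRealPlaces K *
        (Real.pi * ((2 * Real.pi) ^ (-s) * Real.Gamma s)) ^ nrComplexPlaces K)) * zK K s := by
  set V : ℝ := 2 ^ nrRealPlaces K * Real.pi ^ nrComplexPlaces K * regulator K with hV
  have hV0 : 0 ≤ V := by have := regulator_pos K; positivity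
  set A : ℝ := (1 / √|(discr K : ℝ)|) ^ s / (s * (s - 1)) with hA
  have hA0 : 0 ≤ A := by have : 0 < s - 1 := by linarith
                         positivity
  set B : ℝ := (2 / (s * (s + 1))) ^ nrRealPlaces K *
        (Real.pi * ((2 * Real.pi) ^ (-s) * Real.Gamma s)) ^ nrComplexPlaces K with hB
  have hB0 : 0 ≤ B := by have := Real.Gamma_pos_of_pos (by linarith : 0 < s); positivity
  have key : ∀ C : ClassGroup (𝓞 K), ENNReal.ofReal (V * A) ≤ ENNReal.ofReal (torsionOrder K * B) *
      ∑' I : {I : (Ideal (𝓞 K))⁰ // ClassGroup.mk0 I = C},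
        ENNReal.ofReal ((Ideal.absNorm (I.1 : Ideal (𝓞 K)) : ℝ) ^ (-s)) := by
    intro C
    obtain ⟨J, hJ⟩ := ClassGroup.mk0_surjective C⁻¹
    have h1 := cone_lower s hs J
    rw [cone_sum, int_fp s hs, vol_nlo] at h1
    have h2 := h1.trans (mul_le_mul_left (idealSet_tsum_le s J C hJ) _)
    have hN : 0 < (Ideal.absNorm (J : Ideal (𝓞 K)) : ℝ) := Nat.cast_pos.mpr (Ideal.absNorm_pos_of_nonZeroDivisors J)
    set N : ℝ := (Ideal.absNorm (J : Ideal (𝓞 K)) : ℝ) with hNd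
    have h3 : (1 / (N * √|(discr K : ℝ)|)) ^ s / (s * (s - 1)) = N ^ (-s) * A := by
      rw [hA, one_div, mul_inv, Real.mul_rpow (by positivity) (by positivity), Real.inv_rpow hN.le, Real.rpow_neg hN.le, one_div]
      ring
    rw [h3, ← hV, ← hB, ENNReal.ofReal_mul (p := N ^ (-s)) (by positivity)] at h2
    have hNs : 0 < N ^ (-s) := by positivity
    have h4 : ENNReal.ofReal (N ^ (-s)) * ENNReal.ofReal (V * A) ≤ ENNReal.ofReal (N ^ (-s)) *
        (ENNReal.ofReal (torsionOrder K * B) * ∑' I : {I : (Ideal (𝓞 K))⁰ // ClassGroup.mk0 I = C},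
        ENNReal.ofReal ((Ideal.absNorm (I.1 : Ideal (𝓞 K)) : ℝ) ^ (-s))) := by
      refine (le_of_eq ?_).trans (h2.trans (le_of_eq ?_))
      · rw [ENNReal.ofReal_mul hV0]; ring
      · rw [ENNReal.ofReal_mul (p := (torsionOrder K : ℝ)) (by positivity), ENNReal.ofReal_natCast]; ring
    rwa [ENNReal.mul_le_mul_iff_right (by simpa using hNs) ENNReal.ofReal_ne_top] at h4
  have h5 := Finset.sum_le_sum (fun C (_ : C ∈ (Finset.univ : Finset (ClassGroup (𝓞 K)))) => key C)
  rw [← Finset.mul_sum, sum_classes, Finset.sum_const, Finset.card_univ] at h5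
  refine (le_of_eq ?_).trans h5
  rw [nsmul_eq_mul, ← ENNReal.ofReal_natCast, ← ENNReal.ofReal_mul (by positivity), classNumber, mul_assoc]

end KB


namespace KB
open MeasureTheory NumberField NumberField.mixedEmbedding NumberField.mixedEmbedding.fundamentalCone
open NumberField.InfinitePlace NumberField.Units Module
open scoped ENNReal Classical Pointwise


variable {K : Type*} [Field K] [NumberField K]
open nonZeroDivisors

theorem tsum_pi_pow (a : ℕ → ℝ≥0∞) (n : ℕ) :
    ∑' f : Fin n → ℕ, ∏ i, a (f i) = (∑' m, a m) ^ n := by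
  induction n with
  | zero => simp
  | succ n ih =>
    rw [← (Fin.consEquiv (fun _ : Fin (n + 1) => ℕ)).tsum_eq, ENNReal.tsum_prod']
    simp only [Fin.consEquiv_apply, Fin.prod_univ_succ, Fin.cons_zero, Fin.cons_succ]
    simp_rw [ENNReal.tsum_mul_left, ih, ENNReal.tsum_mul_right]
    rw [pow_succ']

/-- the rational prime below -/
noncomputable def pbelow (P : Ideal (𝓞 K)) : ℕ := Ideal.absNorm (Ideal.under ℤ P)

theorem pbelow_prime (P : Ideal (𝓞 K)) (hP : Prime P) : (pbelow P).Prime := by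
  have : P.IsPrime := Ideal.isPrime_of_prime hP
  have : NeZero P := ⟨hP.ne_zero⟩
  exact Nat.absNorm_under_prime P

theorem exists_index : ∃ ι : Ideal (𝓞 K) → Fin (finrank ℚ K),
    ∀ P Q : Ideal (𝓞 K), Prime P → Prime Q → pbelow P = pbelow Q → ι P = ι Q → P = Q := by
  have hn : 0 < finrank ℚ K := finrank_pos
  have h : ∀ q : ℕ, ∃ f : Ideal (𝓞 K) → Fin (finrank ℚ K),
      Set.InjOn f {P | Prime P ∧ pbelow P = q} := by
    intro q
    by_cases hq : q.Prime
    · have : Fact q.Prime := ⟨hq⟩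
      have h0 : (Ideal.span {(q : ℤ)}) ≠ ⊥ := by
        simpa using hq.ne_zero
      have hc := Ideal.card_primesOverFinset_le_finrank (S := 𝓞 K) ℚ K h0
      set T := IsDedekindDomain.primesOverFinset (Ideal.span {(q : ℤ)}) (𝓞 K) with hT
      have hc' : Fintype.card T ≤ Fintype.card (Fin (finrank ℚ K)) := by simpa using hc
      obtain ⟨e⟩ := Function.Embedding.nonempty_of_card_le hc'
      refine ⟨fun P => if h : P ∈ T then e ⟨P, h⟩ else ⟨0, hn⟩, ?_⟩
      have hmem : ∀ P : Ideal (𝓞 K), Prime P → pbelow P = q → P ∈ T := by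
        intro P hP hq'
        rw [hT, IsDedekindDomain.mem_primesOverFinset_iff h0]
        refine ⟨Ideal.isPrime_of_prime hP, ?_⟩
        rw [← hq']
        exact Int.liesOver_span_absNorm P
      rintro P ⟨hP, hPq⟩ Q ⟨hQ, hQq⟩ hPQ
      simp only [hmem P hP hPq, hmem Q hQ hQq, dif_pos] at hPQ
      have := e.injective hPQ
      simpa using this
    · refine ⟨fun _ => ⟨0, hn⟩, ?_⟩
      rintro P ⟨hP, hPq⟩
      exact absurd (hPq ▸ pbelow_prime P hP) hq
  choose f hf using h
  refine ⟨fun P => f (pbelow P) P, fun P Q hP hQ hpq hι => ?_⟩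
  simp only at hι
  rw [hpq] at hι
  exact hf (pbelow Q) ⟨hP, hpq⟩ ⟨hQ, rfl⟩ hι

theorem prod_fiber {X : Type*} {n : ℕ} (ι : X → Fin n) (p : X → ℕ) (s : Multiset X) :
    ∏ i, ((s.filter (fun x => ι x = i)).map p).prod = (s.map p).prod := by
  induction s using Multiset.induction with
  | empty => simp
  | cons a s ih =>
    have : ∀ i, (((a ::ₘ s).filter (fun x => ι x = i)).map p).prod =
        (if ι a = i then p a else 1) * ((s.filter (fun x => ι x = i)).map p).prod := by
      intro i
      by_cases h : ι a = i <;> simp [h]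
    simp_rw [this]
    rw [Finset.prod_mul_distrib, ih]
    simp

theorem nat_factors (s : Multiset ℕ) (hs : ∀ p ∈ s, p.Prime) :
    UniqueFactorizationMonoid.normalizedFactors s.prod = s := by
  have h := UniqueFactorizationMonoid.normalizedFactors_prod_of_prime (m := s)
    (fun p hp => (hs p hp).prime)
  exact h

open UniqueFactorizationMonoid in
theorem zK_le (s : ℝ) (hs : 0 ≤ s) : zK K s ≤ (∑' m : ℕ, ENNReal.ofReal ((m : ℝ) ^ (-s))) ^ finrank ℚ K := by
  obtain ⟨ι, hι⟩ := exists_index (K := K)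
  set φ : (Ideal (𝓞 K))⁰ → (Fin (finrank ℚ K) → ℕ) := fun I i =>
    (((normalizedFactors (I : Ideal (𝓞 K))).filter (fun P => ι P = i)).map pbelow).prod with hφ
  have hpr : ∀ (I : (Ideal (𝓞 K))⁰) P, P ∈ normalizedFactors (I : Ideal (𝓞 K)) → Prime P :=
    fun I P hP => prime_of_normalized_factor P hP
  have hinj : Function.Injective φ := by
    intro I I' h
    have h1 : ∀ i, ((normalizedFactors (I : Ideal (𝓞 K))).filter (fun P => ι P = i)).map pbelow =
        ((normalizedFactors (I' : Ideal (𝓞 K))).filter (fun P => ι P = i)).map pbelow := by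
      intro i
      have h2 := congrArg normalizedFactors (congrFun h i)
      simp only [hφ] at h2
      rw [nat_factors, nat_factors] at h2
      · exact h2
      · intro p hp
        obtain ⟨P, hP, rfl⟩ := Multiset.mem_map.1 hp
        exact pbelow_prime P (hpr I' P (Multiset.mem_of_mem_filter hP))
      · intro p hp
        obtain ⟨P, hP, rfl⟩ := Multiset.mem_map.1 hp
        exact pbelow_prime P (hpr I P (Multiset.mem_of_mem_filter hP))
    have h3 : ∀ (J : (Ideal (𝓞 K))⁰) (P : Ideal (𝓞 K)), Prime P →
        (normalizedFactors (J : Ideal (𝓞 K))).count P =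
        (((normalizedFactors (J : Ideal (𝓞 K))).filter (fun Q => ι Q = ι P)).map pbelow).count (pbelow P) := by
      intro J P hP
      rw [Multiset.count_map, Multiset.filter_filter, ← Multiset.countP_eq_card_filter, Multiset.count]
      refine Multiset.countP_congr rfl fun Q hQ => ?_
      refine propext ⟨?_, ?_⟩
      · rintro rfl; exact ⟨rfl, rfl⟩
      · rintro ⟨h1, h2⟩; exact hι P Q hP (hpr J Q hQ) h1 h2.symm
    have h4 : normalizedFactors (I : Ideal (𝓞 K)) = normalizedFactors (I' : Ideal (𝓞 K)) := by
      ext P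
      by_cases hP : Prime P
      · rw [h3 I P hP, h3 I' P hP, h1]
      · rw [Multiset.count_eq_zero_of_notMem (fun h => hP (hpr I P h)),
          Multiset.count_eq_zero_of_notMem (fun h => hP (hpr I' P h))]
    have h5 := (associated_iff_normalizedFactors_eq_normalizedFactors
      (nonZeroDivisors.ne_zero I.2) (nonZeroDivisors.ne_zero I'.2)).2 h4
    exact Subtype.ext (associated_iff_eq.1 h5)
  have hle : ∀ I, ∏ i, φ I i ≤ Ideal.absNorm (I : Ideal (𝓞 K)) := by
    intro I
    simp only [hφ]
    rw [prod_fiber]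
    have hI : (normalizedFactors (I : Ideal (𝓞 K))).prod = I :=
      prod_normalizedFactors_eq_self (nonZeroDivisors.ne_zero I.2)
    calc _ ≤ ((normalizedFactors (I : Ideal (𝓞 K))).map Ideal.absNorm).prod := by
          refine Multiset.prod_map_le_prod_map₀ _ _ (fun _ _ => Nat.zero_le _) fun P hP => ?_
          refine Nat.le_of_dvd ?_ (Int.absNorm_under_dvd_absNorm P)
          exact Nat.pos_of_ne_zero (by rw [Ne, Ideal.absNorm_eq_zero_iff]; exact (hpr I P hP).ne_zero)
      _ = _ := by
          rw [← map_multiset_prod, hI]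
  have hpos : ∀ I i, 0 < φ I i := by
    intro I i
    refine Nat.pos_of_ne_zero (Multiset.prod_ne_zero fun h => ?_)
    obtain ⟨P, hP, h0⟩ := Multiset.mem_map.1 h
    exact (pbelow_prime P (hpr I P (Multiset.mem_of_mem_filter hP))).ne_zero h0
  rw [← tsum_pi_pow]
  refine le_trans (ENNReal.tsum_le_tsum fun I => ?_) (ENNReal.tsum_comp_le_tsum_of_injective hinj _)
  rw [← ENNReal.ofReal_prod_of_nonneg (fun _ _ => by positivity)]
  apply ENNReal.ofReal_le_ofReal
  rw [Real.finsetProd_rpow _ _ (fun _ _ => by positivity), ← Nat.cast_prod]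
  apply Real.rpow_le_rpow_of_nonpos
  · exact_mod_cast Finset.prod_pos fun i _ => hpos I i
  · exact_mod_cast hle I
  · linarith

end KB


namespace KB
open MeasureTheory NumberField NumberField.mixedEmbedding NumberField.mixedEmbedding.fundamentalCone
open NumberField.InfinitePlace NumberField.Units Module
open scoped ENNReal Classical Pointwise


theorem tel0 (σ t : ℝ) (hσ : 0 < σ) (ht0 : 0 ≤ t) (ht : t < 1) :
    2 * σ * t ≤ (1 - t) ^ (-σ) - (1 + t) ^ (-σ) := by
  have h1 : 0 < 1 - t := by linarith
  have h2 : 0 < 1 + t := by linarith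
  rw [Real.rpow_def_of_pos h1, Real.rpow_def_of_pos h2]
  set x := Real.log (1 - t) with hx
  set y := Real.log (1 + t) with hy
  have hxy : x + y ≤ 0 := by
    rw [hx, hy, ← Real.log_mul h1.ne' h2.ne']
    apply Real.log_nonpos
    · positivity
    · nlinarith
  have hd : 2 * t ≤ y - x := by
    have := Real.sum_range_le_log_div ht0 ht 1
    rw [Real.log_div h2.ne' h1.ne'] at this
    simp at this
    linarith
  have e1 : Real.exp (x * -σ) = Real.exp (-(σ * (x + y) / 2)) * Real.exp (σ * (y - x) / 2) := by
    rw [← Real.exp_add]; congr 1; ring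
  have e2 : Real.exp (y * -σ) = Real.exp (-(σ * (x + y) / 2)) * Real.exp (-(σ * (y - x) / 2)) := by
    rw [← Real.exp_add]; congr 1; ring
  have h3 : σ * (y - x) / 2 ≤ Real.sinh (σ * (y - x) / 2) := by
    apply Real.self_le_sinh_iff.2
    have : 0 ≤ y - x := by linarith
    positivity
  rw [Real.sinh_eq] at h3
  have h4 : 1 ≤ Real.exp (-(σ * (x + y) / 2)) := by
    apply Real.one_le_exp
    nlinarith
  have h5 : 2 * σ * t ≤ σ * (y - x) := by nlinarith
  have h6 : 0 ≤ 2 * σ * t := by positivity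
  rw [e1, e2, ← mul_sub]
  nlinarith

theorem tel (σ m : ℝ) (hσ : 0 < σ) (hm : 1 ≤ m) :
    σ * m ^ (-(1 + σ)) ≤ (m - 1 / 2) ^ (-σ) - (m + 1 / 2) ^ (-σ) := by
  have hm0 : 0 < m := by linarith
  have ht : 1 / (2 * m) < 1 := by rw [div_lt_one (by positivity)]; linarith
  have h := tel0 σ (1 / (2 * m)) hσ (by positivity) ht
  have e1 : m - 1 / 2 = m * (1 - 1 / (2 * m)) := by field_simp
  have e2 : m + 1 / 2 = m * (1 + 1 / (2 * m)) := by field_simp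
  rw [e1, e2, Real.mul_rpow hm0.le (by linarith), Real.mul_rpow hm0.le (by positivity), ← mul_sub]
  have e3 : m ^ (-(1 + σ)) = m ^ (-σ) * m⁻¹ := by
    rw [← Real.rpow_neg_one, ← Real.rpow_add hm0]; congr 1; ring
  have e4 : σ * m ^ (-(1 + σ)) = m ^ (-σ) * (2 * σ * (1 / (2 * m))) := by
    rw [e3]; field_simp
  rw [e4]
  exact mul_le_mul_of_nonneg_left h (by positivity)

theorem zeta_le (σ : ℝ) (hσ : 0 < σ) :
    ∑' m : ℕ, ENNReal.ofReal ((m : ℝ) ^ (-(1 + σ))) ≤ ENNReal.ofReal (1 + (2 / 3 : ℝ) ^ σ / σ) := by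
  have h23 : (2 / 3 : ℝ) ^ σ = (3 / 2 : ℝ) ^ (-σ) := by
    rw [Real.rpow_neg (by norm_num), ← Real.inv_rpow (by norm_num)]; norm_num
  have key : ∀ N : ℕ, ∑ m ∈ Finset.range (N + 2), (m : ℝ) ^ (-(1 + σ)) ≤
      1 + ((2 / 3 : ℝ) ^ σ - ((N : ℝ) + 3 / 2) ^ (-σ)) / σ := by
    intro N
    induction N with
    | zero =>
      rw [h23]
      have : (0 : ℝ) ^ (-(1 + σ)) = 0 := Real.zero_rpow (by linarith)
      simp [Finset.sum_range_succ]
      have e : -σ + -1 = -(1 + σ) := by ring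
      first | linarith | (rw [e, this])
    | succ N ih =>
      rw [Finset.sum_range_succ]
      have h := tel σ ((N + 2 : ℕ) : ℝ) hσ (by push_cast; linarith [(Nat.cast_nonneg N : (0:ℝ) ≤ N)])
      have e1 : ((N + 2 : ℕ) : ℝ) - 1 / 2 = N + 3 / 2 := by push_cast; ring
      have e2 : ((N + 2 : ℕ) : ℝ) + 1 / 2 = ((N + 1 : ℕ) : ℝ) + 3 / 2 := by push_cast; ring
      rw [e1, e2] at h
      have h' : ((N + 2 : ℕ) : ℝ) ^ (-(1 + σ)) ≤
          (((N : ℝ) + 3 / 2) ^ (-σ) - (((N + 1 : ℕ) : ℝ) + 3 / 2) ^ (-σ)) / σ := by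
        rw [le_div_iff₀ hσ]; linarith
      refine (add_le_add ih h').trans (le_of_eq ?_)
      ring
  refine ENNReal.tsum_le_of_sum_range_le fun N => ?_
  rw [← ENNReal.ofReal_sum_of_nonneg (fun _ _ => by positivity)]
  apply ENNReal.ofReal_le_ofReal
  calc _ ≤ ∑ m ∈ Finset.range (N + 2), (m : ℝ) ^ (-(1 + σ)) :=
        Finset.sum_le_sum_of_subset_of_nonneg (Finset.range_subset_range.2 (by omega)) (fun _ _ _ => by positivity)
    _ ≤ _ := key N
    _ ≤ _ := by
        gcongr
        have : 0 ≤ ((N : ℝ) + 3 / 2) ^ (-σ) := by positivity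
        linarith

theorem conv_phi (c : ℝ) (hc : 0 < c) : ConvexOn ℝ (Set.Ici (0 : ℝ)) (fun x =>
    Real.log (Real.Gamma (2 + x)) - x * Real.log (2 * Real.pi) +
      2 * (Real.log c + (x + (2 / 3 : ℝ) ^ x) / c - 1)) := by
  have h1 : ConvexOn ℝ (Set.Ici (0 : ℝ)) (fun x => Real.log (Real.Gamma (2 + x))) := by
    have := Real.convexOn_log_Gamma.translate_right (2 : ℝ)
    refine this.subset ?_ (convex_Ici 0)
    intro x hx
    have : (0 : ℝ) ≤ x := hx
    simp only [Set.mem_preimage, Set.mem_Ioi]; linarith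
  have h2 : ConvexOn ℝ (Set.Ici (0 : ℝ)) (fun x : ℝ => (2 / 3 : ℝ) ^ x) :=
    (convexOn_rpow_left (by norm_num)).subset (Set.subset_univ _) (convex_Ici 0)
  refine ⟨convex_Ici 0, fun x hx y hy a b ha hb hab => ?_⟩
  have g1 := h1.2 hx hy ha hb hab
  have g2 := h2.2 hx hy ha hb hab
  simp only [smul_eq_mul] at g1 g2 ⊢
  have g3 := div_le_div_of_nonneg_right g2 hc.le
  have hb' : b = 1 - a := by linarith
  subst hb'
  have e : ∀ p q : ℝ, (p + q) / c = p / c + q / c := fun p q => add_div p q c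
  simp only [e] at g3 ⊢
  have e4 : a * (2 / 3 : ℝ) ^ x / c = a * ((2 / 3 : ℝ) ^ x / c) := by ring
  have e5 : (1 - a) * (2 / 3 : ℝ) ^ y / c = (1 - a) * ((2 / 3 : ℝ) ^ y / c) := by ring
  have e6 : a * x / c = a * (x / c) := by ring
  have e7 : (1 - a) * y / c = (1 - a) * (y / c) := by ring
  rw [e4, e5] at g3
  rw [e6, e7]
  nlinarith [g1, g3]

theorem chord (a b c : ℝ) (ha : 0 ≤ a) (hc : 0 < c)
    (hLa : Real.log (Real.Gamma (2 + a)) - a * Real.log (2 * Real.pi) +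
      2 * (Real.log c + (a + (2 / 3 : ℝ) ^ a) / c - 1) ≤ 0)
    (hLb : Real.log (Real.Gamma (2 + b)) - b * Real.log (2 * Real.pi) +
      2 * (Real.log c + (b + (2 / 3 : ℝ) ^ b) / c - 1) ≤ 0)
    (σ : ℝ) (h1 : a ≤ σ) (h2 : σ ≤ b) :
    Real.log (Real.Gamma (2 + σ)) - σ * Real.log (2 * Real.pi) +
      2 * Real.log (σ + (2 / 3 : ℝ) ^ σ) ≤ 0 := by
  have h := (conv_phi c hc).le_max_of_mem_Icc (x := a) (y := b) (z := σ) ha (by simp; linarith) ⟨h1, h2⟩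
  have h3 := h.trans (max_le hLa hLb)
  have hu : 0 < σ + (2 / 3 : ℝ) ^ σ := by
    have : 0 ≤ σ := by linarith
    positivity
  have h4 := Real.log_le_sub_one_of_pos (div_pos hu hc)
  rw [Real.log_div hu.ne' hc.ne'] at h4
  linarith

theorem log3_le : Real.log 3 ≤ 1.09863 := by
  have h : (3 : ℝ) ^ 12 = 2 ^ 19 * (531441 / 524288) := by norm_num
  have h1 := congrArg Real.log h
  rw [Real.log_pow, Real.log_mul (by norm_num) (by norm_num), Real.log_pow] at h1
  have h2 := Real.log_le_sub_one_of_pos (by norm_num : (0 : ℝ) < 531441 / 524288)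
  have := Real.log_two_lt_d9
  norm_num at h1 h2 this ⊢
  linarith

theorem log3_ge : 1.0974 ≤ Real.log 3 := by
  have h : (3 : ℝ) ^ 12 = 2 ^ 19 * (531441 / 524288) := by norm_num
  have h1 := congrArg Real.log h
  rw [Real.log_pow, Real.log_mul (by norm_num) (by norm_num), Real.log_pow] at h1
  have h2 := Real.log_nonneg (by norm_num : (1 : ℝ) ≤ 531441 / 524288)
  have := Real.log_two_gt_d9
  norm_num at h1 h2 this ⊢
  linarith

theorem logpi_ge : 1.1419 ≤ Real.log Real.pi := by
  have h1 : Real.log 3.14 ≤ Real.log Real.pi := Real.log_le_log (by norm_num) Real.pi_gt_d2.le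
  have h2 := Real.log_le_sub_one_of_pos (by norm_num : (0 : ℝ) < 3 / 3.14)
  rw [Real.log_div (by norm_num) (by norm_num)] at h2
  have := log3_ge
  norm_num at h1 h2 this ⊢
  linarith

theorem log105_le : Real.log 105 ≤ 2 * Real.log 2 + 3 * Real.log 3 - 3 / 108 := by
  have h2 := Real.log_le_sub_one_of_pos (by norm_num : (0 : ℝ) < 105 / 108)
  rw [Real.log_div (by norm_num) (by norm_num), show (108 : ℝ) = 2 ^ 2 * 3 ^ 3 by norm_num,
    Real.log_mul (by norm_num) (by norm_num), Real.log_pow, Real.log_pow] at h2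
  norm_num at h2 ⊢
  linarith

theorem sqrt23 : (2 / 3 : ℝ) ^ (1 / 2 : ℝ) ≤ 0.8165 := by
  rw [← Real.sqrt_eq_rpow]
  apply Real.sqrt_le_iff.2
  norm_num

theorem gamma52 : Real.Gamma (2 + 1 / 2) = 3 / 4 * √Real.pi := by
  rw [show (2 + 1 / 2 : ℝ) = (1 / 2 + 1) + 1 by norm_num, Real.Gamma_add_one (by norm_num),
    Real.Gamma_add_one (by norm_num), Real.Gamma_one_half_eq]
  ring

theorem gamma92 : Real.Gamma (2 + 5 / 2) = 105 / 16 * √Real.pi := by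
  rw [show (2 + 5 / 2 : ℝ) = ((2 + 1 / 2) + 1) + 1 by norm_num, Real.Gamma_add_one (by norm_num),
    Real.Gamma_add_one (by norm_num), gamma52]
  ring

theorem final_num (σ : ℝ) (h0 : 0 ≤ σ) (h1 : σ ≤ 5 / 2) :
    Real.log (Real.Gamma (2 + σ)) - σ * Real.log (2 * Real.pi) +
      2 * Real.log (σ + (2 / 3 : ℝ) ^ σ) ≤ 0 := by
  have hpi := Real.pi_pos
  have hsq : 0 < √Real.pi := Real.sqrt_pos.2 hpi
  have a1 := log3_le
  have a2 := log3_ge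
  have a3 := logpi_ge
  have a4 := log105_le
  have a5 := sqrt23
  have a6 := Real.log_two_gt_d9
  have a7 := Real.log_two_lt_d9
  have l2pi : Real.log (2 * Real.pi) = Real.log 2 + Real.log Real.pi := Real.log_mul (by norm_num) hpi.ne'
  have G52 : Real.log (Real.Gamma (2 + 1 / 2)) = Real.log 3 - 2 * Real.log 2 + Real.log Real.pi / 2 := by
    rw [gamma52, Real.log_mul (by norm_num) hsq.ne', Real.log_sqrt hpi.le, Real.log_div (by norm_num) (by norm_num),
      show (4 : ℝ) = 2 ^ 2 by norm_num, Real.log_pow]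
    push_cast; ring
  have G92 : Real.log (Real.Gamma (2 + 5 / 2)) = Real.log 105 - 4 * Real.log 2 + Real.log Real.pi / 2 := by
    rw [gamma92, Real.log_mul (by norm_num) hsq.ne', Real.log_sqrt hpi.le, Real.log_div (by norm_num) (by norm_num),
      show (16 : ℝ) = 2 ^ 4 by norm_num, Real.log_pow]
    push_cast; ring
  have G3 : Real.Gamma (2 + 1) = 2 := by
    have := Real.Gamma_nat_eq_factorial 2
    norm_num [Nat.factorial] at this ⊢
  have G4 : Real.Gamma (2 + 2) = 6 := by
    have := Real.Gamma_nat_eq_factorial 3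
    norm_num [Nat.factorial] at this ⊢
  have l6 : Real.log 6 = Real.log 2 + Real.log 3 := by
    rw [← Real.log_mul (by norm_num) (by norm_num)]; norm_num
  have l32 : Real.log (3 / 2) = Real.log 3 - Real.log 2 := Real.log_div (by norm_num) (by norm_num)
  have l83 : Real.log (8 / 3) = 3 * Real.log 2 - Real.log 3 := by
    rw [Real.log_div (by norm_num) (by norm_num), show (8 : ℝ) = 2 ^ 3 by norm_num, Real.log_pow]
    push_cast; ring
  have p52 : (2 / 3 : ℝ) ^ (5 / 2 : ℝ) = 4 / 9 * (2 / 3 : ℝ) ^ (1 / 2 : ℝ) := by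
    rw [show (5 / 2 : ℝ) = 2 + 1 / 2 by norm_num, Real.rpow_add (by norm_num), Real.rpow_two]; norm_num
  have p2 : (2 / 3 : ℝ) ^ (2 : ℝ) = 4 / 9 := by rw [Real.rpow_two]; norm_num
  rcases le_total σ (1 / 2) with h | h
  · refine chord 0 (1 / 2) 1 le_rfl one_pos ?_ ?_ σ h0 h
    · simp
    · rw [G52, l2pi, Real.log_one]
      norm_num at a1 a2 a3 a5 a6 a7 ⊢
      linarith
  rcases le_total σ 1 with h' | h'
  · refine chord (1 / 2) 1 (3 / 2) (by norm_num) (by norm_num) ?_ ?_ σ h h'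
    · rw [G52, l2pi, l32]
      norm_num at a1 a2 a3 a5 a6 a7 ⊢
      linarith
    · rw [G3, l2pi, l32, Real.rpow_one]
      norm_num at a1 a2 a3 a5 a6 a7 ⊢
      linarith
  rcases le_total σ 2 with h'' | h''
  · refine chord 1 2 2 (by norm_num) (by norm_num) ?_ ?_ σ h' h''
    · rw [G3, l2pi, Real.rpow_one]
      norm_num at a1 a2 a3 a5 a6 a7 ⊢
      linarith
    · rw [G4, l2pi, p2, l6]
      norm_num at a1 a2 a3 a5 a6 a7 ⊢
      linarith
  · refine chord 2 (5 / 2) (8 / 3) (by norm_num) (by norm_num) ?_ ?_ σ h'' h1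
    · rw [G4, l2pi, p2, l6, l83]
      norm_num at a1 a2 a3 a5 a6 a7 ⊢
      linarith
    · rw [G92, l2pi, p52, l83]
      norm_num at a1 a2 a3 a5 a6 a7 ⊢
      linarith

end KB


namespace KB
open MeasureTheory NumberField NumberField.mixedEmbedding NumberField.mixedEmbedding.fundamentalCone
open NumberField.InfinitePlace NumberField.Units Module
open scoped ENNReal Classical Pointwise


variable {K : Type*} [Field K] [NumberField K]
open nonZeroDivisors

theorem logD_ge (hn : 2 ≤ finrank ℚ K) :
    (4 / 5 : ℝ) * ((finrank ℚ K - 1 : ℕ) : ℝ) ≤ Real.log |(discr K : ℝ)| := by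
  have h := abs_discr_ge (K := K) (by omega)
  obtain ⟨N, hN⟩ : ∃ N, finrank ℚ K = N + 1 := ⟨finrank ℚ K - 1, by omega⟩
  rw [hN] at h ⊢
  simp only [Nat.add_sub_cancel]
  have hpi := Real.pi_gt_three
  have hpi2 := Real.pi_gt_d2
  have he : Real.exp (4 / 5) ≤ 3 * Real.pi / 4 := by
    have h1 : Real.exp (4 / 5) ^ 5 ≤ (2.355 : ℝ) ^ 5 := by
      rw [← Real.exp_nat_mul]
      have : ((5 : ℕ) : ℝ) * (4 / 5) = ((4 : ℕ) : ℝ) * 1 := by norm_num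
      rw [this, Real.exp_nat_mul]
      calc Real.exp 1 ^ 4 ≤ (2.7182818286 : ℝ) ^ 4 :=
            pow_le_pow_left₀ (Real.exp_pos _).le Real.exp_one_lt_d9.le 4
        _ ≤ _ := by norm_num
    have h2 := le_of_pow_le_pow_left₀ (by norm_num) (by norm_num) h1
    linarith
  have hc : (((|discr K| : ℤ)) : ℝ) = |(discr K : ℝ)| := by push_cast; rfl
  rw [hc] at h
  have hp : 0 < (3 * Real.pi / 4) := by positivity
  rw [Real.le_log_iff_exp_le (lt_of_lt_of_le (by positivity) h)]
  refine le_trans ?_ h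
  rw [mul_comm, Real.exp_nat_mul]
  have h3 : Real.exp (4 / 5) ^ N ≤ (3 * Real.pi / 4) ^ N := pow_le_pow_left₀ (Real.exp_pos _).le he N
  rw [pow_succ]
  have h4 : 0 < (3 * Real.pi / 4) ^ N := by positivity
  nlinarith

theorem real_master (σ : ℝ) (hσ : 0 < σ) :
    classNumber K * (2 ^ nrRealPlaces K * Real.pi ^ nrComplexPlaces K * regulator K) *
      ((1 / √|(discr K : ℝ)|) ^ (1 + σ) / ((1 + σ) * σ)) ≤
    torsionOrder K * ((2 / ((1 + σ) * (2 + σ))) ^ nrRealPlaces K *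
        (Real.pi * ((2 * Real.pi) ^ (-(1 + σ)) * Real.Gamma (1 + σ))) ^ nrComplexPlaces K) *
      ((σ + (2 / 3 : ℝ) ^ σ) / σ) ^ finrank ℚ K := by
  have h := master (K := K) (1 + σ) (by linarith)
  have hz := (zK_le (K := K) (1 + σ) (by linarith)).trans (pow_le_pow_left' (zeta_le σ hσ) _)
  have h2 := h.trans (mul_le_mul_right hz _)
  have hG := Real.Gamma_pos_of_pos (by linarith : 0 < 1 + σ)
  have e : 1 + (2 / 3 : ℝ) ^ σ / σ = (σ + (2 / 3 : ℝ) ^ σ) / σ := by field_simp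
  rw [e, ← ENNReal.ofReal_pow (by positivity), ← ENNReal.ofReal_mul (by positivity)] at h2
  have h3 := (ENNReal.ofReal_le_ofReal_iff (by positivity)).1 h2
  rw [show 1 + σ - 1 = σ by ring, show 1 + σ + 1 = 2 + σ by ring] at h3
  exact h3

theorem Q_le (σ : ℝ) (hσ : 0 < σ) (h52 : σ ≤ 5 / 2) (r1 r2 : ℕ) (hr : 2 ≤ r1 + 2 * r2) :
    (1 + σ) * ((2 * (σ + (2 / 3 : ℝ) ^ σ) / ((1 + σ) * (2 + σ))) ^ r1 *
      ((2 * Real.pi) ^ (-σ) * Real.Gamma (1 + σ) * (σ + (2 / 3 : ℝ) ^ σ) ^ 2) ^ r2) ≤ 1 := by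
  set u : ℝ := σ + (2 / 3 : ℝ) ^ σ with hu
  have hu0 : 0 < u := by positivity
  have hu1 : u ≤ 1 + σ := by
    have : (2 / 3 : ℝ) ^ σ ≤ 1 := Real.rpow_le_one (by norm_num) (by norm_num) hσ.le
    linarith
  have hG := Real.Gamma_pos_of_pos (by linarith : 0 < 1 + σ)
  set f1 : ℝ := 2 * u / ((1 + σ) * (2 + σ)) with hf1
  set f2 : ℝ := (2 * Real.pi) ^ (-σ) * Real.Gamma (1 + σ) * u ^ 2 with hf2
  have hf10 : 0 < f1 := by positivity
  have hf20 : 0 < f2 := by positivity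
  have hf1' : f1 ≤ 2 / (2 + σ) := by
    rw [hf1, div_le_div_iff₀ (by positivity) (by positivity)]
    nlinarith
  have hf11 : f1 ≤ 1 := hf1'.trans (by rw [div_le_one (by positivity)]; linarith)
  have hs1 : (1 + σ) * f1 ^ 2 ≤ 1 := by
    have h1 : f1 ^ 2 ≤ (2 / (2 + σ)) ^ 2 := pow_le_pow_left₀ hf10.le hf1' 2
    have h2 : (1 + σ) * (2 / (2 + σ)) ^ 2 ≤ 1 := by
      rw [div_pow, ← mul_div_assoc, div_le_one (by positivity)]; nlinarith
    nlinarith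
  have hs2 : (1 + σ) * f2 ≤ 1 := by
    have h := final_num σ hσ.le h52
    have hG2 : Real.Gamma (2 + σ) = (1 + σ) * Real.Gamma (1 + σ) := by
      rw [show 2 + σ = (1 + σ) + 1 by ring, Real.Gamma_add_one (by linarith)]
    have e : (1 + σ) * f2 = Real.Gamma (2 + σ) * (2 * Real.pi) ^ (-σ) * u ^ 2 := by
      rw [hf2, hG2]; ring
    have hp : 0 < (1 + σ) * f2 := by positivity
    have hG2' : 0 < Real.Gamma (2 + σ) := by rw [hG2]; positivity
    rw [← Real.log_nonpos_iff hp.le, e, Real.log_mul (by positivity) (by positivity),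
      Real.log_mul (by positivity) (by positivity), Real.log_rpow (by positivity), Real.log_pow]
    push_cast
    linarith
  have hf21 : f2 ≤ 1 := by nlinarith
  rcases Nat.eq_zero_or_pos r2 with h0 | h0
  · have h2 : 2 ≤ r1 := by omega
    subst h0
    have := pow_le_pow_of_le_one hf10.le hf11 h2
    rw [pow_zero, mul_one]
    nlinarith
  · have h1 : f2 ^ r2 ≤ f2 ^ 1 := pow_le_pow_of_le_one hf20.le hf21 h0
    have h2 : f1 ^ r1 ≤ 1 := pow_le_one₀ hf10.le hf11
    rw [pow_one] at h1
    calc (1 + σ) * (f1 ^ r1 * f2 ^ r2) ≤ (1 + σ) * (1 * f2) := by gcongr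
      _ ≤ 1 := by rw [one_mul]; exact hs2

theorem upper_bound (hn : 2 ≤ finrank ℚ K) :
    2 ^ nrRealPlaces K * (2 * Real.pi) ^ nrComplexPlaces K * classNumber K * regulator K /
      (torsionOrder K * √|(discr K : ℝ)|) ≤
    (Real.exp 1 * Real.log |(discr K : ℝ)| / (2 * ((finrank ℚ K - 1 : ℕ) : ℝ))) ^ (finrank ℚ K - 1) := by
  have hL := logD_ge (K := K) hn
  have hD : 0 < |(discr K : ℝ)| := by
    rw [abs_pos]; exact_mod_cast discr_ne_zero K
  set D : ℝ := |(discr K : ℝ)| with hDd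
  set L := Real.log D with hLd
  have hr := card_add_two_mul_card_eq_rank K
  set n := finrank ℚ K with hnd
  set r1 := nrRealPlaces K with hr1
  set r2 := nrComplexPlaces K with hr2
  set N := n - 1 with hN
  have hN1 : (1 : ℝ) ≤ N := by
    have : 1 ≤ N := by omega
    exact_mod_cast this
  have hL0 : 0 < L := by nlinarith
  set σ : ℝ := 2 * N / L with hσd
  have hσ : 0 < σ := by positivity
  have h52 : σ ≤ 5 / 2 := by
    rw [hσd, div_le_iff₀ hL0]; linarith
  have hm := real_master (K := K) σ hσ
  rw [← hDd, ← hnd, ← hr1, ← hr2] at hm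
  have hQ := Q_le σ hσ h52 r1 r2 (by omega)
  set u : ℝ := σ + (2 / 3 : ℝ) ^ σ with hu
  have hu0 : 0 < u := by positivity
  have hG := Real.Gamma_pos_of_pos (by linarith : 0 < 1 + σ)
  set q := √D with hq
  have hq0 : 0 < q := Real.sqrt_pos.2 hD
  have hw : (0 : ℝ) < torsionOrder K := by exact_mod_cast torsionOrder_pos K
  have hqσ : q ^ σ = Real.exp 1 ^ N := by
    rw [Real.rpow_def_of_pos hq0, hq, Real.log_sqrt hD.le, ← hLd, ← Real.exp_nat_mul]
    congr 1
    rw [hσd]; field_simp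
  have hrhs : Real.exp 1 * L / (2 * (N : ℝ)) = Real.exp 1 / σ := by
    rw [hσd]; field_simp
  rw [hrhs, div_pow, ← hqσ]
  set X : ℝ := classNumber K * (2 ^ r1 * Real.pi ^ r2 * regulator K) with hX
  set B : ℝ := (2 / ((1 + σ) * (2 + σ))) ^ r1 *
        (Real.pi * ((2 * Real.pi) ^ (-(1 + σ)) * Real.Gamma (1 + σ))) ^ r2 with hB
  have hX1 : X ≤ torsionOrder K * B * (u / σ) ^ n * ((1 + σ) * σ * (q * q ^ σ)) := by
    have e : (1 / q) ^ (1 + σ) / ((1 + σ) * σ) = 1 / ((1 + σ) * σ * (q * q ^ σ)) := by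
      rw [one_div, Real.inv_rpow hq0.le, Real.rpow_add hq0, Real.rpow_one]
      field_simp
    rw [e, mul_one_div, div_le_iff₀ (by positivity)] at hm
    exact hm
  have hlhs : 2 ^ r1 * (2 * Real.pi) ^ r2 * classNumber K * regulator K / (torsionOrder K * q) =
      2 ^ r2 * X / (torsionOrder K * q) := by
    rw [hX, mul_pow]; ring
  rw [hlhs, div_le_iff₀ (by positivity)]
  have hmain : 2 ^ r2 * B * (u / σ) ^ n * ((1 + σ) * σ) =
      (1 + σ) * ((2 * u / ((1 + σ) * (2 + σ))) ^ r1 *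
      ((2 * Real.pi) ^ (-σ) * Real.Gamma (1 + σ) * u ^ 2) ^ r2) / σ ^ N := by
    have hn' : n = r1 + 2 * r2 := hr.symm
    have hnN : n = N + 1 := by omega
    have e1 : (2 * Real.pi) ^ (-(1 + σ)) = (2 * Real.pi) ^ (-σ) / (2 * Real.pi) := by
      rw [neg_add, add_comm, Real.rpow_add (by positivity), Real.rpow_neg_one]; rfl
    have e2 : (2 : ℝ) ^ r2 * (Real.pi * ((2 * Real.pi) ^ (-(1 + σ)) * Real.Gamma (1 + σ))) ^ r2 =
        ((2 * Real.pi) ^ (-σ) * Real.Gamma (1 + σ)) ^ r2 := by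
      rw [← mul_pow, e1]
      congr 1
      have := Real.pi_pos
      field_simp
    have e3 : (u / σ) ^ n * σ = u ^ r1 * (u ^ 2) ^ r2 / σ ^ N := by
      rw [div_pow, ← pow_mul, ← pow_add, ← hn', hnN, pow_succ σ]
      field_simp
    calc 2 ^ r2 * B * (u / σ) ^ n * ((1 + σ) * σ) =
        (1 + σ) * ((2 / ((1 + σ) * (2 + σ))) ^ r1 *
          ((2 : ℝ) ^ r2 * (Real.pi * ((2 * Real.pi) ^ (-(1 + σ)) * Real.Gamma (1 + σ))) ^ r2)) *
          ((u / σ) ^ n * σ) := by rw [hB]; ring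
      _ = _ := by
        rw [e2, e3, mul_pow _ (u ^ 2) r2, mul_div_right_comm 2 u, mul_pow _ u r1]
        ring
  calc 2 ^ r2 * X ≤ 2 ^ r2 * (torsionOrder K * B * (u / σ) ^ n * ((1 + σ) * σ * (q * q ^ σ))) := by gcongr
    _ = (2 ^ r2 * B * (u / σ) ^ n * ((1 + σ) * σ)) * (torsionOrder K * (q * q ^ σ)) := by ring
    _ ≤ (1 / σ ^ N) * (torsionOrder K * (q * q ^ σ)) := by
        rw [hmain]; gcongr
    _ = _ := by ring

end KB

/-- Let `g ∈ ℤ[x]` be irreducible with degree `d ≥ 2` and leading coefficient `c`, let `α`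
be a root of `g` and `K = ℚ(α)`. With `𝐃_g = |c|^{(d-1)(d-2)} |D_g|`, the Dedekind zeta
residue satisfies `0.36232/√𝐃_g ≤ κ_K ≤ (e log 𝐃_g / (2(d-1)))^{d-1}`. -/
theorem kappa_bounds (g : Polynomial ℤ) (hirr : Irreducible g)
    (d : ℕ) (hd : d = g.natDegree) (hd2 : 2 ≤ d)
    (c : ℤ) (hc : c = g.leadingCoeff)
    (K : Type*) [Field K] [NumberField K] (α : K)
    (hroot : Polynomial.aeval α g = 0)
    (hgen : IntermediateField.adjoin ℚ {α} = ⊤)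
    (Dg : ℝ) (hDg : Dg = (|c| : ℝ) ^ ((d - 1) * (d - 2)) * (|polyDisc g| : ℝ)) :
    0.36232 / Real.sqrt Dg ≤ kappa K ∧
      kappa K ≤ (Real.exp 1 * Real.log Dg / (2 * ((d : ℝ) - 1))) ^ (d - 1) := by
  subst hd hc
  obtain ⟨hle, hfr⟩ := KB.discr_le g hirr hd2 K α hroot hgen
  rw [Int.cast_abs, ← hDg] at hle
  have hn : 2 ≤ Module.finrank ℚ K := by rw [hfr]; exact hd2
  have hL := KB.lower_bound (K := K)
  have hU := KB.upper_bound (K := K) hn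
  have hlog := KB.logD_ge (K := K) hn
  have hpos : 0 < |(NumberField.discr K : ℝ)| := by
    have := NumberField.discr_ne_zero K
    positivity
  have hlogle : Real.log |(NumberField.discr K : ℝ)| ≤ Real.log Dg :=
    Real.log_le_log hpos hle
  have hcast : ((g.natDegree - 1 : ℕ) : ℝ) = (g.natDegree : ℝ) - 1 := by
    rw [Nat.cast_sub (by omega)]; simp
  rw [hfr, hcast] at hU hlog
  have hd1 : (0 : ℝ) < (g.natDegree : ℝ) - 1 := by
    have : (2 : ℝ) ≤ (g.natDegree : ℝ) := by exact_mod_cast hd2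
    linarith
  have hlog0 : 0 ≤ Real.log |(NumberField.discr K : ℝ)| := by
    refine le_trans ?_ hlog
    positivity
  constructor
  · have hs : 0 < Real.sqrt |(NumberField.discr K : ℝ)| := Real.sqrt_pos.mpr hpos
    have h1 : (0.36232 : ℝ) / Real.sqrt Dg ≤ 0.36232 / Real.sqrt |(NumberField.discr K : ℝ)| :=
      div_le_div_of_nonneg_left (by norm_num) hs (Real.sqrt_le_sqrt hle)
    refine h1.trans ?_
    unfold kappa
    rw [← div_div]
    exact div_le_div_of_nonneg_right hL hs.le
  · unfold kappa
    refine hU.trans (pow_le_pow_left₀ (by positivity) ?_ _)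
    gcongr
end

section
/- Let h ∈ ℤ[x] be monic and irreducible of degree d ≥ 1, let α ∈ ℂ be a root of h, and let K = ℚ(α) with ring of integers O_K. Then for every real x > √|D_h|, | Σ_{N(𝔭) ≤ x} 1/N(𝔭) − Σ_{p ≤ x} ω_h(p)/p | < d·( M_ℚ(√|D_h|) + 0.64 ), where the first sum runs over prime ideals 𝔭 ⊂ O_K of norm N(𝔭) ≤ x and the second over rational primes p ≤ x. -/
open Polynomial

/-- `ω_f(p)`: the number of `x ∈ ℤ/pℤ` with `f(x) ≡ 0 (mod p)`. -/
noncomputable def omegaPoly (f : Polynomial ℤ) (p : ℕ) : ℕ :=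
  {x : ZMod p | Polynomial.aeval x f = 0}.ncard

/-- `M_ℚ(x) = Σ_{p ≤ x} 1/p`, the sum over rational primes `p ≤ x`. -/
noncomputable def MQ (x : ℝ) : ℝ :=
  ∑ p ∈ Finset.filter Nat.Prime (Finset.range (⌊x⌋₊ + 1)), (1 : ℝ) / (p : ℝ)

/-- `Σ_{p ≤ x} ω_f(p)/p`, the sum over rational primes `p ≤ x`. -/
noncomputable def omegaSum (f : Polynomial ℤ) (x : ℝ) : ℝ :=
  ∑ p ∈ Finset.filter Nat.Prime (Finset.range (⌊x⌋₊ + 1)), (omegaPoly f p : ℝ) / (p : ℝ)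

/-- `M_K(x) = Σ_{N(𝔭) ≤ x} 1/N(𝔭)`, the sum over the (nonzero) prime ideals `𝔭` of the
ring of integers of `K` with absolute norm `N(𝔭) ≤ x`. -/
noncomputable def MK (K : Type*) [Field K] [NumberField K] (x : ℝ) : ℝ :=
  ∑' P : {P : Ideal (NumberField.RingOfIntegers K) //
      P.IsPrime ∧ P ≠ ⊥ ∧ (Ideal.absNorm P : ℝ) ≤ x},
    (1 : ℝ) / (Ideal.absNorm P.1 : ℝ)


theorem abs_resultantZ (f g : Polynomial ℤ) : |resultantZ f g| = |Polynomial.resultant g f| := by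
  let e1 : Equiv.Perm (Fin (g.natDegree + f.natDegree)) := Fin.revPerm
  let e2 : Equiv.Perm (Fin (g.natDegree + f.natDegree)) :=
    finSumFinEquiv.symm.trans ((Equiv.sumCongr Fin.revPerm Fin.revPerm).trans finSumFinEquiv)
  have key : (sylvesterMat f g).submatrix e1 e2
      = Polynomial.sylvester g f g.natDegree f.natDegree := by
    ext i j
    induction j using Fin.addCases with
    | left j =>
      have h2 : e2 (Fin.castAdd _ j) = Fin.castAdd _ (Fin.rev j) := by simp [e2]
      simp only [Matrix.submatrix_apply, h2, sylvesterMat, Polynomial.sylvester, Matrix.of_apply,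
        Fin.addCases_left, Fin.val_castAdd, e1, Fin.revPerm_apply, Fin.val_rev, Set.mem_Icc]
      have hi := i.2
      have hj := j.2
      rw [if_pos (by omega)]
      by_cases hc : (j : ℕ) ≤ i ∧ (i : ℕ) ≤ j + f.natDegree
      · rw [if_pos hc, if_pos (by omega)]
        congr 1
        omega
      · rw [if_neg hc, if_neg (by omega)]
    | right j =>
      have h2 : e2 (Fin.natAdd _ j) = Fin.natAdd _ (Fin.rev j) := by simp [e2]
      simp only [Matrix.submatrix_apply, h2, sylvesterMat, Polynomial.sylvester, Matrix.of_apply,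
        Fin.addCases_right, Fin.val_natAdd, e1, Fin.revPerm_apply, Fin.val_rev, Set.mem_Icc]
      have hi := i.2
      have hj := j.2
      rw [if_neg (by omega)]
      by_cases hc : (j : ℕ) ≤ i ∧ (i : ℕ) ≤ j + g.natDegree
      · rw [if_pos hc, if_pos (by omega)]
        congr 1
        omega
      · rw [if_neg hc, if_neg (by omega)]
  rw [resultantZ, Polynomial.resultant, ← key]
  have : (sylvesterMat f g).submatrix e1 e2
      = ((sylvesterMat f g).submatrix e1 id).submatrix id e2 := by simp
  rw [this, Matrix.det_permute', Matrix.det_permute, abs_mul, abs_mul]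
  have hs : ∀ s : Equiv.Perm (Fin (g.natDegree + f.natDegree)),
      |((Equiv.Perm.sign s : ℤˣ) : ℤ)| = 1 := fun s => by
    rcases Int.units_eq_one_or (Equiv.Perm.sign s) with h | h <;> simp [h]
  simp [hs]

theorem abs_polyDisc (h : Polynomial ℤ) (hm : h.Monic) :
    |polyDisc h| = |Polynomial.resultant h (derivative h)| := by
  rw [polyDisc, hm.leadingCoeff, Int.ediv_one, abs_mul, abs_resultantZ, Polynomial.resultant_comm,
    abs_mul]
  simp

theorem exists_pb (K : Type*) [Field K] [NumberField K] (α : K)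
    (hgen : IntermediateField.adjoin ℚ {α} = ⊤) : ∃ pb : PowerBasis ℚ K, pb.gen = α := by
  have hi : IsIntegral ℚ α := Algebra.IsIntegral.isIntegral α
  exact ⟨PowerBasis.ofAdjoinEqTop hi (by
    rw [← IntermediateField.adjoin_simple_toSubalgebra_of_isAlgebraic hi.isAlgebraic, hgen]; rfl),
    by simp⟩

theorem minpoly_eq (h : Polynomial ℤ) (hmonic : h.Monic)
    (hirr : Irreducible h) (K : Type*) [Field K] [NumberField K] (α : K)
    (hroot : Polynomial.aeval α h = 0) : minpoly ℚ α = h.map (Int.castRingHom ℚ) := by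
  refine (minpoly.eq_of_irreducible_of_monic ?_ ?_ (hmonic.map _)).symm
  · exact (hmonic.irreducible_iff_irreducible_map_fraction_map (K := ℚ)).1 hirr
  · rw [← hroot]; exact aeval_map_algebraMap ℚ α h

theorem norm_eq_resultant (K : Type*) [Field K] [NumberField K] (pb : PowerBasis ℚ K)
    (g : ℚ[X]) :
    Algebra.norm ℚ (aeval pb.gen g) = Polynomial.resultant (minpoly ℚ pb.gen) g := by
  let E := AlgebraicClosure ℚ
  apply (algebraMap ℚ E).injective
  rw [Algebra.norm_eq_prod_embeddings ℚ E, ← resultant_map_map]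
  have hm : (minpoly ℚ pb.gen).Monic := minpoly.monic (Algebra.IsIntegral.isIntegral _)
  have hsep : (minpoly ℚ pb.gen).Separable := (minpoly.irreducible (Algebra.IsIntegral.isIntegral _)).separable
  have := Polynomial.resultant_eq_prod_eval ((minpoly ℚ pb.gen).map (algebraMap ℚ E))
    (g.map (algebraMap ℚ E)) g.natDegree (by simp) (IsAlgClosed.splits _)
  rw [natDegree_map] at this
  rw [this, (hm.map _).leadingCoeff, one_pow, one_mul]
  have hnd : ((minpoly ℚ pb.gen).aroots E).Nodup := nodup_roots hsep.map
  have h2 : ((minpoly ℚ pb.gen).map (algebraMap ℚ E)).roots = (minpoly ℚ pb.gen).aroots E := rfl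
  let := Classical.decEq E
  rw [h2, Fintype.prod_equiv (pb.liftEquiv' (B := E)) _
    (fun x => (g.map (algebraMap ℚ E)).eval (x : E)) ?_]
  · rw [Finset.prod_mem_multiset _ _ (fun x => (g.map (algebraMap ℚ E)).eval (x : E)),
      Finset.prod_eq_multiset_prod, Multiset.toFinset_val,
      Multiset.dedup_eq_self.mpr hnd]
    intro x; rfl
  · intro σ
    simp only [PowerBasis.liftEquiv'_apply_coe]
    rw [← aeval_algHom_apply, eval_map_algebraMap]

theorem det_mem_conductor {O : Type*} [CommRing O] {n : ℕ} (θ : O)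
    (b : Module.Basis (Fin n) ℤ O) (v : Fin n → O) {P : Matrix (Fin n) (Fin n) ℤ}
    (hv : Matrix.vecMul b (P.map (algebraMap ℤ O)) = v)
    (hmem : ∀ i, v i ∈ Algebra.adjoin ℤ {θ}) : ((P.det : ℤ) : O) ∈ conductor ℤ θ := by
  rw [mem_conductor_iff]
  have hb : ∀ i, ((P.det : ℤ) : O) * b i ∈ Algebra.adjoin ℤ {θ} := by
    intro i
    have e1 : Matrix.vecMul v (P.adjugate.map (algebraMap ℤ O)) i = ((P.det : ℤ) : O) * b i := by
      rw [← hv, Matrix.vecMul_vecMul, ← Matrix.map_mul, Matrix.mul_adjugate]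
      simp only [Matrix.vecMul, dotProduct, Matrix.map_apply, Matrix.smul_apply, Matrix.one_apply]
      rw [Finset.sum_eq_single i]
      · simp [mul_comm]
      · intro j _ hj
        simp [hj]
      · simp
    rw [← e1]
    simp only [Matrix.vecMul, dotProduct]
    exact Subalgebra.sum_mem _ fun j _ => Subalgebra.mul_mem _ (hmem j)
      (Subalgebra.algebraMap_mem _ _)
  intro y
  rw [← b.sum_repr y, Finset.mul_sum]
  refine Subalgebra.sum_mem _ fun j _ => ?_
  rw [mul_smul_comm]
  exact Subalgebra.smul_mem _ (hb j) _

open NumberField in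
theorem disc_key (h : Polynomial ℤ) (hmonic : h.Monic)
    (hirr : Irreducible h) (K : Type*) [Field K] [NumberField K] (θ : 𝓞 K)
    (hroot : Polynomial.aeval (θ : K) h = 0)
    (hgen : IntermediateField.adjoin ℚ {(θ : K)} = ⊤) :
    polyDisc h ≠ 0 ∧ ∃ m : ℤ, |polyDisc h| = m ^ 2 * |discr K| ∧
      (m : 𝓞 K) ∈ conductor ℤ θ := by
  classical
  obtain ⟨pb, hpb⟩ := exists_pb K _ hgen
  have hmin := minpoly_eq h hmonic hirr K _ hroot
  have hD : ((|polyDisc h| : ℤ) : ℚ) = |Algebra.discr ℚ pb.basis| := by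
    rw [Algebra.discr_powerBasis_eq_norm, norm_eq_resultant, hpb, hmin, derivative_map,
      natDegree_map_eq_of_injective (Int.castRingHom ℚ).injective_int,
      natDegree_map_eq_of_injective (Int.castRingHom ℚ).injective_int,
      resultant_map_map, abs_polyDisc h hmonic, abs_mul]
    simp
  let b : Module.Basis (Fin pb.dim) ℤ (𝓞 K) :=
    (RingOfIntegers.basis K).reindex ((integralBasis K).indexEquiv pb.basis)
  let v : Fin pb.dim → 𝓞 K := fun i => θ ^ (i : ℕ)
  let P := b.toMatrix v
  have hv : Matrix.vecMul b (P.map (algebraMap ℤ (𝓞 K))) = v := Module.Basis.toMatrix_map_vecMul _ _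
  have h1 : Algebra.discr ℤ v = P.det ^ 2 * discr K := by
    rw [← hv, Algebra.discr_of_matrix_vecMul, NumberField.discr_eq_discr]
  have h2 : ((Algebra.discr ℤ v : ℤ) : ℚ) = Algebra.discr ℚ pb.basis := by
    rw [Algebra.discr_def, Algebra.discr_def, ← eq_intCast (Int.castRingHom ℚ), RingHom.map_det]
    congr 1
    ext i j
    simp only [RingHom.mapMatrix_apply, Matrix.map_apply, Algebra.traceMatrix_apply,
      Algebra.traceForm_apply, PowerBasis.coe_basis, hpb, v, Int.coe_castRingHom,
      Algebra.coe_trace_int]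
    simp
  have h3 : |polyDisc h| = P.det ^ 2 * |discr K| := by
    have : ((|polyDisc h| : ℤ) : ℚ) = ((P.det ^ 2 * |discr K| : ℤ) : ℚ) := by
      rw [hD, ← h2, h1]; push_cast; rw [abs_mul, abs_sq]
    exact_mod_cast this
  refine ⟨?_, P.det, h3, ?_⟩
  · intro h0
    rw [h0] at hD
    have := Algebra.discr_not_zero_of_basis ℚ pb.basis
    rw [abs_zero, Int.cast_zero] at hD
    exact this (abs_eq_zero.mp hD.symm)
  · exact det_mem_conductor θ b v hv (fun i => Subalgebra.pow_mem _ (Algebra.self_mem_adjoin_singleton ℤ θ) _)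

open NumberField in
theorem not_dvd_exponent (h : Polynomial ℤ) (hmonic : h.Monic)
    (hirr : Irreducible h) (K : Type*) [Field K] [NumberField K] (θ : 𝓞 K)
    (hroot : Polynomial.aeval (θ : K) h = 0)
    (hgen : IntermediateField.adjoin ℚ {(θ : K)} = ⊤) (p : ℕ) [hp : Fact p.Prime]
    (hlt : Real.sqrt (|polyDisc h| : ℝ) < p) : ¬ p ∣ RingOfIntegers.exponent θ := by
  obtain ⟨h0, m, hm, hc⟩ := disc_key h hmonic hirr K θ hroot hgen
  have hpm : ¬ (p : ℤ) ∣ m := by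
    intro hd
    have h1 : (p : ℤ) ^ 2 ∣ |polyDisc h| := by
      rw [hm]; exact Dvd.dvd.mul_right (pow_dvd_pow_of_dvd hd 2) _
    have h2 := Int.le_of_dvd (abs_pos.mpr h0) h1
    rw [Real.sqrt_lt' (by exact_mod_cast hp.out.pos)] at hlt
    have h3 : |polyDisc h| < (p : ℤ) ^ 2 := by exact_mod_cast hlt
    omega
  rw [RingOfIntegers.not_dvd_exponent_iff, codisjoint_iff, Ideal.eq_top_iff_one]
  have hcop : IsCoprime m (p : ℤ) :=
    ((Nat.prime_iff_prime_int.mp hp.out).coprime_iff_not_dvd.mpr hpm).symm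
  obtain ⟨u, w, huw⟩ := hcop
  rw [← huw]
  refine Submodule.add_mem_sup (Ideal.mul_mem_left _ _ ?_) (Ideal.mul_mem_left _ _ ?_)
  · simpa [Ideal.mem_comap] using hc
  · exact Ideal.mem_span_singleton_self _

theorem omegaPoly_eq (h : Polynomial ℤ) (hmonic : h.Monic) (p : ℕ) [Fact p.Prime] :
    omegaPoly h p = (h.map (Int.castRingHom (ZMod p))).roots.toFinset.card := by
  classical
  rw [omegaPoly, ← Set.ncard_coe_finset]
  congr 1
  ext x
  have h0 : h.map (Int.castRingHom (ZMod p)) ≠ 0 := (hmonic.map _).ne_zero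
  simp only [Set.mem_ofPred_eq, Finset.mem_coe, Multiset.mem_toFinset, mem_roots h0, IsRoot.def]
  rw [eval_map, aeval_def]
  rfl

theorem omegaPoly_le (h : Polynomial ℤ) (hmonic : h.Monic) (p : ℕ) [Fact p.Prime] :
    omegaPoly h p ≤ h.natDegree := by
  classical
  rw [omegaPoly_eq h hmonic p]
  exact (Multiset.toFinset_card_le _).trans ((card_roots' _).trans natDegree_map_le)

open NumberField

theorem span_p_ne_bot (p : ℕ) [hp : Fact p.Prime] : Ideal.span {(p : ℤ)} ≠ ⊥ := by
  simp [hp.out.ne_zero]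

theorem inertia_facts (K : Type*) [Field K] [NumberField K] (p : ℕ) [hp : Fact p.Prime] :
    (∀ P ∈ IsDedekindDomain.primesOverFinset (Ideal.span {(p : ℤ)}) (𝓞 K),
      Ideal.absNorm P = p ^ (Ideal.inertiaDeg P ℤ) ∧ 1 ≤ Ideal.inertiaDeg P ℤ) ∧
    ∑ P ∈ IsDedekindDomain.primesOverFinset (Ideal.span {(p : ℤ)}) (𝓞 K), Ideal.inertiaDeg P ℤ
      ≤ Module.finrank ℚ K := by
  have hmax : (Ideal.span {(p : ℤ)}).IsMaximal := Int.ideal_span_isMaximal_of_prime p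
  have hb := span_p_ne_bot p
  have heq : ∀ P ∈ IsDedekindDomain.primesOverFinset (Ideal.span {(p : ℤ)}) (𝓞 K),
      Ideal.inertiaDeg P ℤ = Ideal.inertiaDeg' (Ideal.span {(p : ℤ)}) P ∧
      1 ≤ Ideal.inertiaDeg' (Ideal.span {(p : ℤ)}) P ∧
      1 ≤ Ideal.ramificationIdx' (Ideal.span {(p : ℤ)}) P ∧ 
      Ideal.absNorm P = p ^ (Ideal.inertiaDeg' (Ideal.span {(p : ℤ)}) P) := by
    intro P hP
    rw [IsDedekindDomain.mem_primesOverFinset_iff hb] at hP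
    have h1 : P.IsPrime := hP.1
    have h2 : P.LiesOver (Ideal.span {(p : ℤ)}) := hP.2
    have h3 : P.IsMaximal := Ideal.IsMaximal.of_liesOver_isMaximal P (Ideal.span {(p : ℤ)})
    refine ⟨?_, Ideal.inertiaDeg'_pos _ _, ?_, Ideal.absNorm_eq_pow_inertiaDeg' P hp.out⟩
    · rw [Ideal.inertiaDeg'_algebraMap, Ideal.inertiaDeg_eq_of_isMaximal (Ideal.span {(p : ℤ)})]
    · exact Nat.pos_iff_ne_zero.mpr <| Ideal.IsDedekindDomain.ramificationIdx'_ne_zero_of_liesOver _ hb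
  refine ⟨fun P hP => ?_, ?_⟩
  · obtain ⟨h1, h2, h3, h4⟩ := heq P hP
    rw [h1]; exact ⟨h4, h2⟩
  · rw [← Ideal.sum_ramification_inertia (𝓞 K) ℚ K hb]
    refine Finset.sum_le_sum fun P hP => ?_
    obtain ⟨h1, h2, h3, h4⟩ := heq P hP
    rw [h1]
    exact Nat.le_mul_of_pos_left _ h3

open UniqueFactorizationMonoid in
theorem card_deg_one (h : Polynomial ℤ) (hmonic : h.Monic)
    (K : Type*) [Field K] [NumberField K] (θ : 𝓞 K) (hmin : minpoly ℤ θ = h)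
    (p : ℕ) [hp : Fact p.Prime] (hexp : ¬ p ∣ RingOfIntegers.exponent θ) :
    ((IsDedekindDomain.primesOverFinset (Ideal.span {(p : ℤ)}) (𝓞 K)).filter
      (fun P => Ideal.inertiaDeg P ℤ = 1)).card = omegaPoly h p := by
  classical
  have hb := span_p_ne_bot p
  rw [omegaPoly_eq h hmonic p]
  have h0 : h.map (Int.castRingHom (ZMod p)) ≠ 0 := (hmonic.map _).ne_zero
  have hmem : ∀ a ∈ (h.map (Int.castRingHom (ZMod p))).roots.toFinset,
      (X - C a) ∈ RingOfIntegers.monicFactorsMod θ p := by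
    intro a ha
    rw [Multiset.mem_toFinset, mem_roots h0] at ha
    rw [Multiset.mem_toFinset, hmin, Polynomial.mem_normalizedFactors_iff h0]
    exact ⟨irreducible_X_sub_C a, monic_X_sub_C a, dvd_iff_isRoot.mpr ha⟩
  let e := Ideal.primesOverSpanEquivMonicFactorsMod hexp
  symm
  refine Finset.card_bij (fun a ha => ((e.symm ⟨X - C a, hmem a ha⟩ :
    Ideal.primesOver (Ideal.span {(p : ℤ)}) (𝓞 K)) : Ideal (𝓞 K))) ?_ ?_ ?_
  · intro a ha
    rw [Finset.mem_filter, IsDedekindDomain.mem_primesOverFinset_iff hb]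
    refine ⟨Subtype.coe_prop _, ?_⟩
    rw [Ideal.inertiaDeg_primesOverSpanEquivMonicFactorsMod_symm_apply' hexp (hmem a ha)]
    exact natDegree_X_sub_C a
  · intro a ha b hb' hab
    have := e.symm.injective (Subtype.ext hab)
    have := congrArg Subtype.val this
    simpa using this
  · intro P hP
    rw [Finset.mem_filter, IsDedekindDomain.mem_primesOverFinset_iff hb] at hP
    obtain ⟨⟨Q, hQ⟩, hQe⟩ := e.symm.surjective ⟨P, hP.1⟩
    have hdeg := Ideal.inertiaDeg_primesOverSpanEquivMonicFactorsMod_symm_apply' hexp hQ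
    have hQe' : ((e.symm ⟨Q, hQ⟩ :
      Ideal.primesOver (Ideal.span {(p : ℤ)}) (𝓞 K)) : Ideal (𝓞 K)) = P := by rw [hQe]
    rw [show ((Ideal.primesOverSpanEquivMonicFactorsMod hexp).symm ⟨Q, hQ⟩ : Ideal (𝓞 K)) = P
      from hQe', hP.2] at hdeg
    have hQ2 := hQ
    rw [Multiset.mem_toFinset, hmin, Polynomial.mem_normalizedFactors_iff h0] at hQ2
    have hQX : Q = X - C (-Q.coeff 0) := by
      rw [hQ2.2.1.eq_X_add_C hdeg.symm]; simp
    refine ⟨-Q.coeff 0, ?_, ?_⟩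
    · rw [Multiset.mem_toFinset, mem_roots h0, ← dvd_iff_isRoot, ← hQX]
      exact hQ2.2.2
    · rw [← hQe']
      have hsub : ∀ R (hR : R ∈ RingOfIntegers.monicFactorsMod θ p), R = Q →
          ((e.symm ⟨R, hR⟩ : Ideal.primesOver (Ideal.span {(p : ℤ)}) (𝓞 K)) : Ideal (𝓞 K))
          = ((e.symm ⟨Q, hQ⟩ : Ideal.primesOver (Ideal.span {(p : ℤ)}) (𝓞 K)) : Ideal (𝓞 K)) := by
        intro R hR hRQ
        subst hRQ
        rfl
      exact hsub _ _ hQX.symm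

theorem sum_sq_le (N : ℕ) :
    ∑ p ∈ Finset.filter Nat.Prime (Finset.range (N + 2)), (1 : ℝ) / (p : ℝ) ^ 2
      ≤ 1 - 1 / ((N : ℝ) + 1) := by
  induction N with
  | zero =>
    have : Finset.filter Nat.Prime (Finset.range (0 + 2)) = ∅ := by decide
    rw [this]; simp
  | succ N ih =>
    rw [show N + 1 + 2 = (N + 2) + 1 by ring, Finset.range_add_one, Finset.filter_insert]
    have hstep : (1 : ℝ) / ((N + 2 : ℕ) : ℝ) ^ 2 ≤ 1 / ((N : ℝ) + 1) - 1 / ((N : ℝ) + 2) := by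
      have hN : (0 : ℝ) ≤ N := Nat.cast_nonneg N
      push_cast
      rw [div_sub_div _ _ (by positivity) (by positivity), div_le_div_iff₀ (by positivity) (by positivity)]
      nlinarith
    have hpos : (0 : ℝ) ≤ 1 / ((N + 2 : ℕ) : ℝ) ^ 2 := by positivity
    have hc : (((N + 1 : ℕ) : ℝ) + 1) = (N : ℝ) + 2 := by push_cast; ring
    rw [hc]
    split_ifs
    · rw [Finset.sum_insert (by simp)]
      linarith
    · linarith

theorem sum_sq_le_one (N : ℕ) :
    ∑ p ∈ Finset.filter Nat.Prime (Finset.range (N + 1)), (1 : ℝ) / (p : ℝ) ^ 2 ≤ 1 := by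
  have h1 := sum_sq_le N
  have h2 : (0 : ℝ) ≤ 1 / ((N : ℝ) + 1) := by positivity
  have h3 : ∑ p ∈ Finset.filter Nat.Prime (Finset.range (N + 1)), (1 : ℝ) / (p : ℝ) ^ 2 ≤
    ∑ p ∈ Finset.filter Nat.Prime (Finset.range (N + 2)), (1 : ℝ) / (p : ℝ) ^ 2 := by
    apply Finset.sum_le_sum_of_subset_of_nonneg
    · exact Finset.filter_subset_filter _ (Finset.range_mono (by omega))
    · intros; positivity
  linarith

/-- primes above `p` of norm at most `x` -/
noncomputable def fib (K : Type*) [Field K] [NumberField K] (x : ℝ) (p : ℕ) :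
    Finset (Ideal (𝓞 K)) :=
  (IsDedekindDomain.primesOverFinset (Ideal.span {(p : ℤ)}) (𝓞 K)).filter
    (fun P => (Ideal.absNorm P : ℝ) ≤ x)

theorem MK_eq (K : Type*) [Field K] [NumberField K] (x : ℝ) :
    MK K x = ∑ p ∈ Finset.filter Nat.Prime (Finset.range (⌊x⌋₊ + 1)),
      ∑ P ∈ fib K x p, (1 : ℝ) / (Ideal.absNorm P : ℝ) := by
  classical
  have hset : {P : Ideal (𝓞 K) | P.IsPrime ∧ P ≠ ⊥ ∧ (Ideal.absNorm P : ℝ) ≤ x}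
      = ((Finset.filter Nat.Prime (Finset.range (⌊x⌋₊ + 1))).biUnion (fib K x) :
        Finset (Ideal (𝓞 K))) := by
    ext P
    simp only [Set.mem_ofPred_eq, Finset.coe_biUnion, Set.mem_iUnion, Finset.mem_coe,
      Finset.mem_filter, Finset.mem_range, fib]
    constructor
    · rintro ⟨h1, h2, h3⟩
      let p := Ideal.absNorm (Ideal.under ℤ P)
      have hsp : Ideal.span {(p : ℤ)} = Ideal.under ℤ P := Int.ideal_span_absNorm_eq_self _
      have hne : Ideal.under ℤ P ≠ ⊥ := by
        exact Ideal.under_ne_bot ℤ h2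
      have hp : p.Prime := by
        have : (Ideal.span {(p : ℤ)}).IsPrime := by rw [hsp]; infer_instance
        have hp0 : (p : ℤ) ≠ 0 := by
          intro h0
          apply hne
          rw [← hsp, h0]; simp
        rw [Ideal.span_singleton_prime hp0] at this
        exact Nat.prime_iff_prime_int.mpr this
      have : Fact p.Prime := ⟨hp⟩
      have hmem : P ∈ IsDedekindDomain.primesOverFinset (Ideal.span {(p : ℤ)}) (𝓞 K) := by
        rw [IsDedekindDomain.mem_primesOverFinset_iff (span_p_ne_bot p)]
        exact ⟨h1, ⟨hsp⟩⟩
      obtain ⟨hN, hf⟩ := (inertia_facts K p).1 P hmem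
      refine ⟨p, ⟨?_, hp⟩, hmem, h3⟩
      have : p ≤ Ideal.absNorm P := by
        rw [hN]; exact Nat.le_self_pow (by omega) p
      exact Nat.lt_succ_of_le (this.trans (Nat.le_floor h3))
    · rintro ⟨p, ⟨h1, h2⟩, h3, h4⟩
      have : Fact p.Prime := ⟨h2⟩
      obtain ⟨hN, hf⟩ := (inertia_facts K p).1 P h3
      rw [IsDedekindDomain.mem_primesOverFinset_iff (span_p_ne_bot p)] at h3
      refine ⟨h3.1, ?_, h4⟩
      rintro rfl
      rw [Ideal.absNorm_bot] at hN
      exact absurd hN.symm (pow_ne_zero _ h2.ne_zero)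
  have h1 : MK K x = ∑' P : ({P : Ideal (𝓞 K) | P.IsPrime ∧ P ≠ ⊥ ∧ (Ideal.absNorm P : ℝ) ≤ x} :
      Set (Ideal (𝓞 K))), (1 : ℝ) / (Ideal.absNorm P.1 : ℝ) := rfl
  rw [h1, hset, Finset.tsum_subtype' _ (fun P : Ideal (𝓞 K) => (1 : ℝ) / (Ideal.absNorm P : ℝ)),
    Finset.sum_biUnion]
  intro p hp q hq hpq
  rw [Function.onFun, Finset.disjoint_left]
  intro P hP hQ
  simp only [Finset.coe_filter, Set.mem_ofPred_eq] at hp hq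
  have : Fact p.Prime := ⟨hp.2⟩
  have : Fact q.Prime := ⟨hq.2⟩
  rw [fib, Finset.mem_filter, IsDedekindDomain.mem_primesOverFinset_iff (span_p_ne_bot _)] at hP hQ
  have e1 := hP.1.2.over
  have e2 := hQ.1.2.over
  rw [← e2] at e1
  apply hpq
  have := congrArg Ideal.absNorm e1
  simpa using this

theorem local_bound_crude (h : Polynomial ℤ) (hmonic : h.Monic)
    (K : Type*) [Field K] [NumberField K] (hd : Module.finrank ℚ K = h.natDegree)
    (x : ℝ) (p : ℕ) [hp : Fact p.Prime] :
    |∑ P ∈ fib K x p, (1 : ℝ) / (Ideal.absNorm P : ℝ) - (omegaPoly h p : ℝ) / (p : ℝ)|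
      ≤ h.natDegree * (1 / (p : ℝ)) := by
  have hp0 : (0 : ℝ) < p := by exact_mod_cast hp.out.pos
  have hp1 : (1 : ℝ) ≤ p := by exact_mod_cast hp.out.one_le
  obtain ⟨hf, hs⟩ := inertia_facts K p
  have h1 : ∑ P ∈ fib K x p, (1 : ℝ) / (Ideal.absNorm P : ℝ) ≤ h.natDegree * (1 / (p : ℝ)) := by
    calc ∑ P ∈ fib K x p, (1 : ℝ) / (Ideal.absNorm P : ℝ)
        ≤ ∑ P ∈ IsDedekindDomain.primesOverFinset (Ideal.span {(p : ℤ)}) (𝓞 K),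
          (1 : ℝ) / (Ideal.absNorm P : ℝ) :=
          Finset.sum_le_sum_of_subset_of_nonneg (Finset.filter_subset _ _)
            (by intros; positivity)
      _ ≤ ∑ P ∈ IsDedekindDomain.primesOverFinset (Ideal.span {(p : ℤ)}) (𝓞 K),
          (Ideal.inertiaDeg P ℤ : ℝ) * (1 / (p : ℝ)) := by
          refine Finset.sum_le_sum fun P hP => ?_
          obtain ⟨hN, h1⟩ := hf P hP
          have h2 : (1 : ℝ) ≤ Ideal.inertiaDeg P ℤ := by exact_mod_cast h1
          have h3 : (1 : ℝ) / (Ideal.absNorm P : ℝ) ≤ 1 / p := by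
            rw [hN]; push_cast
            exact one_div_le_one_div_of_le hp0 (le_self_pow₀ hp1 (by omega))
          have h4 : (0 : ℝ) < 1 / p := by positivity
          nlinarith
      _ ≤ h.natDegree * (1 / (p : ℝ)) := by
          rw [← Finset.sum_mul, ← hd]
          gcongr
          exact_mod_cast hs
  have h2 : (0 : ℝ) ≤ ∑ P ∈ fib K x p, (1 : ℝ) / (Ideal.absNorm P : ℝ) :=
    Finset.sum_nonneg (by intros; positivity)
  have h3 : (omegaPoly h p : ℝ) / (p : ℝ) ≤ h.natDegree * (1 / (p : ℝ)) := by
    rw [mul_one_div]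
    gcongr
    exact_mod_cast omegaPoly_le h hmonic p
  have h4 : 0 ≤ (omegaPoly h p : ℝ) / (p : ℝ) := by positivity
  rw [abs_le]
  constructor <;> linarith

theorem local_bound_fine (h : Polynomial ℤ) (hmonic : h.Monic)
    (K : Type*) [Field K] [NumberField K] (hd : Module.finrank ℚ K = h.natDegree)
    (θ : 𝓞 K) (hmin : minpoly ℤ θ = h)
    (x : ℝ) (p : ℕ) [hp : Fact p.Prime] (hpx : (p : ℝ) ≤ x)
    (hexp : ¬ p ∣ RingOfIntegers.exponent θ) :
    |∑ P ∈ fib K x p, (1 : ℝ) / (Ideal.absNorm P : ℝ) - (omegaPoly h p : ℝ) / (p : ℝ)|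
      ≤ h.natDegree / 2 * (1 / (p : ℝ) ^ 2) := by
  have hp0 : (0 : ℝ) < p := by exact_mod_cast hp.out.pos
  have hp1 : (1 : ℝ) ≤ p := by exact_mod_cast hp.out.one_le
  obtain ⟨hf, hs⟩ := inertia_facts K p
  rw [← Finset.sum_filter_add_sum_filter_not (fib K x p) (fun P => Ideal.inertiaDeg P ℤ = 1)]
  have h1 : ∑ P ∈ (fib K x p).filter (fun P => Ideal.inertiaDeg P ℤ = 1),
      (1 : ℝ) / (Ideal.absNorm P : ℝ) = (omegaPoly h p : ℝ) / (p : ℝ) := by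
    have e1 : (fib K x p).filter (fun P => Ideal.inertiaDeg P ℤ = 1) =
      (IsDedekindDomain.primesOverFinset (Ideal.span {(p : ℤ)}) (𝓞 K)).filter
        (fun P => Ideal.inertiaDeg P ℤ = 1) := by
      ext P
      simp only [fib, Finset.mem_filter]
      constructor
      · rintro ⟨⟨a, b⟩, c⟩; exact ⟨a, c⟩
      · rintro ⟨a, c⟩
        refine ⟨⟨a, ?_⟩, c⟩
        rw [(hf P a).1, c, pow_one]; exact hpx
    rw [e1, ← card_deg_one h hmonic K θ hmin p hexp, Finset.sum_congr rfl (g := fun _ => 1 / (p : ℝ))]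
    · rw [Finset.sum_const, nsmul_eq_mul, mul_one_div]
    · intro P hP
      rw [Finset.mem_filter] at hP
      rw [(hf P hP.1).1, hP.2, pow_one]
  rw [h1, add_sub_cancel_left, abs_of_nonneg (Finset.sum_nonneg (by intros; positivity))]
  calc ∑ P ∈ (fib K x p).filter (fun P => ¬ Ideal.inertiaDeg P ℤ = 1),
        (1 : ℝ) / (Ideal.absNorm P : ℝ)
      ≤ ∑ P ∈ (fib K x p).filter (fun P => ¬ Ideal.inertiaDeg P ℤ = 1),
        (Ideal.inertiaDeg P ℤ : ℝ) / 2 * (1 / (p : ℝ) ^ 2) := by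
        refine Finset.sum_le_sum fun P hP => ?_
        rw [Finset.mem_filter, fib, Finset.mem_filter] at hP
        obtain ⟨hN, h1⟩ := hf P hP.1.1
        have h2' : 2 ≤ Ideal.inertiaDeg P ℤ := by have := hP.2; omega
        have h2 : (2 : ℝ) ≤ Ideal.inertiaDeg P ℤ := by exact_mod_cast h2'
        have h3 : (1 : ℝ) / (Ideal.absNorm P : ℝ) ≤ 1 / (p : ℝ) ^ 2 := by
          rw [hN]; push_cast
          exact one_div_le_one_div_of_le (by positivity) (pow_le_pow_right₀ hp1 h2')
        have h4 : (0 : ℝ) < 1 / (p : ℝ) ^ 2 := by positivity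
        nlinarith
    _ ≤ ∑ P ∈ IsDedekindDomain.primesOverFinset (Ideal.span {(p : ℤ)}) (𝓞 K),
        (Ideal.inertiaDeg P ℤ : ℝ) / 2 * (1 / (p : ℝ) ^ 2) :=
        Finset.sum_le_sum_of_subset_of_nonneg
          ((Finset.filter_subset _ _).trans (Finset.filter_subset _ _)) (by intros; positivity)
    _ ≤ h.natDegree / 2 * (1 / (p : ℝ) ^ 2) := by
        rw [← Finset.sum_mul, ← Finset.sum_div, ← hd]
        gcongr
        exact_mod_cast hs

/-- Let `h ∈ ℤ[x]` be monic and irreducible of degree `d ≥ 1`, `α` a root of `h`, and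
`K = ℚ(α)`. For every real `x > √|D_h|`,
`|Σ_{N(𝔭) ≤ x} 1/N(𝔭) − Σ_{p ≤ x} ω_h(p)/p| < d (M_ℚ(√|D_h|) + 0.64)`. -/
theorem MK_sub_omegaSum_lt (h : Polynomial ℤ) (hmonic : h.Monic)
    (hirr : Irreducible h) (d : ℕ) (hd : d = h.natDegree) (hd1 : 1 ≤ d)
    (K : Type*) [Field K] [NumberField K] (α : K)
    (hroot : Polynomial.aeval α h = 0)
    (hgen : IntermediateField.adjoin ℚ {α} = ⊤)
    (x : ℝ) (hx : x > Real.sqrt (|polyDisc h| : ℝ)) :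
    |MK K x - omegaSum h x|
      < (d : ℝ) * (MQ (Real.sqrt (|polyDisc h| : ℝ)) + 0.64) := by
  have hint : IsIntegral ℤ α := ⟨h, hmonic, hroot⟩
  obtain ⟨θ, hθ⟩ : ∃ θ : NumberField.RingOfIntegers K, (θ : K) = α :=
    ⟨⟨α, hint⟩, rfl⟩
  subst hθ
  have hminQ := minpoly_eq h hmonic hirr K _ hroot
  have hmin : minpoly ℤ θ = h := by
    have h1 := minpoly.isIntegrallyClosed_eq_field_fractions ℚ K θ.isIntegral
    apply Polynomial.map_injective (Int.castRingHom ℚ) (Int.castRingHom ℚ).injective_int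
    rw [← hminQ]
    exact h1.symm
  have hfr : Module.finrank ℚ K = h.natDegree := by
    obtain ⟨pb, hpb⟩ := exists_pb K _ hgen
    rw [pb.finrank, ← pb.natDegree_minpoly, hpb, hminQ,
      natDegree_map_eq_of_injective (Int.castRingHom ℚ).injective_int]
  subst hd
  have hdpos : (0 : ℝ) < h.natDegree := by exact_mod_cast hd1
  set s := Real.sqrt (|polyDisc h| : ℝ) with hs
  have hs0 : 0 ≤ s := Real.sqrt_nonneg _
  rw [MK_eq, omegaSum, ← Finset.sum_sub_distrib]
  set pr := Finset.filter Nat.Prime (Finset.range (⌊x⌋₊ + 1)) with hpr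
  have hx0 : 0 ≤ x := hs0.trans hx.le
  have hb : ∀ p ∈ pr,
      |∑ P ∈ fib K x p, (1 : ℝ) / (Ideal.absNorm P : ℝ) - (omegaPoly h p : ℝ) / (p : ℝ)| ≤
      (h.natDegree : ℝ) * (if (p : ℝ) ≤ s then 1 / (p : ℝ) else 0)
        + h.natDegree / 2 * (1 / (p : ℝ) ^ 2) := by
    intro p hp
    rw [hpr, Finset.mem_filter, Finset.mem_range] at hp
    have : Fact p.Prime := ⟨hp.2⟩
    split_ifs with hps
    · refine (local_bound_crude h hmonic K hfr x p).trans ?_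
      have : (0 : ℝ) ≤ h.natDegree / 2 * (1 / (p : ℝ) ^ 2) := by positivity
      linarith
    · rw [mul_zero, zero_add]
      refine local_bound_fine h hmonic K hfr θ hmin x p ?_ ?_
      · exact (Nat.le_floor_iff hx0).mp (Nat.lt_succ_iff.mp hp.1)
      · exact not_dvd_exponent h hmonic hirr K θ hroot hgen p (not_le.mp hps)
  have hMQ : ∑ p ∈ pr, (if (p : ℝ) ≤ s then 1 / (p : ℝ) else 0) ≤ MQ s := by
    rw [← Finset.sum_filter, MQ]
    apply Finset.sum_le_sum_of_subset_of_nonneg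
    · intro p hp
      rw [Finset.mem_filter, hpr, Finset.mem_filter] at hp
      rw [Finset.mem_filter, Finset.mem_range]
      exact ⟨Nat.lt_succ_iff.mpr (Nat.le_floor hp.2), hp.1.2⟩
    · intros; positivity
  have hsq := sum_sq_le_one ⌊x⌋₊
  rw [← hpr] at hsq
  calc _ ≤ ∑ p ∈ pr, |∑ P ∈ fib K x p, (1 : ℝ) / (Ideal.absNorm P : ℝ)
          - (omegaPoly h p : ℝ) / (p : ℝ)| := Finset.abs_sum_le_sum_abs _ _
    _ ≤ _ := Finset.sum_le_sum hb
    _ = (h.natDegree : ℝ) * ∑ p ∈ pr, (if (p : ℝ) ≤ s then 1 / (p : ℝ) else 0)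
        + h.natDegree / 2 * ∑ p ∈ pr, (1 / (p : ℝ) ^ 2) := by
      rw [Finset.sum_add_distrib, Finset.mul_sum, Finset.mul_sum]
    _ ≤ (h.natDegree : ℝ) * MQ s + h.natDegree / 2 * 1 := by gcongr
    _ < _ := by nlinarith
end
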